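/- arXiv:2001.01874 — 2 statements merged into one kernel-verified Lean document; each statement's English description precedes it below -/
import Mathlib

section
/- Let X be a simply connected, locally simply connected metric space, D ⊂ X countable dense, and f a proper loop in E(X,D) based at x ∈ X. If the associated word W^f is equivalent to the empty word (i.e. W^f_F = 1 in the free group on F for every finite F ⊂ D), then f is null-homotopic in E(X,D). -/
open Classical

noncomputable section

namespace EarringPaper

variable {X : Type*} [MetricSpace X]

/-- The earring space `E(X,D)`: the base copy `X × {o}` together with a copy of the
circle attached at each point `d n` of the countable set `D = range d`. -/
structure ESp (X : Type*) [MetricSpace X] (d : ℕ+ → X) where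
  pt : X × Circle
  mem : pt.2 = 1 ∨ ∃ n : ℕ+, pt.1 = d n

/-- The scaling weight `1/n` at `x = d n` (and `0` off `D`). -/
def wt (d : ℕ+ → X) (x : X) : ℝ :=
  if h : ∃ n : ℕ+, x = d n then 1 / (h.choose : ℝ) else 0

/-- The earring metric `ρ` on `E(X,D)`. -/
def rho (d : ℕ+ → X) (p q : X × Circle) : ℝ :=
  if p.1 = q.1 ∧ ∃ n : ℕ+, p.1 = d n then wt d p.1 * dist p.2 q.2
  else dist p.1 q.1 + wt d p.1 * dist p.2 1 + wt d q.1 * dist q.2 1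

/-- `E(X,D)` carries the topology of the metric `ρ` (generated by the `ρ`-balls). -/
instance (d : ℕ+ → X) : TopologicalSpace (ESp X d) :=
  TopologicalSpace.generateFrom
    {s | ∃ (p : ESp X d) (r : ℝ), s = {q : ESp X d | rho d p.pt q.pt < r}}

/-- The points of the base copy `X × {o}` of `X` inside `E(X,D)`. -/
def InX {d : ℕ+ → X} (p : ESp X d) : Prop := p.pt.2 = 1

/-- The inclusion `X → E(X,D)`, `x ↦ (x,o)`. -/
def emb (d : ℕ+ → X) (x : X) : ESp X d := ⟨(x, 1), Or.inl rfl⟩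

/-- `f` traverses, on `[u,v]`, the fixed winding of the circle attached at `d n`. -/
def IsWinding (d : ℕ+ → X) (f : ℝ → ESp X d) (u v : ℝ) (n : ℕ+) : Prop :=
  ∃ φ : ℝ → ℝ, ContinuousOn φ (Set.Icc u v) ∧ MonotoneOn φ (Set.Icc u v) ∧
    φ u = 0 ∧ φ v = 1 ∧
    ∀ t ∈ Set.Icc u v, (f t).pt = (d n, Circle.exp (2 * Real.pi * φ t))

/-- `f` traverses, on `[u,v]`, the reverse of the fixed winding of the circle at `d n`. -/
def IsRevWinding (d : ℕ+ → X) (f : ℝ → ESp X d) (u v : ℝ) (n : ℕ+) : Prop :=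
  ∃ φ : ℝ → ℝ, ContinuousOn φ (Set.Icc u v) ∧ MonotoneOn φ (Set.Icc u v) ∧
    φ u = 0 ∧ φ v = 1 ∧
    ∀ t ∈ Set.Icc u v, (f t).pt = (d n, Circle.exp (-(2 * Real.pi) * φ t))

/-- A proper path in `E(X,D)` (with domain `[a,b]`): its endpoints lie in `X`, and each
maximal excursion out of `X` returning to the same point is a single winding or reverse
winding of one of the attached circles. -/
def IsProper (d : ℕ+ → X) (f : ℝ → ESp X d) (a b : ℝ) : Prop :=
  ContinuousOn f (Set.Icc a b) ∧ InX (f a) ∧ InX (f b) ∧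
  ∀ u v, a ≤ u → u < v → v ≤ b → InX (f u) → InX (f v) →
    (∀ t ∈ Set.Ioo u v, ¬InX (f t)) → f u = f v →
    ∃ n : ℕ+, IsWinding d f u v n ∨ IsRevWinding d f u v n

/-- Homotopy of paths `[a,b] → E(X,D)` relative to the endpoints. -/
def HtpyRel (d : ℕ+ → X) (f g : ℝ → ESp X d) (a b : ℝ) : Prop :=
  ∃ H : ℝ × ℝ → ESp X d,
    ContinuousOn H (Set.Icc a b ×ˢ Set.Icc (0 : ℝ) 1) ∧
    (∀ s ∈ Set.Icc a b, H (s, 0) = f s ∧ H (s, 1) = g s) ∧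
    (∀ t ∈ Set.Icc (0 : ℝ) 1, H (a, t) = f a ∧ H (b, t) = f b)

/-- `Y` is locally simply connected: every point has a neighborhood basis of simply
connected neighborhoods. -/
def LocSimplyConnected (Y : Type*) [TopologicalSpace Y] : Prop :=
  ∀ y : Y, ∀ U ∈ nhds y, ∃ V ∈ nhds y, V ⊆ U ∧ SimplyConnectedSpace V

end EarringPaper

noncomputable section

namespace EarringPaper

/-- An infinitary word over the alphabet `D`: a function from a countable linearly
ordered index set to the letters `a`/`a⁻` (`(a, true)`/`(a, false)`), in which each
letter occurs only finitely often. -/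
structure InfWord (D : Type*) where
  ι : Type
  [ord : LinearOrder ι]
  [cnt : Countable ι]
  letter : ι → D × Bool
  finOcc : ∀ a : D, {i : ι | (letter i).1 = a}.Finite

attribute [instance] InfWord.ord InfWord.cnt

variable {D : Type*}

lemma InfWord.finF (W : InfWord D) (F : Finset D) :
    {i : W.ι | (W.letter i).1 ∈ F}.Finite := by
  have h : {i : W.ι | (W.letter i).1 ∈ F} = ⋃ a ∈ F, {i : W.ι | (W.letter i).1 = a} := by
    ext i; simp
  rw [h]
  exact F.finite_toSet.biUnion fun a _ => W.finOcc a

/-- The finite word `W_F`: the restriction of `W` to the letters from the finite set `F`,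
evaluated as an element of the free group on `D`. -/
def InfWord.evalF (W : InfWord D) (F : Finset D) : FreeGroup D :=
  (((W.finF F).toFinset.sort (· ≤ ·)).map fun i => FreeGroup.mk [W.letter i]).prod

/-- `W` is equivalent to the empty word: all its finite restrictions `W_F` are trivial. -/
def InfWord.IsNull (W : InfWord D) : Prop := ∀ F : Finset D, W.evalF F = 1

/-- The subword of `W` supported on a set `S` of indices. -/
def InfWord.restrict (W : InfWord D) (S : Set W.ι) : InfWord D where
  ι := S
  letter i := W.letter i.val
  finOcc a := by
    have h : {i : S | (W.letter i.val).1 = a} =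
        Subtype.val ⁻¹' {i : W.ι | (W.letter i).1 = a} := rfl
    rw [h]
    exact (W.finOcc a).preimage Subtype.val_injective.injOn

/-- An order-convex set of indices (the support of a subword). -/
def IsConvexSub {W : InfWord D} (S : Set W.ι) : Prop :=
  ∀ i ∈ S, ∀ j ∈ S, ∀ k, i ≤ k → k ≤ j → k ∈ S

/-- An infinitary word is reduced if no nonempty subword is equivalent to the empty word. -/
def InfWord.Reduced (W : InfWord D) : Prop :=
  ∀ S : Set W.ι, S.Nonempty → IsConvexSub S → ¬(W.restrict S).IsNull

/-- A noncrossing inverse pairing on the infinitary word `W`. -/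
structure InfNCIP (W : InfWord D) (Γ : Set (W.ι × W.ι)) : Prop where
  lt : ∀ p ∈ Γ, p.1 < p.2
  inv : ∀ p ∈ Γ, (W.letter p.1).1 = (W.letter p.2).1 ∧
    (W.letter p.1).2 = !(W.letter p.2).2
  disj : ∀ p ∈ Γ, ∀ q ∈ Γ, p ≠ q → p.1 ≠ q.1 ∧ p.1 ≠ q.2 ∧ p.2 ≠ q.1 ∧ p.2 ≠ q.2
  noncross : ∀ p ∈ Γ, ∀ q ∈ Γ, ¬(p.1 < q.1 ∧ q.1 < p.2 ∧ p.2 < q.2)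
  covered : ∀ p ∈ Γ, ∀ k, p.1 ≤ k → k ≤ p.2 → ∃ q ∈ Γ, q.1 = k ∨ q.2 = k

end EarringPaper

namespace EarringPaper

/-- `W` is the word `W^f` read off from the proper path `f : [a,b] → E(X,D)`, realized by
the family of disjoint open intervals `(u i, v i)`: these intervals are exactly the
components of `f⁻¹(E(X,D)∖X)`, listed in order, and on the `i`-th of them `f` performs the
winding (or reverse winding, according to the sign of the letter) of the circle attached
at `d ((W.letter i).1)`. -/
def Realizes {X : Type*} [MetricSpace X] (d : ℕ+ → X) (f : ℝ → ESp X d) (a b : ℝ)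
    (W : InfWord ℕ+) (u v : W.ι → ℝ) : Prop :=
  (∀ i, a ≤ u i ∧ u i < v i ∧ v i ≤ b) ∧
  (∀ i j, i < j → v i ≤ u j) ∧
  (∀ i, if (W.letter i).2 then IsWinding d f (u i) (v i) (W.letter i).1
        else IsRevWinding d f (u i) (v i) (W.letter i).1) ∧
  (∀ t ∈ Set.Icc a b, InX (f t) ↔ ∀ i, t ∉ Set.Ioo (u i) (v i))

end EarringPaper

namespace EarringPaper

theorem continuousOn_image_of_isCompact {A B Y : Type*} [TopologicalSpace A] [TopologicalSpace B]
    [TopologicalSpace Y] [T2Space B] {T : Set A} (hT : IsCompact T) {p : A → B}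
    (hp : ContinuousOn p T) {F : A → Y} (hF : ContinuousOn F T) {k : B → Y}
    (hk : ∀ t ∈ T, k (p t) = F t) : ContinuousOn k (p '' T) := by
  rw [continuousOn_iff_isClosed]
  intro c hc
  obtain ⟨w, hw, hwe⟩ := (continuousOn_iff_isClosed.1 hF) c hc
  refine ⟨p '' (w ∩ T), ?_, ?_⟩
  · exact ((hT.inter_left hw).image_of_continuousOn (hp.mono Set.inter_subset_right)).isClosed
  · ext z
    constructor
    · rintro ⟨hz, t, ht, rfl⟩
      have : t ∈ F ⁻¹' c ∩ T := ⟨by simpa [← hk t ht] using hz, ht⟩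
      rw [hwe] at this
      exact ⟨⟨t, this, rfl⟩, t, ht, rfl⟩
    · rintro ⟨⟨t, ht, rfl⟩, hz⟩
      rw [← hwe] at ht
      exact ⟨by simpa [← hk t ht.2] using ht.1, hz⟩

/-- The convex lens between the parabola and its chord over `[a,b]`. -/
def lens (a b : ℝ) : Set (ℝ × ℝ) := {p | p.1 ^ 2 ≤ p.2 ∧ p.2 ≤ (a + b) * p.1 - a * b}

theorem lens_fst_mem {a b : ℝ} (hab : a ≤ b) {p : ℝ × ℝ} (hp : p ∈ lens a b) :
    p.1 ∈ Set.Icc a b := by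
  obtain ⟨h1, h2⟩ := hp
  constructor <;> nlinarith

theorem isClosed_lens (a b : ℝ) : IsClosed (lens a b) :=
  (isClosed_le (f := fun p : ℝ × ℝ => p.1 ^ 2) (g := fun p => p.2) (by fun_prop)
    (by fun_prop)).inter (isClosed_le (f := fun p : ℝ × ℝ => p.2)
      (g := fun p => (a + b) * p.1 - a * b) (by fun_prop) (by fun_prop))

theorem convex_lens (a b : ℝ) : Convex ℝ (lens a b) := by
  rintro ⟨x, y⟩ ⟨h1, h2⟩ ⟨x', y'⟩ ⟨h3, h4⟩ s t hs ht hst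
  simp only [lens, Set.mem_ofPred_eq, Prod.smul_mk, Prod.mk_add_mk, smul_eq_mul] at *
  obtain rfl : s = 1 - t := by linarith
  constructor
  · nlinarith [mul_nonneg (mul_nonneg hs ht) (sq_nonneg (x - x'))]
  · nlinarith

theorem isBounded_lens {a b : ℝ} (hab : a ≤ b) : Bornology.IsBounded (lens a b) := by
  refine ((Metric.isBounded_Icc a b).prod
    (Metric.isBounded_Icc 0 (a ^ 2 + b ^ 2))).subset fun p hp => ⟨lens_fst_mem hab hp, ?_⟩
  have := lens_fst_mem hab hp
  obtain ⟨h1, h2⟩ := hp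
  obtain ⟨h3, h4⟩ := this
  refine ⟨(sq_nonneg _).trans h1, h2.trans ?_⟩
  nlinarith [sq_nonneg (a - b), sq_nonneg (a + b), mul_nonneg (sub_nonneg.2 h3) (sub_nonneg.2 h4)]

theorem isOpen_lens_strict (a b : ℝ) :
    IsOpen {p : ℝ × ℝ | p.1 ^ 2 < p.2 ∧ p.2 < (a + b) * p.1 - a * b} :=
  (isOpen_lt (f := fun p : ℝ × ℝ => p.1 ^ 2) (g := fun p => p.2) (by fun_prop)
    (by fun_prop)).inter (isOpen_lt (f := fun p : ℝ × ℝ => p.2)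
      (g := fun p => (a + b) * p.1 - a * b) (by fun_prop) (by fun_prop))

theorem interior_lens (a b : ℝ) :
    interior (lens a b) = {p | p.1 ^ 2 < p.2 ∧ p.2 < (a + b) * p.1 - a * b} := by
  apply Set.Subset.antisymm
  · intro p hp
    have hl := interior_subset hp
    have key : ∀ c : ℝ, ∀ᶠ t in nhds (0 : ℝ), (p.1, p.2 + c * t) ∈ lens a b := by
      intro c
      have : Filter.Tendsto (fun t : ℝ => (p.1, p.2 + c * t)) (nhds 0) (nhds p) := by
        have h : Continuous (fun t : ℝ => (p.1, p.2 + c * t)) := by fun_prop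
        simpa using h.tendsto 0
      exact this (mem_interior_iff_mem_nhds.1 hp)
    have ex : ∀ c : ℝ, ∃ t > 0, (p.1, p.2 + c * t) ∈ lens a b := by
      intro c
      obtain ⟨ε, hε, h⟩ := Metric.eventually_nhds_iff.1 (key c)
      exact ⟨ε / 2, by positivity, h (by simp [abs_of_pos hε]; linarith)⟩
    obtain ⟨t, ht, h1⟩ := ex (-1)
    obtain ⟨t', ht', h2⟩ := ex 1
    simp only [lens, Set.mem_ofPred_eq] at h1 h2 ⊢
    constructor <;> linarith [h1.1, h2.2]
  · exact interior_maximal (fun p hp => ⟨hp.1.le, hp.2.le⟩) (isOpen_lens_strict a b)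

theorem exists_extend_lens {Y : Type*} [TopologicalSpace Y] [SimplyConnectedSpace Y]
    (g : ℝ × ℝ → Y) (hg : ContinuousOn g (frontier (lens 0 1))) :
    ∃ G : ℝ × ℝ → Y, ContinuousOn G (lens 0 1) ∧ Set.EqOn G g (frontier (lens 0 1)) := by
  have hfr : ∀ p : ℝ × ℝ, p ∈ frontier (lens 0 1) ↔
      p ∈ lens 0 1 ∧ (p.2 = p.1 ^ 2 ∨ p.2 = p.1) := by
    intro p
    rw [(isClosed_lens 0 1).frontier_eq, interior_lens]
    simp only [lens, Set.mem_sdiff, Set.mem_ofPred_eq, not_and_or, not_lt]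
    constructor
    · rintro ⟨⟨h1, h2⟩, h | h⟩
      · exact ⟨⟨h1, h2⟩, Or.inl (by linarith)⟩
      · exact ⟨⟨h1, h2⟩, Or.inr (by linarith)⟩
    · rintro ⟨⟨h1, h2⟩, h | h⟩
      · exact ⟨⟨h1, h2⟩, Or.inl (by linarith)⟩
      · exact ⟨⟨h1, h2⟩, Or.inr (by linarith)⟩
  have hlo : ∀ x : unitInterval, ((x : ℝ), (x : ℝ) ^ 2) ∈ frontier (lens 0 1) := by
    intro x
    rw [hfr]
    have := x.2.1; have := x.2.2
    exact ⟨⟨le_rfl, by simp; nlinarith⟩, Or.inl rfl⟩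
  have hhi : ∀ x : unitInterval, ((x : ℝ), (x : ℝ)) ∈ frontier (lens 0 1) := by
    intro x
    rw [hfr]
    have := x.2.1; have := x.2.2
    exact ⟨⟨by simp; nlinarith, by simp⟩, Or.inr rfl⟩
  let α : Path (g (0, 0)) (g (1, 1)) :=
    { toFun := fun x => g (x, (x : ℝ) ^ 2)
      continuous_toFun := hg.comp_continuous (by fun_prop) hlo
      source' := by simp
      target' := by simp }
  let β : Path (g (0, 0)) (g (1, 1)) :=
    { toFun := fun x => g (x, x)
      continuous_toFun := hg.comp_continuous (by fun_prop) hhi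
      source' := by simp
      target' := by simp }
  obtain ⟨H⟩ := SimplyConnectedSpace.paths_homotopic α β
  let P : unitInterval × unitInterval → ℝ × ℝ :=
    fun z => (z.2, (1 - z.1) * (z.2 : ℝ) ^ 2 + z.1 * z.2)
  have hP : Continuous P := by fun_prop
  have himg : P '' Set.univ = lens 0 1 := by
    ext ⟨x, y⟩
    constructor
    · rintro ⟨⟨⟨t, ht0, ht1⟩, ⟨s, hs0, hs1⟩⟩, -, h⟩
      simp only [P, Prod.mk.injEq] at h
      obtain ⟨rfl, rfl⟩ := h
      simp only [lens, Set.mem_ofPred_eq]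
      have := mul_nonneg hs0 (sub_nonneg.2 hs1)
      constructor <;> nlinarith
    · intro h
      have hx := lens_fst_mem zero_le_one h
      obtain ⟨h1, h2⟩ := h
      simp only [zero_add, one_mul, zero_mul, sub_zero] at h1 h2
      by_cases h0 : x - x ^ 2 = 0
      · exact ⟨(0, ⟨x, hx⟩), trivial, by simp [P]; linarith⟩
      · have hpos : 0 < x - x ^ 2 := lt_of_le_of_ne (by linarith) (Ne.symm h0)
        refine ⟨(⟨(y - x ^ 2) / (x - x ^ 2), div_nonneg (by linarith) hpos.le,
          (div_le_one hpos).2 (by linarith)⟩, ⟨x, hx⟩), trivial, ?_⟩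
        simp only [P, Prod.mk.injEq, true_and]
        have : (y - x ^ 2) / (x - x ^ 2) * (x - x ^ 2) = y - x ^ 2 := div_mul_cancel₀ _ h0
        linear_combination this
  have hfac : ∀ z w, P z = P w → H z = H w := by
    rintro ⟨t, s⟩ ⟨t', s'⟩ h
    simp only [P, Prod.mk.injEq] at h
    obtain ⟨h1, h2⟩ := h
    obtain rfl : s = s' := Subtype.ext h1
    have h3 : ((t : ℝ) - t') * ((s : ℝ) * (1 - s)) = 0 := by linarith
    rcases mul_eq_zero.1 h3 with h | h
    · obtain rfl : t = t' := Subtype.ext (by linarith)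
      rfl
    · rcases mul_eq_zero.1 h with h | h
      · obtain rfl : s = 0 := Subtype.ext h
        rw [H.source, H.source]
      · obtain rfl : s = 1 := Subtype.ext (show (s : ℝ) = 1 by linarith)
        rw [H.target, H.target]
  have hsec : ∀ z ∈ P '' Set.univ, ∃ w, P w = z := by
    rintro _ ⟨w, -, rfl⟩; exact ⟨w, rfl⟩
  let k : ℝ × ℝ → Y := fun z => if h : ∃ w, P w = z then H h.choose else g z
  have hk : ∀ z, k (P z) = H z := by
    intro z
    have h : ∃ w, P w = P z := ⟨z, rfl⟩
    simp only [k, dif_pos h]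
    exact hfac _ _ h.choose_spec
  refine ⟨k, ?_, ?_⟩
  · rw [← himg]
    exact continuousOn_image_of_isCompact isCompact_univ hP.continuousOn
      (map_continuous H).continuousOn fun z _ => hk z
  · rintro ⟨x, y⟩ hz
    obtain ⟨hl, hz⟩ := (hfr _).1 hz
    have hx := lens_fst_mem zero_le_one hl
    rcases hz with h | h
    · simp only at h
      have : (x, y) = P (0, ⟨x, hx⟩) := by simp [P, h]
      rw [this, hk, H.apply_zero]
      simp [α, P]
    · simp only at h
      have : (x, y) = P (1, ⟨x, hx⟩) := by simp [P, h]
      rw [this, hk, H.apply_one]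
      simp [β, P]

theorem exists_extend_frontier {Y : Type*} [TopologicalSpace Y] [SimplyConnectedSpace Y]
    {R : Set (ℝ × ℝ)} (hR : Convex ℝ R) (hne : (interior R).Nonempty)
    (hb : Bornology.IsBounded R) (g : ℝ × ℝ → Y) (hg : ContinuousOn g (frontier R)) :
    ∃ G : ℝ × ℝ → Y, ContinuousOn G (closure R) ∧ Set.EqOn G g (frontier R) := by
  obtain ⟨e, -, hcl, hfr⟩ := exists_homeomorph_image_eq hR hne
    (NormedSpace.isVonNBounded_of_isBounded _ hb) (convex_lens 0 1)
    ⟨(1 / 2, 1 / 3), by rw [interior_lens]; norm_num⟩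
    (NormedSpace.isVonNBounded_of_isBounded _ (isBounded_lens zero_le_one))
  rw [(isClosed_lens 0 1).closure_eq] at hcl
  obtain ⟨G, hG, hGg⟩ := exists_extend_lens (g ∘ e.symm) (by
    refine hg.comp e.symm.continuous.continuousOn ?_
    rintro _ hz
    rw [← hfr] at hz
    obtain ⟨w, hw, rfl⟩ := hz
    simpa using hw)
  refine ⟨G ∘ e, hG.comp e.continuous.continuousOn fun z hz => hcl ▸ ⟨z, hz, rfl⟩, ?_⟩
  intro z hz
  have := hGg (hfr ▸ ⟨z, hz, rfl⟩ : e z ∈ frontier (lens 0 1))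
  simpa using this

theorem exists_extend_frontier_mapsTo {X : Type*} [TopologicalSpace X] {V : Set X}
    [SimplyConnectedSpace V] {R : Set (ℝ × ℝ)} (hR : Convex ℝ R) (hne : (interior R).Nonempty)
    (hb : Bornology.IsBounded R) (g : ℝ × ℝ → X) (hg : ContinuousOn g (frontier R))
    (hV : Set.MapsTo g (frontier R) V) :
    ∃ G : ℝ × ℝ → X, ContinuousOn G (closure R) ∧ Set.EqOn G g (frontier R) ∧
      Set.MapsTo G (closure R) V := by
  have : Nonempty V := inferInstance
  let g' : ℝ × ℝ → V := fun z => if h : g z ∈ V then ⟨g z, h⟩ else this.some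
  have hg' : ∀ z ∈ frontier R, (g' z : X) = g z := fun z hz => by
    simp [g', dif_pos (hV hz)]
  obtain ⟨G, hG, hGg⟩ := exists_extend_frontier hR hne hb g' (by
    rw [Topology.IsInducing.subtypeVal.continuousOn_iff]
    exact hg.congr fun z hz => hg' z hz)
  exact ⟨fun z => G z, continuous_subtype_val.comp_continuousOn hG,
    fun z hz => by simp only [hGg hz, hg' z hz], fun z _ => (G z).2⟩

/-- The affine function vanishing on the line through the parabola points over `c.1`, `c.2`. -/
def chordFun (c p : ℝ × ℝ) : ℝ := p.2 - (c.1 + c.2) * p.1 + c.1 * c.2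

theorem continuous_chordFun (c : ℝ × ℝ) : Continuous (chordFun c) := by
  unfold chordFun; fun_prop

theorem chordFun_combo (c p p' : ℝ × ℝ) {s t : ℝ} (hst : s + t = 1) :
    chordFun c (s • p + t • p') = s * chordFun c p + t * chordFun c p' := by
  obtain rfl : s = 1 - t := by linarith
  simp only [chordFun, Prod.fst_add, Prod.snd_add, Prod.smul_fst, Prod.smul_snd, smul_eq_mul]
  ring

theorem chordFun_zero_fst {c p : ℝ × ℝ} (hc : c.1 ≤ c.2) (hp : p.1 ^ 2 ≤ p.2)
    (h : chordFun c p = 0) : c.1 ≤ p.1 ∧ p.1 ≤ c.2 := by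
  unfold chordFun at h
  constructor <;> nlinarith

/-- A closed system of chords of the parabola over `[a,b]` on which `q` is compatible. -/
structure ChordSystem {X : Type*} [MetricSpace X] (a b : ℝ) (q : ℝ → X) (C : Set (ℝ × ℝ)) :
    Prop where
  closed : IsClosed C
  mem : ∀ c ∈ C, a ≤ c.1 ∧ c.1 ≤ c.2 ∧ c.2 ≤ b
  diag : ∀ t ∈ Set.Icc a b, (t, t) ∈ C
  outer : (a, b) ∈ C
  eq : ∀ c ∈ C, q c.1 = q c.2
  cross : ∀ c ∈ C, ∀ c' ∈ C, c.1 < c'.1 → c'.1 < c.2 → c.2 < c'.2 → q c.1 = q c'.1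
  cont : ContinuousOn q (Set.Icc a b)

/-- The union of the chords of the system `C`. -/
def lamination (a b : ℝ) (C : Set (ℝ × ℝ)) : Set (ℝ × ℝ) :=
  {p | p ∈ lens a b ∧ ∃ c ∈ C, chordFun c p = 0}

/-- The complementary region of the lamination through `y`. -/
def gap (a b : ℝ) (C : Set (ℝ × ℝ)) (y : ℝ × ℝ) : Set (ℝ × ℝ) :=
  {z | z ∈ lens a b ∧ ∀ c ∈ C, 0 < chordFun c y * chordFun c z}

namespace ChordSystem

variable {X : Type*} [MetricSpace X] {a b : ℝ} {q : ℝ → X} {C : Set (ℝ × ℝ)}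

theorem le (h : ChordSystem a b q C) : a ≤ b := by
  obtain ⟨-, h1, -⟩ := h.mem _ h.outer
  exact h1

theorem eq_of_chordFun_zero_of_le (h : ChordSystem a b q C) {p : ℝ × ℝ} (hp : p ∈ lens a b)
    {c c' : ℝ × ℝ} (hc : c ∈ C) (hc' : c' ∈ C) (h0 : chordFun c p = 0) (h0' : chordFun c' p = 0)
    (hle : c.1 ≤ c'.1) : q c.1 = q c'.1 := by
  obtain ⟨h1, h2⟩ := chordFun_zero_fst (h.mem c hc).2.1 hp.1 h0
  obtain ⟨h3, h4⟩ := chordFun_zero_fst (h.mem c' hc').2.1 hp.1 h0'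
  have e1 : (p.1 - c.1) * (c.2 - p.1) = p.2 - p.1 ^ 2 := by unfold chordFun at h0; linarith
  have e2 : (p.1 - c'.1) * (c'.2 - p.1) = p.2 - p.1 ^ 2 := by unfold chordFun at h0'; linarith
  have val : ∀ d ∈ C, (p.1 - d.1) * (d.2 - p.1) = 0 → q d.1 = q p.1 := by
    intro d hd hz
    rcases mul_eq_zero.1 hz with hz | hz
    · rw [show p.1 = d.1 by linarith]
    · rw [show p.1 = d.2 by linarith, h.eq d hd]
  rcases hle.eq_or_lt with he | hlt
  · rw [he]
  rcases eq_or_lt_of_le (show 0 ≤ p.2 - p.1 ^ 2 by have := hp.1; linarith) with hz | hpos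
  · rw [val c hc (by rw [e1, hz]), val c' hc' (by rw [e2, hz])]
  · have h5 : 0 < p.1 - c'.1 := by
      rcases eq_or_lt_of_le h3 with e | e
      · rw [sub_eq_zero.2 e.symm, zero_mul] at e2; linarith
      · linarith
    have h6 : 0 < c.2 - p.1 := by
      rcases eq_or_lt_of_le h2 with e | e
      · rw [sub_eq_zero.2 e.symm, mul_zero] at e1; linarith
      · linarith
    refine h.cross c hc c' hc' hlt (by linarith) ?_
    by_contra hcon
    nlinarith

theorem eq_of_chordFun_zero (h : ChordSystem a b q C) {p : ℝ × ℝ} (hp : p ∈ lens a b)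
    {c c' : ℝ × ℝ} (hc : c ∈ C) (hc' : c' ∈ C) (h0 : chordFun c p = 0)
    (h0' : chordFun c' p = 0) : q c.1 = q c'.1 := by
  rcases le_total c.1 c'.1 with hle | hle
  · exact h.eq_of_chordFun_zero_of_le hp hc hc' h0 h0' hle
  · exact (h.eq_of_chordFun_zero_of_le hp hc' hc h0' h0 hle).symm

theorem isCompact_lamination_and_exists (h : ChordSystem a b q C) :
    IsCompact (lamination a b C) ∧ ∃ k : ℝ × ℝ → X, ContinuousOn k (lamination a b C) ∧
      ∀ p ∈ lens a b, ∀ c ∈ C, chordFun c p = 0 → k p = q c.1 := by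
  have hXne : Nonempty X := ⟨q a⟩
  let T : Set ((ℝ × ℝ) × ℝ) := {t | t.1 ∈ C ∧ t.1.1 ≤ t.2 ∧ t.2 ≤ t.1.2}
  have hT : IsCompact T := by
    refine (((isCompact_Icc (a := a) (b := b)).prod (isCompact_Icc (a := a) (b := b))).prod
      (isCompact_Icc (a := a) (b := b))).of_isClosed_subset ?_ ?_
    · refine (h.closed.preimage continuous_fst).inter
        (IsClosed.inter (isClosed_le (f := fun t : (ℝ × ℝ) × ℝ => t.1.1) (g := fun t => t.2)
          (by fun_prop) (by fun_prop)) (isClosed_le (f := fun t : (ℝ × ℝ) × ℝ => t.2)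
          (g := fun t => t.1.2) (by fun_prop) (by fun_prop)))
    · rintro t ⟨h1, h2, h3⟩
      obtain ⟨h4, h5, h6⟩ := h.mem _ h1
      exact ⟨⟨⟨h4, h5.trans h6⟩, ⟨h4.trans h5, h6⟩⟩, ⟨h4.trans h2, h3.trans h6⟩⟩
  let P : (ℝ × ℝ) × ℝ → ℝ × ℝ := fun t => (t.2, (t.1.1 + t.1.2) * t.2 - t.1.1 * t.1.2)
  have hP : Continuous P := by fun_prop
  have hPz : ∀ t, chordFun t.1 (P t) = 0 := fun t => by simp only [chordFun, P]; ring
  have hPl : ∀ t ∈ T, P t ∈ lens a b := by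
    rintro t ⟨h1, h2, h3⟩
    obtain ⟨h4, h5, h6⟩ := h.mem _ h1
    simp only [P, lens, Set.mem_ofPred_eq]
    have h7 := mul_nonneg (sub_nonneg.2 h2) (sub_nonneg.2 h3)
    constructor
    · nlinarith
    · nlinarith [mul_nonneg (sub_nonneg.2 h4) (sub_nonneg.2 (h3.trans h6)),
        mul_nonneg (sub_nonneg.2 h2) (sub_nonneg.2 h6)]
  have himg : P '' T = lamination a b C := by
    ext p
    constructor
    · rintro ⟨t, ht, rfl⟩
      exact ⟨hPl t ht, t.1, ht.1, hPz t⟩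
    · rintro ⟨hp, c, hc, h0⟩
      refine ⟨(c, p.1), ⟨hc, chordFun_zero_fst (h.mem c hc).2.1 hp.1 h0⟩, ?_⟩
      unfold chordFun at h0
      exact Prod.ext rfl (by simp only [P]; linarith)
  let k : ℝ × ℝ → X := fun p =>
    if hp : ∃ c ∈ C, chordFun c p = 0 then q hp.choose.1 else hXne.some
  have hk : ∀ p ∈ lens a b, ∀ c ∈ C, chordFun c p = 0 → k p = q c.1 := by
    intro p hp c hc h0
    have hex : ∃ c ∈ C, chordFun c p = 0 := ⟨c, hc, h0⟩
    simp only [k, dif_pos hex]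
    exact h.eq_of_chordFun_zero hp hex.choose_spec.1 hc hex.choose_spec.2 h0
  refine ⟨himg ▸ hT.image hP, k, ?_, hk⟩
  rw [← himg]
  refine continuousOn_image_of_isCompact hT hP.continuousOn (F := fun t => q t.1.1) ?_
    fun t ht => hk _ (hPl t ht) _ ht.1 (hPz t)
  exact h.cont.comp (by fun_prop) fun t ht => ⟨(h.mem _ ht.1).1,
    (h.mem _ ht.1).2.1.trans (h.mem _ ht.1).2.2⟩

theorem mem_interior_lens (h : ChordSystem a b q C) {p : ℝ × ℝ} (hp : p ∈ lens a b)
    (hpL : p ∉ lamination a b C) : p ∈ interior (lens a b) := by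
  rw [interior_lens]
  obtain ⟨h1, h2⟩ := hp
  refine ⟨lt_of_le_of_ne h1 fun he => hpL ⟨⟨h1, h2⟩, _, h.diag p.1
    (lens_fst_mem h.le ⟨h1, h2⟩), ?_⟩, lt_of_le_of_ne h2 fun he => hpL ⟨⟨h1, h2⟩, _, h.outer, ?_⟩⟩
  · simp only [chordFun]; linarith
  · simp only [chordFun]; linarith

theorem isOpen_compl (h : ChordSystem a b q C) : IsOpen (lens a b \ lamination a b C) := by
  have : lens a b \ lamination a b C = interior (lens a b) \ lamination a b C :=
    Set.Subset.antisymm (fun p hp => ⟨h.mem_interior_lens hp.1 hp.2, hp.2⟩)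
      (fun p hp => ⟨interior_subset hp.1, hp.2⟩)
  rw [this]
  exact isOpen_interior.sdiff h.isCompact_lamination_and_exists.1.isClosed

theorem gap_subset (y : ℝ × ℝ) : gap a b C y ⊆ lens a b \ lamination a b C := by
  rintro z ⟨hz, hzc⟩
  refine ⟨hz, ?_⟩
  rintro ⟨-, c, hc, h0⟩
  have := hzc c hc
  rw [h0, mul_zero] at this
  exact this.false

theorem self_mem_gap {y : ℝ × ℝ} (hy : y ∈ lens a b \ lamination a b C) : y ∈ gap a b C y :=
  ⟨hy.1, fun c hc => mul_self_pos.2 fun h0 => hy.2 ⟨hy.1, c, hc, h0⟩⟩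

theorem gap_eq {y z : ℝ × ℝ} (hz : z ∈ gap a b C y) : gap a b C z = gap a b C y := by
  ext w
  refine and_congr_right fun _ => forall₂_congr fun c hc => ?_
  have := hz.2 c hc
  rcases pos_and_pos_or_neg_and_neg_of_mul_pos this with ⟨h1, h2⟩ | ⟨h1, h2⟩
  · rw [mul_pos_iff_of_pos_left h1, mul_pos_iff_of_pos_left h2]
  · constructor
    · intro h; nlinarith [neg_of_mul_pos_right h h2.le]
    · intro h; nlinarith [neg_of_mul_pos_right h h1.le]

theorem isOpen_gap (h : ChordSystem a b q C) (y : ℝ × ℝ) : IsOpen (gap a b C y) := by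
  rw [Metric.isOpen_iff]
  intro z hz
  have hzU := gap_subset y hz
  obtain ⟨ε, hε, hball⟩ := Metric.isOpen_iff.1 h.isOpen_compl z hzU
  refine ⟨ε, hε, fun w hw => ?_⟩
  rw [← gap_eq hz]
  refine ⟨(hball hw).1, fun c hc => ?_⟩
  by_contra hcon
  push Not at hcon
  have hz0 : chordFun c z ≠ 0 := fun h0 => hzU.2 ⟨hzU.1, c, hc, h0⟩
  have hne : chordFun c z - chordFun c w ≠ 0 := by
    intro he
    have : chordFun c z = chordFun c w := by linarith
    rw [← this] at hcon
    exact hz0 (mul_self_eq_zero.1 (le_antisymm hcon (mul_self_nonneg _)))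
  have hsq : 0 < (chordFun c z - chordFun c w) ^ 2 := by positivity
  set t := chordFun c z / (chordFun c z - chordFun c w) with ht
  have ht' : t = (chordFun c z * (chordFun c z - chordFun c w)) /
      (chordFun c z - chordFun c w) ^ 2 := by rw [ht]; field_simp
  have ht0 : 0 ≤ t := by rw [ht']; apply div_nonneg _ hsq.le; nlinarith [sq_nonneg (chordFun c z)]
  have ht1 : 0 ≤ 1 - t := by
    rw [ht', sub_nonneg, div_le_one hsq]; nlinarith [sq_nonneg (chordFun c w)]
  have hv : (1 - t) • z + t • w ∈ Metric.ball z ε :=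
    convex_ball z ε (Metric.mem_ball_self hε) hw ht1 ht0 (by ring)
  refine (hball hv).2 ⟨(hball hv).1, c, hc, ?_⟩
  rw [chordFun_combo _ _ _ (by ring), ht]
  field_simp
  ring

theorem convex_gap (y : ℝ × ℝ) : Convex ℝ (gap a b C y) := by
  intro z hz w hw s t hs ht hst
  refine ⟨convex_lens a b hz.1 hw.1 hs ht hst, fun c hc => ?_⟩
  rw [chordFun_combo _ _ _ hst]
  have h1 := hz.2 c hc
  have h2 := hw.2 c hc
  rcases hs.eq_or_lt with rfl | hs
  · obtain rfl : t = 1 := by linarith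
    linarith
  · nlinarith [mul_pos hs h1, mul_nonneg ht h2.le]

theorem frontier_gap_subset (h : ChordSystem a b q C) (y : ℝ × ℝ) :
    frontier (gap a b C y) ⊆ lamination a b C := by
  intro z hz
  have hzl : z ∈ lens a b :=
    closure_minimal (fun w hw => hw.1) (isClosed_lens a b) (frontier_subset_closure hz)
  by_contra hzL
  have hzU : z ∈ lens a b \ lamination a b C := ⟨hzl, hzL⟩
  obtain ⟨w, hw1, hw2⟩ := mem_closure_iff.1 (frontier_subset_closure hz) _ (h.isOpen_gap z)
    (self_mem_gap hzU)
  have he : gap a b C z = gap a b C y := (gap_eq hw1).symm.trans (gap_eq hw2)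
  have hmem : z ∈ gap a b C y := he ▸ self_mem_gap hzU
  exact hz.2 (by rwa [(h.isOpen_gap y).interior_eq])

theorem chordFun_mul_nonneg_closure {y z w : ℝ × ℝ} (hz : z ∈ closure (gap a b C y))
    (hw : w ∈ closure (gap a b C y)) {c : ℝ × ℝ} (hc : c ∈ C) :
    0 ≤ chordFun c z * chordFun c w := by
  have : (z, w) ∈ closure (gap a b C y ×ˢ gap a b C y) := by
    rw [closure_prod_eq]; exact ⟨hz, hw⟩
  have hcl : IsClosed {r : (ℝ × ℝ) × (ℝ × ℝ) | 0 ≤ chordFun c r.1 * chordFun c r.2} :=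
    isClosed_le (by fun_prop) (by have := continuous_chordFun c; fun_prop)
  refine closure_minimal ?_ hcl this
  rintro ⟨r, s⟩ ⟨hr, hs⟩
  have hr' := hr
  rw [← gap_eq hr'] at hs
  exact (hs.2 c hc).le

/-- Only finitely many gaps carry boundary values of a given size. -/
theorem finite_large_gaps (h : ChordSystem a b q C) {k : ℝ × ℝ → X}
    (hkc : ContinuousOn k (lamination a b C))
    (hk : ∀ p ∈ lens a b, ∀ c ∈ C, chordFun c p = 0 → k p = q c.1) {δ : ℝ} (hδ : 0 < δ) :
    {R : Set (ℝ × ℝ) | (∃ y, R = gap a b C y) ∧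
      ∃ z ∈ frontier R, ∃ w ∈ frontier R, δ ≤ dist (k z) (k w)}.Finite := by
  by_contra hinf
  let e := Set.Infinite.natEmbedding _ hinf
  have hspec := fun n => (e n).2
  choose hgap z hz w hw hd using hspec
  choose y hy using hgap
  have hL := h.isCompact_lamination_and_exists.1
  have hzL : ∀ n, z n ∈ lamination a b C := fun n =>
    h.frontier_gap_subset (y n) (by rw [← hy]; exact hz n)
  have hwL : ∀ n, w n ∈ lamination a b C := fun n =>
    h.frontier_gap_subset (y n) (by rw [← hy]; exact hw n)
  obtain ⟨⟨z₀, w₀⟩, ⟨hz0, hw0⟩, φ, hφ, hlim⟩ :=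
    (hL.prod hL).tendsto_subseq (x := fun n => (z n, w n)) fun n => ⟨hzL n, hwL n⟩
  have hlz : Filter.Tendsto (fun n => z (φ n)) Filter.atTop (nhds z₀) :=
    (continuous_fst.tendsto _).comp hlim
  have hlw : Filter.Tendsto (fun n => w (φ n)) Filter.atTop (nhds w₀) :=
    (continuous_snd.tendsto _).comp hlim
  have hkz : Filter.Tendsto (fun n => k (z (φ n))) Filter.atTop (nhds (k z₀)) :=
    (hkc z₀ hz0).tendsto.comp (tendsto_nhdsWithin_iff.2 ⟨hlz, .of_forall fun n => hzL _⟩)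
  have hkw : Filter.Tendsto (fun n => k (w (φ n))) Filter.atTop (nhds (k w₀)) :=
    (hkc w₀ hw0).tendsto.comp (tendsto_nhdsWithin_iff.2 ⟨hlw, .of_forall fun n => hwL _⟩)
  have hd0 : δ ≤ dist (k z₀) (k w₀) :=
    ge_of_tendsto (hkz.dist hkw) (.of_forall fun n => hd (φ n))
  have hzc : ∀ n, z n ∈ closure (gap a b C (y n)) := fun n => by
    rw [← hy]; exact frontier_subset_closure (hz n)
  have hwc : ∀ n, w n ∈ closure (gap a b C (y n)) := fun n => by
    rw [← hy]; exact frontier_subset_closure (hw n)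
  set m : ℝ × ℝ := (1 / 2 : ℝ) • z₀ + (1 / 2 : ℝ) • w₀ with hm
  have hml : m ∈ lens a b :=
    convex_lens a b hz0.1 hw0.1 (by norm_num) (by norm_num) (by norm_num)
  by_cases hmL : m ∈ lamination a b C
  · obtain ⟨-, c, hc, h0⟩ := hmL
    rw [hm, chordFun_combo _ _ _ (by norm_num)] at h0
    have hcz := ((continuous_chordFun c).tendsto z₀).comp hlz
    have hcw := ((continuous_chordFun c).tendsto w₀).comp hlw
    have hnn : 0 ≤ chordFun c z₀ * chordFun c w₀ :=
      ge_of_tendsto (hcz.mul hcw) (.of_forall fun n =>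
        chordFun_mul_nonneg_closure (hzc (φ n)) (hwc (φ n)) hc)
    have e1 : chordFun c w₀ = -chordFun c z₀ := by linarith
    have e2 : chordFun c z₀ = 0 := by
      rw [e1] at hnn
      nlinarith
    rw [hk z₀ hz0.1 c hc e2, hk w₀ hw0.1 c hc (by rw [e1, e2, neg_zero]), dist_self] at hd0
    linarith
  · have hmU : m ∈ lens a b \ lamination a b C := ⟨hml, hmL⟩
    have hlm : Filter.Tendsto (fun n => (1 / 2 : ℝ) • z (φ n) + (1 / 2 : ℝ) • w (φ n))
        Filter.atTop (nhds m) := (hlz.const_smul _).add (hlw.const_smul _)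
    have hev := hlm.eventually ((h.isOpen_gap m).mem_nhds (self_mem_gap hmU))
    obtain ⟨N, hN⟩ := Filter.eventually_atTop.1 hev
    have hall : ∀ n ≥ N, (e (φ n) : Set (ℝ × ℝ)) = gap a b C m := by
      intro n hn
      have hmc : (1 / 2 : ℝ) • z (φ n) + (1 / 2 : ℝ) • w (φ n) ∈
          closure (gap a b C (y (φ n))) :=
        (convex_gap _).closure (hzc _) (hwc _) (by norm_num) (by norm_num) (by norm_num)
      obtain ⟨r, hr1, hr2⟩ := mem_closure_iff.1 hmc _ (h.isOpen_gap m) (hN n hn)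
      rw [hy, ← gap_eq hr1, gap_eq hr2]
    have : e (φ N) = e (φ (N + 1)) :=
      Subtype.ext ((hall N le_rfl).trans (hall (N + 1) (by omega)).symm)
    have := hφ.injective (e.injective this)
    omega

end ChordSystem

/-- Among the extensions of boundary data into a region, some extension stays at most twice as
far from the boundary values as any other. -/
theorem exists_near_optimal_extension {X : Type*} [MetricSpace X] [SimplyConnectedSpace X]
    {R : Set (ℝ × ℝ)} (hR : Convex ℝ R) (hne : (interior R).Nonempty)
    (hb : Bornology.IsBounded R) (hfr : (frontier R).Nonempty) {k : ℝ × ℝ → X}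
    (hk : ContinuousOn k (frontier R)) :
    ∃ G : ℝ × ℝ → X, ContinuousOn G (closure R) ∧ Set.EqOn G k (frontier R) ∧
      ∀ ε > 0, (∃ G' : ℝ × ℝ → X, ContinuousOn G' (closure R) ∧ Set.EqOn G' k (frontier R) ∧
        ∀ z ∈ closure R, ∀ w ∈ frontier R, dist (G' z) (k w) ≤ ε) →
      ∀ z ∈ closure R, ∀ w ∈ frontier R, dist (G z) (k w) ≤ 2 * ε := by
  set S : Set ℝ := {ε | 0 < ε ∧ ∃ G' : ℝ × ℝ → X, ContinuousOn G' (closure R) ∧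
    Set.EqOn G' k (frontier R) ∧
    ∀ z ∈ closure R, ∀ w ∈ frontier R, dist (G' z) (k w) ≤ ε} with hS
  rcases S.eq_empty_or_nonempty with he | hSne
  · obtain ⟨G, hG, hGk⟩ := exists_extend_frontier hR hne hb k hk
    refine ⟨G, hG, hGk, fun ε hε hex => ?_⟩
    have : ε ∈ S := ⟨hε, hex⟩
    rw [he] at this
    exact this.elim
  have hbdd : BddBelow S := ⟨0, fun ε hε => hε.1.le⟩
  have hm0 : 0 ≤ sInf S := le_csInf hSne fun ε hε => hε.1.le
  rcases hm0.eq_or_lt with hm | hm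
  · obtain ⟨w₀, hw₀⟩ := hfr
    have hconst : ∀ w ∈ frontier R, k w₀ = k w := by
      intro w hw
      refine dist_le_zero.1 ?_
      rw [hm]
      refine le_csInf hSne ?_
      rintro ε ⟨-, G', -, hGk, hd⟩
      rw [← hGk hw₀]
      exact hd w₀ (frontier_subset_closure hw₀) w hw
    refine ⟨fun _ => k w₀, continuousOn_const, fun w hw => hconst w hw, fun ε hε _ z _ w hw => ?_⟩
    rw [hconst w hw, dist_self]
    positivity
  · obtain ⟨ε₁, ⟨h1, G, hG, hGk, hd⟩, h2⟩ :=
      exists_lt_of_csInf_lt hSne (show sInf S < 2 * sInf S by linarith)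
    refine ⟨G, hG, hGk, fun ε hε hex z hz w hw => (hd z hz w hw).trans ?_⟩
    have : sInf S ≤ ε := csInf_le hbdd ⟨hε, hex⟩
    linarith

namespace ChordSystem

variable {X : Type*} [MetricSpace X] {a b : ℝ} {q : ℝ → X} {C : Set (ℝ × ℝ)}

theorem exists_small_extension (h : ChordSystem a b q C) (hlsc : LocSimplyConnected X)
    {k : ℝ × ℝ → X} (hkc : ContinuousOn k (lamination a b C)) {ε : ℝ} (hε : 0 < ε) :
    ∃ δ > 0, ∀ y, (gap a b C y).Nonempty → (frontier (gap a b C y)).Nonempty →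
      (∀ z ∈ frontier (gap a b C y), ∀ w ∈ frontier (gap a b C y), dist (k z) (k w) < δ) →
      ∃ G : ℝ × ℝ → X, ContinuousOn G (closure (gap a b C y)) ∧
        Set.EqOn G k (frontier (gap a b C y)) ∧
        ∀ z ∈ closure (gap a b C y), ∀ w ∈ frontier (gap a b C y), dist (G z) (k w) ≤ ε := by
  have hsc : ∀ x : X, ∃ V ∈ nhds x, V ⊆ Metric.ball x (ε / 2) ∧ SimplyConnectedSpace V :=
    fun x => hlsc x _ (Metric.ball_mem_nhds x (half_pos hε))
  choose V hVn hVb hVs using hsc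
  obtain ⟨δ, hδ, hleb⟩ := lebesgue_number_lemma_of_metric
    (h.isCompact_lamination_and_exists.1.image_of_continuousOn hkc)
    (c := fun x => interior (V x)) (fun _ => isOpen_interior)
    (fun x _ => Set.mem_iUnion.2 ⟨x, mem_interior_iff_mem_nhds.2 (hVn x)⟩)
  refine ⟨δ, hδ, fun y hyne hfne hsmall => ?_⟩
  have hsub := h.frontier_gap_subset y
  obtain ⟨w₀, hw₀⟩ := hfne
  obtain ⟨x, hx⟩ := hleb (k w₀) ⟨w₀, hsub hw₀, rfl⟩
  have hmaps : Set.MapsTo k (frontier (gap a b C y)) (V x) := fun w hw =>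
    interior_subset (hx (hsmall w hw w₀ hw₀))
  have := hVs x
  obtain ⟨G, hG, hGk, hGV⟩ := exists_extend_frontier_mapsTo (convex_gap (a := a) (b := b) (C := C) y)
    (by rwa [(h.isOpen_gap y).interior_eq])
    ((isBounded_lens h.le).subset fun z hz => hz.1) k (hkc.mono hsub) hmaps
  refine ⟨G, hG, hGk, fun z hz w hw => ?_⟩
  have h1 := hVb x (hGV hz)
  have h2 := hVb x (hmaps hw)
  rw [Metric.mem_ball] at h1 h2
  have := dist_triangle_right (G z) (k w) x
  linarith

theorem frontier_gap_nonempty (h : ChordSystem a b q C) {y : ℝ × ℝ}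
    (hne : (gap a b C y).Nonempty) : (frontier (gap a b C y)).Nonempty := by
  refine nonempty_frontier_iff.2 ⟨hne, fun hu => ?_⟩
  have hb : Bornology.IsBounded (gap a b C y) := (isBounded_lens h.le).subset fun z hz => hz.1
  rw [hu] at hb
  exact NormedSpace.unbounded_univ ℝ (ℝ × ℝ) hb

/-- In a simply connected, locally simply connected space, a path constant on the chords of a
chord system extends over the lens, constantly along each chord. -/
theorem exists_extension [SimplyConnectedSpace X] (h : ChordSystem a b q C)
    (hlsc : LocSimplyConnected X) :
    ∃ K : ℝ × ℝ → X, ContinuousOn K (lens a b) ∧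
      ∀ p ∈ lens a b, ∀ c ∈ C, chordFun c p = 0 → K p = q c.1 := by
  obtain ⟨hLc, k, hkc, hk⟩ := h.isCompact_lamination_and_exists
  have hopt : ∀ R : Set (ℝ × ℝ), ∃ G : ℝ × ℝ → X, ∀ y, R = gap a b C y → R.Nonempty →
      ContinuousOn G (closure R) ∧ Set.EqOn G k (frontier R) ∧
      ∀ ε > 0, (∃ G' : ℝ × ℝ → X, ContinuousOn G' (closure R) ∧ Set.EqOn G' k (frontier R) ∧
        ∀ z ∈ closure R, ∀ w ∈ frontier R, dist (G' z) (k w) ≤ ε) →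
      ∀ z ∈ closure R, ∀ w ∈ frontier R, dist (G z) (k w) ≤ 2 * ε := by
    intro R
    by_cases hR : (∃ y, R = gap a b C y) ∧ R.Nonempty
    · obtain ⟨⟨y, rfl⟩, hne⟩ := hR
      obtain ⟨G, hG⟩ := exists_near_optimal_extension (convex_gap (a := a) (b := b) (C := C) y)
        (by rwa [(h.isOpen_gap y).interior_eq])
        ((isBounded_lens h.le).subset fun z hz => hz.1) (h.frontier_gap_nonempty hne)
        (hkc.mono (h.frontier_gap_subset y))
      exact ⟨G, fun _ _ _ => hG⟩
    · exact ⟨k, fun y hy hne => (hR ⟨⟨y, hy⟩, hne⟩).elim⟩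
  choose G hG using hopt
  have hfin : ∀ ε > 0, {R : Set (ℝ × ℝ) | (∃ y, R = gap a b C y) ∧ R.Nonempty ∧
      ¬∀ z ∈ closure R, ∀ w ∈ frontier R, dist (G R z) (k w) ≤ ε}.Finite := by
    intro ε hε
    obtain ⟨δ, hδ, hsmall⟩ := h.exists_small_extension hlsc hkc (half_pos hε)
    refine (h.finite_large_gaps hkc hk hδ).subset ?_
    rintro R ⟨⟨y, rfl⟩, hne, hbad⟩
    refine ⟨⟨y, rfl⟩, ?_⟩
    by_contra hcon
    push Not at hcon
    refine hbad ?_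
    have := (hG _ y rfl hne).2.2 _ (half_pos hε)
      (hsmall y hne (h.frontier_gap_nonempty hne) hcon)
    rwa [mul_div_cancel₀ _ (two_ne_zero)] at this
  let K : ℝ × ℝ → X := fun p => if p ∈ lamination a b C then k p else G (gap a b C p) p
  have hKL : ∀ p ∈ lamination a b C, K p = k p := fun p hp => if_pos hp
  have hKU : ∀ p, p ∉ lamination a b C → K p = G (gap a b C p) p := fun p hp => if_neg hp
  refine ⟨K, ?_, fun p hp c hc h0 => by rw [hKL p ⟨hp, c, hc, h0⟩, hk p hp c hc h0]⟩
  intro p hp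
  by_cases hpL : p ∈ lamination a b C
  · rw [Metric.continuousWithinAt_iff']
    intro ε hε
    have hε2 := half_pos hε
    rw [hKL p hpL]
    obtain ⟨δ, hδ, hδk⟩ := Metric.continuousWithinAt_iff.1 (hkc p hpL) _ hε2
    have hbadev : ∀ᶠ x in nhdsWithin p (lens a b), ∀ R ∈ {R : Set (ℝ × ℝ) |
        (∃ y, R = gap a b C y) ∧ R.Nonempty ∧
          ¬∀ z ∈ closure R, ∀ w ∈ frontier R, dist (G R z) (k w) ≤ ε / 4},
        x ∈ R → dist (G R x) (k p) < ε := by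
      rw [Filter.eventually_all_finite (hfin _ (by linarith))]
      rintro R ⟨⟨y, rfl⟩, hne, -⟩
      obtain ⟨hc1, hc2, -⟩ := hG _ y rfl hne
      by_cases hpc : p ∈ closure (gap a b C y)
      · have hpf : p ∈ frontier (gap a b C y) :=
          ⟨hpc, fun hi => (gap_subset y (interior_subset hi)).2 hpL⟩
        have := Metric.continuousWithinAt_iff.1 (hc1 p hpc) ε hε
        obtain ⟨η, hη, hη'⟩ := this
        refine mem_nhdsWithin_of_mem_nhds ?_
        filter_upwards [Metric.ball_mem_nhds p hη] with x hx hxR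
        rw [← hc2 hpf]
        exact hη' (subset_closure hxR) hx
      · refine mem_nhdsWithin_of_mem_nhds ?_
        filter_upwards [isClosed_closure.isOpen_compl.mem_nhds hpc] with x hx hxR
        exact (hx (subset_closure hxR)).elim
    filter_upwards [hbadev, self_mem_nhdsWithin,
      mem_nhdsWithin_of_mem_nhds (Metric.ball_mem_nhds p hδ)] with x hxbad hxl hxδ
    by_cases hxL : x ∈ lamination a b C
    · rw [hKL x hxL]
      exact (hδk hxL hxδ).trans (by linarith)
    · rw [hKU x hxL]
      have hxU : x ∈ lens a b \ lamination a b C := ⟨hxl, hxL⟩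
      have hxg := self_mem_gap hxU
      by_cases hgood : ∀ z ∈ closure (gap a b C x), ∀ w ∈ frontier (gap a b C x),
          dist (G (gap a b C x) z) (k w) ≤ ε / 4
      · have hpn : p ∉ gap a b C x := fun hpg => (gap_subset x hpg).2 hpL
        obtain ⟨w, hws, hwf⟩ : (segment ℝ x p ∩ frontier (gap a b C x)).Nonempty := by
          by_contra hempty
          have hcl := (convex_segment x p).isPreconnected
          refine hpn (hcl.subset_of_closure_inter_subset (h.isOpen_gap x)
            ⟨x, left_mem_segment ℝ x p, hxg⟩ ?_ (right_mem_segment ℝ x p))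
          rintro w ⟨hw1, hw2⟩
          by_contra hw3
          exact hempty ⟨w, hw2, hw1, fun hi => hw3 (interior_subset hi)⟩
        have hwδ : dist w p < δ := (convex_ball p δ).segment_subset hxδ
          (Metric.mem_ball_self hδ) hws
        have h1 := hgood x (subset_closure hxg) w hwf
        have h2 := hδk (h.frontier_gap_subset x hwf) hwδ
        have := dist_triangle (G (gap a b C x) x) (k w) (k p)
        linarith
      · exact hxbad _ ⟨⟨x, rfl⟩, ⟨x, hxg⟩, hgood⟩ hxg
  · have hpU : p ∈ lens a b \ lamination a b C := ⟨hp, hpL⟩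
    have hpg := self_mem_gap hpU
    have hn := (h.isOpen_gap p).mem_nhds hpg
    have hc := ((hG _ p rfl ⟨p, hpg⟩).1.mono subset_closure).continuousAt hn
    refine (hc.congr ?_).continuousWithinAt
    filter_upwards [hn] with x hx
    rw [hKU x (gap_subset p hx).2, gap_eq hx]

end ChordSystem

theorem exists_pairing_of_mk_eq_one {D ι : Type*} [LinearOrder ι] (letter : ι → D × Bool)
    (n : ℕ) : ∀ l : List ι, l.length = n → l.Pairwise (· < ·) →
      FreeGroup.mk (l.map letter) = 1 →
    ∃ σ : ι → ι, (∀ i ∈ l, σ i ∈ l ∧ σ (σ i) = i ∧ (letter (σ i)).1 = (letter i).1 ∧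
      (letter (σ i)).2 = !(letter i).2) ∧
      ∀ i ∈ l, ∀ j ∈ l, i < j → j < σ i → ¬σ i < σ j := by
  induction n using Nat.strong_induction_on with
  | _ n ih =>
  intro l hn hl h1
  have hred : FreeGroup.Red (l.map letter) [] := by
    obtain ⟨L, hL1, hL2⟩ := FreeGroup.Red.exact.1 (h1.trans FreeGroup.one_eq_mk)
    rwa [FreeGroup.Red.nil_iff.1 hL2] at hL1
  rcases Relation.ReflTransGen.cases_head hred with h | ⟨L, hstep, -⟩
  · obtain rfl : l = [] := List.map_eq_nil_iff.1 h
    exact ⟨id, by simp, by simp⟩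
  · have hmk := FreeGroup.Red.exact.2 ⟨L, Relation.ReflTransGen.single hstep, .refl⟩
    rw [h1] at hmk
    generalize hM : l.map letter = M at hstep
    cases hstep with
    | @not L₁ L₂ x c =>
    obtain ⟨A, l₂, rfl, rfl, h2⟩ := List.map_eq_append_iff.1 hM
    obtain ⟨i₀, l₃, rfl, h3, h4⟩ := List.map_eq_cons_iff.1 h2
    obtain ⟨j₀, B, rfl, h5, rfl⟩ := List.map_eq_cons_iff.1 h4
    rw [← List.map_append] at hmk
    have hsub : (A ++ B).Sublist (A ++ i₀ :: j₀ :: B) :=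
      (List.Sublist.refl A).append (((List.Sublist.refl B).cons _).cons _)
    obtain ⟨σ, hσ, hnc⟩ := ih (A ++ B).length (by rw [← hn]; simp) (A ++ B) rfl
      (hl.sublist hsub) hmk.symm
    rw [List.pairwise_append] at hl
    obtain ⟨-, hl2, hl3⟩ := hl
    rw [List.pairwise_cons, List.pairwise_cons] at hl2
    obtain ⟨hl4, hl5, -⟩ := hl2
    have hij : i₀ < j₀ := hl4 j₀ (by simp)
    have hout : ∀ y ∈ A ++ B, y < i₀ ∨ j₀ < y := by
      intro y hy
      rcases List.mem_append.1 hy with hy | hy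
      · exact Or.inl (hl3 y hy i₀ (by simp))
      · exact Or.inr (hl5 y hy)
    have hmem : ∀ y, y ∈ A ++ i₀ :: j₀ :: B ↔ y = i₀ ∨ y = j₀ ∨ y ∈ A ++ B := by
      intro y; simp only [List.mem_append, List.mem_cons]; tauto
    have hne : ∀ y ∈ A ++ B, y ≠ i₀ ∧ y ≠ j₀ := by
      intro y hy
      rcases hout y hy with h | h
      · exact ⟨h.ne, (h.trans hij).ne⟩
      · exact ⟨(hij.trans h).ne', h.ne'⟩
    let τ : ι → ι := fun y => if y = i₀ then j₀ else if y = j₀ then i₀ else σ y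
    have t1 : τ i₀ = j₀ := by simp [τ]
    have t2 : τ j₀ = i₀ := by simp [τ, hij.ne']
    have t3 : ∀ y ∈ A ++ B, τ y = σ y := fun y hy => by simp [τ, (hne y hy).1, (hne y hy).2]
    refine ⟨τ, ?_, ?_⟩
    · intro i hi
      rcases (hmem i).1 hi with rfl | rfl | hi
      · rw [t1, t2, h3, h5, hmem]
        simp
      · rw [t2, t1, h3, h5, hmem]
        simp
      · obtain ⟨m1, m2, m3, m4⟩ := hσ i hi
        rw [t3 i hi, t3 _ m1, hmem]
        exact ⟨Or.inr (Or.inr m1), m2, m3, m4⟩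
    · intro i hi j hj h6 h7 h8
      rcases (hmem i).1 hi with rfl | rfl | hi
      · rw [t1] at h7
        rcases (hmem j).1 hj with rfl | rfl | hj
        · exact h6.false
        · exact h7.false
        · rcases hout j hj with h | h
          · exact (h.trans h6).false
          · exact (h.trans h7).false
      · rw [t2] at h7
        exact ((hij.trans h6).trans h7).false
      · obtain ⟨m1, -⟩ := hσ i hi
        rw [t3 i hi] at h7 h8
        rcases (hmem j).1 hj with rfl | rfl | hj
        · rw [t1] at h8
          rcases hout _ m1 with h | h
          · exact (h.trans h7).false
          · exact (h.trans h8).false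
        · rw [t2] at h8
          exact ((hij.trans h7).trans h8).false
        · rw [t3 j hj] at h8
          exact hnc i hi j hj h6 h7 h8

/-- An infinitary word equivalent to the empty word admits a noncrossing inverse pairing of all
its letters. -/
theorem InfWord.IsNull.exists_pairing {D : Type*} {W : InfWord D} (hW : W.IsNull) :
    ∃ σ : W.ι → W.ι, (∀ i, σ (σ i) = i ∧ (W.letter (σ i)).1 = (W.letter i).1 ∧
      (W.letter (σ i)).2 = !(W.letter i).2) ∧ ∀ i j, i < j → j < σ i → ¬σ i < σ j := by
  have hF : ∀ F : Finset D, ∃ σ : W.ι → W.ι,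
      (∀ i, (W.letter i).1 ∈ F → σ (σ i) = i ∧ (W.letter (σ i)).1 = (W.letter i).1 ∧
      (W.letter (σ i)).2 = !(W.letter i).2) ∧
      ∀ i j, (W.letter i).1 ∈ F → (W.letter j).1 ∈ F → i < j → j < σ i → ¬σ i < σ j := by
    intro F
    have h1 := hW F
    have hprod : ∀ l : List W.ι, (l.map fun i => FreeGroup.mk [W.letter i]).prod =
        FreeGroup.mk (l.map W.letter) := by
      intro l
      induction l with
      | nil => rfl
      | cons i l ih => rw [List.map_cons, List.prod_cons, ih, FreeGroup.mul_mk]; rfl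
    unfold InfWord.evalF at h1
    rw [hprod] at h1
    obtain ⟨σ, hσ, hnc⟩ := exists_pairing_of_mk_eq_one W.letter _ _ rfl
      (Finset.sortedLT_sort _).pairwise h1
    have hm : ∀ i, (W.letter i).1 ∈ F → i ∈ (W.finF F).toFinset.sort (· ≤ ·) := by
      intro i hi; simpa using hi
    exact ⟨σ, fun i hi => (hσ i (hm i hi)).2, fun i j hi hj => hnc i (hm i hi) j (hm j hj)⟩
  choose σ hσ hnc using hF
  let F : Finset W.ι → Finset D := fun s => s.image fun i => (W.letter i).1
  have : ∀ i : W.ι, Finite {j : W.ι // (W.letter j).1 = (W.letter i).1} := fun i =>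
    (W.finOcc (W.letter i).1).to_subtype
  obtain ⟨χ, hχ⟩ := Finset.rado_selection
    (β := fun i : W.ι => {j : W.ι // (W.letter j).1 = (W.letter i).1})
    (fun s i => if h : (W.letter i).1 ∈ F s then ⟨σ (F s) i, (hσ (F s) i h).2.1⟩ else ⟨i, rfl⟩)
  have key : ∀ s : Finset W.ι, ∃ t : Finset W.ι, ∀ i ∈ s,
      (W.letter i).1 ∈ F t ∧ (χ i : W.ι) = σ (F t) i := by
    intro s
    obtain ⟨t, hst, ht⟩ := hχ s
    refine ⟨t, fun i hi => ?_⟩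
    have him : (W.letter i).1 ∈ F t := Finset.mem_image_of_mem _ (hst hi)
    refine ⟨him, ?_⟩
    rw [ht i hi, dif_pos him]
  refine ⟨fun i => χ i, fun i => ?_, fun i j => ?_⟩
  · obtain ⟨t, ht⟩ := key {i, (χ i : W.ι)}
    obtain ⟨h1, h2⟩ := ht i (by simp)
    obtain ⟨-, h3⟩ := ht (χ i) (by simp)
    beta_reduce
    rw [h3, h2]
    exact hσ _ i h1
  · obtain ⟨t, ht⟩ := key {i, j}
    obtain ⟨h1, h2⟩ := ht i (by simp)
    obtain ⟨h3, h4⟩ := ht j (by simp)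
    beta_reduce
    rw [h2, h4]
    exact hnc _ i j h1 h3

theorem wt_apply {X : Type*} {d : ℕ+ → X} (hd : Function.Injective d) (n : ℕ+) : wt d (d n) = 1 / (n : ℝ) := by
  have h : ∃ m : ℕ+, d n = d m := ⟨n, rfl⟩
  rw [wt, dif_pos h, ← hd h.choose_spec]

theorem wt_of_forall_ne {X : Type*} {d : ℕ+ → X} {x : X} (h : ∀ n, x ≠ d n) : wt d x = 0 :=
  dif_neg fun ⟨n, hn⟩ => h n hn

theorem wt_nonneg {X : Type*} {d : ℕ+ → X} (x : X) : 0 ≤ wt d x := by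
  unfold wt
  split_ifs <;> positivity

section Topology

variable {X : Type*} [MetricSpace X] {d : ℕ+ → X}

theorem rho_self (p : ESp X d) : rho d p.pt p.pt = 0 := by
  unfold rho
  split_ifs with h
  · simp
  · rcases p.mem with h1 | h1
    · simp [h1]
    · exact absurd ⟨rfl, h1⟩ h

theorem dist_fst_le_rho (p q : X × Circle) : dist p.1 q.1 ≤ rho d p q := by
  have h1 := mul_nonneg (wt_nonneg (d := d) p.1) (dist_nonneg (x := p.2) (y := 1))
  have h2 := mul_nonneg (wt_nonneg (d := d) q.1) (dist_nonneg (x := q.2) (y := 1))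
  unfold rho
  split_ifs with h
  · rw [h.1, dist_self]
    exact mul_nonneg (wt_nonneg _) dist_nonneg
  · linarith

theorem rho_triangle (p q r : X × Circle) : rho d p r ≤ rho d p q + rho d q r := by
  obtain ⟨x, s⟩ := p
  obtain ⟨y, t⟩ := q
  obtain ⟨z, w⟩ := r
  have hx := wt_nonneg (d := d) x
  have hy := wt_nonneg (d := d) y
  have hz := wt_nonneg (d := d) z
  have n1 := mul_nonneg hx (dist_nonneg (x := s) (y := 1))
  have n2 := mul_nonneg hy (dist_nonneg (x := t) (y := 1))
  have n3 := mul_nonneg hz (dist_nonneg (x := w) (y := 1))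
  have d1 := dist_triangle x y z
  simp only [rho]
  by_cases h1 : x = y ∧ ∃ n, x = d n
  · rw [if_pos h1]
    obtain ⟨rfl, hn⟩ := h1
    by_cases h2 : x = z
    · subst h2
      simp only [hn, and_self, if_true]
      nlinarith [dist_triangle s t w]
    · simp only [h2, false_and, if_false]
      nlinarith [dist_triangle s t 1]
  · rw [if_neg h1]
    by_cases h2 : y = z ∧ ∃ n, y = d n
    · rw [if_pos h2]
      obtain ⟨rfl, hn⟩ := h2
      rw [if_neg h1]
      nlinarith [dist_triangle w t 1, dist_comm w t]
    · rw [if_neg h2]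
      have d2 := dist_nonneg (x := x) (y := y)
      have d3 := dist_nonneg (x := y) (y := z)
      split_ifs with h3
      · obtain ⟨rfl, hn⟩ := h3
        nlinarith [dist_triangle s 1 w, dist_comm w 1]
      · linarith

theorem continuous_pt_fst : Continuous fun p : ESp X d => p.pt.1 := by
  rw [continuous_iff_continuousAt]
  intro p
  rw [ContinuousAt, Metric.tendsto_nhds]
  intro ε hε
  have ho : IsOpen {q : ESp X d | rho d p.pt q.pt < ε} :=
    TopologicalSpace.isOpen_generateFrom_of_mem ⟨p, ε, rfl⟩
  filter_upwards [ho.mem_nhds (show rho d p.pt p.pt < ε by rwa [rho_self])] with q hq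
  rw [dist_comm]
  exact (dist_fst_le_rho _ _).trans_lt hq

/-- A map into the earring space is continuous if its base component is continuous and its
winding around each attached circle is continuous. -/
theorem continuousOn_of_fst_of_circle (hd : Function.Injective d) {Y : Type*} [TopologicalSpace Y]
    {S : Set Y} {H : Y → ESp X d} {θ : ℕ+ → Y → Circle}
    (hK : ContinuousOn (fun y => (H y).pt.1) S) (hθ : ∀ n, ContinuousOn (θ n) S)
    (hin : ∀ n, ∀ y ∈ S, (H y).pt.1 = d n → (H y).pt.2 = θ n y)
    (hout : ∀ n, ∀ y ∈ S, (H y).pt.1 ≠ d n → θ n y = 1) : ContinuousOn H S := by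
  rw [continuousOn_to_generateFrom_iff]
  rintro y₀ hy₀ _ ⟨p, r, rfl⟩ hr
  obtain ⟨ε, hε, hεr⟩ : ∃ ε > 0, 3 * ε < r - rho d p.pt (H y₀).pt :=
    ⟨(r - rho d p.pt (H y₀).pt) / 4, by linarith [show rho d p.pt (H y₀).pt < r from hr], by linarith [show rho d p.pt (H y₀).pt < r from hr]⟩
  obtain ⟨M, hM⟩ := exists_nat_gt (2 / ε)
  have hsmall : ∀ᶠ y in nhdsWithin y₀ S, ∀ n : ℕ+,
      1 / (n : ℝ) * dist (θ n y₀) (θ n y) < ε := by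
    have hfin : {n : ℕ+ | (n : ℕ) < M}.Finite :=
      Set.Finite.preimage (PNat.coe_injective.injOn) (Set.finite_lt_nat M)
    have h1 : ∀ᶠ y in nhdsWithin y₀ S, ∀ n ∈ {n : ℕ+ | (n : ℕ) < M},
        dist (θ n y) (θ n y₀) < ε :=
      (Filter.eventually_all_finite hfin).2 fun n _ =>
        Metric.tendsto_nhds.1 (hθ n y₀ hy₀) ε hε
    filter_upwards [h1] with y hy n
    have hn : (1 : ℝ) ≤ n := by exact_mod_cast n.pos
    rw [one_div_mul_eq_div, div_lt_iff₀ (by linarith)]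
    by_cases hnM : (n : ℕ) < M
    · have := hy n hnM
      rw [dist_comm]
      nlinarith
    · have h2 : (M : ℝ) ≤ (n : ℝ) := by exact_mod_cast not_lt.1 hnM
      have h3 : dist (θ n y₀) (θ n y) ≤ 2 := by
        have h4 : dist (θ n y₀) (θ n y) = ‖(θ n y₀ : ℂ) - (θ n y : ℂ)‖ := by
          rw [← dist_eq_norm]; rfl
        rw [h4]
        refine (norm_sub_le _ _).trans ?_
        rw [Circle.norm_coe, Circle.norm_coe]
        norm_num
      rw [div_lt_iff₀ hε] at hM
      nlinarith
  filter_upwards [hsmall, Metric.tendsto_nhds.1 (hK y₀ hy₀) ε hε, self_mem_nhdsWithin]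
    with y h1 h2 hy
  have hterm : ∀ y₁ ∈ S, ∀ y₂ ∈ S, (∀ n : ℕ+, 1 / (n : ℝ) * dist (θ n y₁) (θ n y₂) < ε) →
      ¬((H y₁).pt.1 = (H y₂).pt.1 ∧ ∃ n, (H y₁).pt.1 = d n) →
      wt d (H y₁).pt.1 * dist (H y₁).pt.2 1 < ε := by
    intro y₁ hy₁ y₂ hy₂ hlt hne
    by_cases hn : ∃ n, (H y₁).pt.1 = d n
    · obtain ⟨n, hn⟩ := hn
      have h3 : (H y₂).pt.1 ≠ d n := fun h => hne ⟨hn.trans h.symm, n, hn⟩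
      have h4 := hlt n
      rwa [hout n y₂ hy₂ h3, ← hin n y₁ hy₁ hn, ← wt_apply hd, ← hn] at h4
    · rw [wt_of_forall_ne (not_exists.1 hn), zero_mul]
      exact hε
  have hrho : rho d (H y₀).pt (H y).pt < 3 * ε := by
    unfold rho
    split_ifs with h
    · obtain ⟨h3, n, hn⟩ := h
      rw [hin n y₀ hy₀ hn, hin n y hy (h3 ▸ hn), hn, wt_apply hd]
      linarith [h1 n]
    · have h3 := hterm y₀ hy₀ y hy h1 h
      have h4 := hterm y hy y₀ hy₀ (fun n => by rw [dist_comm]; exact h1 n)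
        (fun h' => h ⟨h'.1.symm, h'.1 ▸ h'.2⟩)
      rw [dist_comm] at h2
      linarith
  have := rho_triangle (d := d) p.pt (H y₀).pt (H y).pt
  show rho d p.pt (H y).pt < r
  linarith

end Topology

/-- A strip of chords joining two intervals of the parabola: prescribed winding on the two
intervals extends over the lens so that it is trivial away from the strip. -/
theorem exists_strip {a b x y z w ε : ℝ} {φ₁ φ₂ : ℝ → ℝ} (hax : a ≤ x) (hxy : x < y)
    (hyz : y ≤ z) (hzw : z < w) (hwb : w ≤ b) (hε : ε = 1 ∨ ε = -1)
    (hφ₁ : ContinuousOn φ₁ (Set.Icc x y)) (hx : φ₁ x = 0) (hy : φ₁ y = 1)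
    (hφ₂ : ContinuousOn φ₂ (Set.Icc z w)) (hz : φ₂ z = 0) (hw : φ₂ w = 1) :
    ∃ Θ : ℝ × ℝ → Circle, Continuous Θ ∧
      (∀ p ∈ lens a b, Θ p = 1 ∨ ∃ s ∈ Set.Icc x y, ∃ s' ∈ Set.Icc z w, chordFun (s, s') p = 0) ∧
      (∀ t ∈ Set.Icc x y, Θ (t, t ^ 2) = Circle.exp (ε * (2 * Real.pi) * φ₁ t)) ∧
      (∀ t ∈ Set.Icc z w, Θ (t, t ^ 2) = Circle.exp (-ε * (2 * Real.pi) * φ₂ t)) ∧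
      (∀ t, t ∉ Set.Ioo x y → t ∉ Set.Ioo z w → Θ (t, t ^ 2) = 1) ∧
      ∀ p ∈ lens a b, chordFun (a, b) p = 0 → Θ p = 1 := by
  let π₁ : ℝ → ℝ := fun t => max x (min y t)
  let π₂ : ℝ → ℝ := fun t => max z (min w t)
  have m₁ : ∀ t, π₁ t ∈ Set.Icc x y := fun t =>
    ⟨le_max_left _ _, max_le hxy.le (min_le_left _ _)⟩
  have m₂ : ∀ t, π₂ t ∈ Set.Icc z w := fun t =>
    ⟨le_max_left _ _, max_le hzw.le (min_le_left _ _)⟩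
  have e₁ : ∀ t ∈ Set.Icc x y, π₁ t = t := fun t ht => by
    simp only [π₁]; rw [min_eq_right ht.2, max_eq_right ht.1]
  have e₂ : ∀ t ∈ Set.Icc z w, π₂ t = t := fun t ht => by
    simp only [π₂]; rw [min_eq_right ht.2, max_eq_right ht.1]
  have l₁ : ∀ t, t ≤ x → π₁ t = x := fun t ht => by
    simp only [π₁]; rw [min_eq_right (ht.trans hxy.le), max_eq_left ht]
  have l₂ : ∀ t, t ≤ z → π₂ t = z := fun t ht => by
    simp only [π₂]; rw [min_eq_right (ht.trans hzw.le), max_eq_left ht]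
  have r₁ : ∀ t, y ≤ t → π₁ t = y := fun t ht => by
    simp only [π₁]; rw [min_eq_left ht, max_eq_right hxy.le]
  have r₂ : ∀ t, w ≤ t → π₂ t = w := fun t ht => by
    simp only [π₂]; rw [min_eq_left ht, max_eq_right hzw.le]
  let χ : ℝ → ℝ := fun t => φ₁ (π₁ t) - φ₂ (π₂ t)
  have hχ : Continuous χ :=
    (hφ₁.comp_continuous (by fun_prop) m₁).sub (hφ₂.comp_continuous (by fun_prop) m₂)
  have χmid : ∀ t, y ≤ t → t ≤ z → χ t = 1 := fun t h1 h2 => by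
    simp only [χ]; rw [r₁ t h1, l₂ t h2, hy, hz, sub_zero]
  have χlow : ∀ t, t ≤ x → χ t = 0 := fun t h => by
    simp only [χ]; rw [l₁ t h, l₂ t (by linarith), hx, hz, sub_zero]
  have χhigh : ∀ t, w ≤ t → χ t = 0 := fun t h => by
    simp only [χ]; rw [r₁ t (by linarith), r₂ t h, hy, hw, sub_self]
  let A : Set (ℝ × ℝ) := {p | p.1 ^ 2 ≤ p.2} ∩ {p | chordFun (y, z) p ≤ 0}
  let B : Set (ℝ × ℝ) := {p | p.1 ^ 2 ≤ p.2} ∩ {p | 0 ≤ chordFun (x, w) p}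
  let P : Set (ℝ × ℝ) := {p | p.2 = p.1 ^ 2}
  have hA : IsClosed A := (isClosed_le (by fun_prop) (by fun_prop)).inter
    (isClosed_le (continuous_chordFun _) continuous_const)
  have hB : IsClosed B := (isClosed_le (by fun_prop) (by fun_prop)).inter
    (isClosed_le continuous_const (continuous_chordFun _))
  have hP : IsClosed P := isClosed_eq (by fun_prop) (by fun_prop)
  have hAm : ∀ p ∈ A, y ≤ p.1 ∧ p.1 ≤ z := by
    rintro p ⟨h1, h2⟩
    simp only [Set.mem_ofPred_eq, chordFun] at h1 h2
    constructor <;> by_contra! h <;> nlinarith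
  have hAB : ∀ p ∈ A, p ∉ B := by
    rintro p hp ⟨-, h3⟩
    obtain ⟨h1, h2⟩ := hAm p hp
    have h4 := hp.2
    simp only [Set.mem_ofPred_eq, chordFun] at h3 h4
    nlinarith
  let g : ℝ × ℝ → ℝ := fun p => if p ∈ A then 1 else if p ∈ B then 0 else χ p.1
  have gA : ∀ p ∈ A, g p = 1 := fun p hp => if_pos hp
  have gB : ∀ p ∈ B, g p = 0 := fun p hp => by
    simp only [g]; rw [if_neg fun h => hAB p h hp, if_pos hp]
  have gP : ∀ p ∈ P, g p = χ p.1 := by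
    intro p hp
    by_cases h1 : p ∈ A
    · rw [gA p h1, χmid _ (hAm p h1).1 (hAm p h1).2]
    · by_cases h2 : p ∈ B
      · rw [gB p h2]
        have h3 := h2.2
        have hp' : p.2 = p.1 ^ 2 := hp
        simp only [Set.mem_ofPred_eq, chordFun] at h3
        rcases le_or_gt p.1 x with h | h
        · rw [χlow _ h]
        · rw [χhigh]
          by_contra! h'
          nlinarith
      · simp only [g]; rw [if_neg h1, if_neg h2]
  have hg : ContinuousOn g (A ∪ B ∪ P) := by
    refine ContinuousOn.union_of_isClosed (ContinuousOn.union_of_isClosed ?_ ?_ hA hB) ?_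
      (hA.union hB) hP
    · exact continuousOn_const.congr gA
    · exact continuousOn_const.congr gB
    · exact (hχ.comp continuous_fst).continuousOn.congr gP
  obtain ⟨G, hG⟩ := ContinuousMap.exists_restrict_eq ((hA.union hB).union hP)
    ⟨_, hg.domRestrict⟩
  have hGg : ∀ p ∈ A ∪ B ∪ P, G p = g p := fun p hp => DFunLike.congr_fun hG ⟨p, hp⟩
  have GA : ∀ p ∈ A, G p = 1 := fun p hp => (hGg p (Or.inl (Or.inl hp))).trans (gA p hp)
  have GB : ∀ p ∈ B, G p = 0 := fun p hp => (hGg p (Or.inl (Or.inr hp))).trans (gB p hp)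
  have GP : ∀ t, G (t, t ^ 2) = χ t := fun t => (hGg (t, t ^ 2) (Or.inr rfl)).trans (gP _ rfl)
  have exp_ε : Circle.exp (ε * (2 * Real.pi)) = 1 := by
    rcases hε with rfl | rfl
    · rw [one_mul, Circle.exp_two_pi]
    · rw [neg_one_mul, Circle.exp_neg, Circle.exp_two_pi, inv_one]
  have one_of : ∀ p, G p = 0 ∨ G p = 1 → Circle.exp (ε * (2 * Real.pi) * G p) = 1 := by
    rintro p (h | h)
    · rw [h, mul_zero, Circle.exp_zero]
    · rw [h, mul_one, exp_ε]
  refine ⟨fun p => Circle.exp (ε * (2 * Real.pi) * G p), by fun_prop, ?_, ?_, ?_, ?_, ?_⟩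
  · intro p hp
    by_cases hpA : p ∈ A
    · exact Or.inl (one_of p (Or.inr (GA p hpA)))
    by_cases hpB : p ∈ B
    · exact Or.inl (one_of p (Or.inl (GB p hpB)))
    right
    have h1 : 0 < chordFun (y, z) p := not_le.1 fun h => hpA ⟨hp.1, h⟩
    have h2 : chordFun (x, w) p < 0 := not_le.1 fun h => hpB ⟨hp.1, h⟩
    have hc : ContinuousOn (fun l : ℝ => chordFun (x + l * (y - x), w - l * (w - z)) p)
        (Set.Icc 0 1) := by
      unfold chordFun; fun_prop
    obtain ⟨l, hl, hl0⟩ := intermediate_value_Icc zero_le_one hc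
      (show (0 : ℝ) ∈ _ from ⟨by simpa using h2.le, by simpa using h1.le⟩)
    refine ⟨x + l * (y - x), ⟨?_, ?_⟩, w - l * (w - z), ⟨?_, ?_⟩, hl0⟩ <;>
      nlinarith [hl.1, hl.2]
  · intro t ht
    beta_reduce
    rw [GP]
    simp only [χ]
    rw [e₁ t ht, l₂ t (ht.2.trans hyz), hz, sub_zero]
  · intro t ht
    beta_reduce
    rw [GP]
    simp only [χ]
    rw [e₂ t ht, r₁ t (hyz.trans ht.1), hy, mul_sub, mul_one, Circle.exp_sub, exp_ε, one_div,
      ← Circle.exp_neg]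
    ring_nf
  · intro t h1 h2
    refine one_of _ ?_
    rw [GP]
    rcases le_or_gt t x with h | h
    · exact Or.inl (χlow t h)
    rcases lt_or_ge t y with h' | h'
    · exact absurd ⟨h, h'⟩ h1
    rcases le_or_gt t z with h'' | h''
    · exact Or.inr (χmid t h' h'')
    rcases lt_or_ge t w with h3 | h3
    · exact absurd ⟨h'', h3⟩ h2
    · exact Or.inl (χhigh t h3)
  · intro p hp h
    refine one_of p (Or.inl (GB p ⟨hp.1, ?_⟩))
    have h1 := chordFun_zero_fst (show a ≤ b by linarith) hp.1 h
    simp only [Set.mem_ofPred_eq, chordFun] at h h1 ⊢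
    rcases le_or_gt p.1 x with h3 | h3
    · nlinarith
    rcases le_or_gt p.1 w with h4 | h4
    · nlinarith
    · nlinarith

theorem ChordSystem.of_closure {X : Type*} [MetricSpace X] {a b : ℝ} (hab : a ≤ b) {q : ℝ → X}
    {C : Set (ℝ × ℝ)} (hq : ContinuousOn q (Set.Icc a b))
    (hmem : ∀ c ∈ C, a ≤ c.1 ∧ c.1 ≤ c.2 ∧ c.2 ≤ b) (hdiag : ∀ t ∈ Set.Icc a b, (t, t) ∈ C)
    (houter : (a, b) ∈ C) (heq : ∀ c ∈ C, q c.1 = q c.2)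
    (hcross : ∀ c ∈ C, ∀ c' ∈ C, c.1 < c'.1 → c'.1 < c.2 → c.2 < c'.2 → q c.1 = q c'.1) :
    ChordSystem a b q (closure C) := by
  have hmem' : ∀ c ∈ closure C, a ≤ c.1 ∧ c.1 ≤ c.2 ∧ c.2 ≤ b := by
    refine closure_minimal hmem (IsClosed.and ?_ (IsClosed.and ?_ ?_))
    · exact isClosed_le continuous_const continuous_fst
    · exact isClosed_le continuous_fst continuous_snd
    · exact isClosed_le continuous_snd continuous_const
  obtain ⟨r, hr, hrq⟩ : ∃ r : ℝ → X, Continuous r ∧ ∀ t ∈ Set.Icc a b, r t = q t :=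
    ⟨_, hq.domRestrict.Icc_extend', fun t ht => Set.IccExtend_of_mem hab _ ht⟩
  have hr1 : ∀ c ∈ closure C, r c.1 = q c.1 := fun c hc =>
    hrq _ ⟨(hmem' c hc).1, (hmem' c hc).2.1.trans (hmem' c hc).2.2⟩
  have hr2 : ∀ c ∈ closure C, r c.2 = q c.2 := fun c hc =>
    hrq _ ⟨(hmem' c hc).1.trans (hmem' c hc).2.1, (hmem' c hc).2.2⟩
  have hC := subset_closure (s := C)
  refine ⟨isClosed_closure, hmem', fun t ht => hC (hdiag t ht), hC houter, ?_, ?_, hq⟩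
  · intro c hc
    rw [← hr1 c hc, ← hr2 c hc]
    refine closure_minimal (t := {c : ℝ × ℝ | r c.1 = r c.2}) ?_
      (isClosed_eq (by fun_prop) (by fun_prop)) hc
    intro c hc
    show r c.1 = r c.2
    rw [hr1 c (hC hc), hr2 c (hC hc)]
    exact heq c hc
  · intro c hc c' hc' h1 h2 h3
    by_contra hne
    rw [← hr1 c hc, ← hr1 c' hc'] at hne
    have ho : IsOpen {e : (ℝ × ℝ) × (ℝ × ℝ) | (e.1.1 < e.2.1 ∧ e.2.1 < e.1.2) ∧
        (e.1.2 < e.2.2 ∧ r e.1.1 ≠ r e.2.1)} :=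
      ((isOpen_lt (by fun_prop) (by fun_prop)).and (isOpen_lt (by fun_prop) (by fun_prop))).and
        ((isOpen_lt (by fun_prop) (by fun_prop)).and (isOpen_ne_fun (by fun_prop) (by fun_prop)))
    have hcc : (c, c') ∈ closure (C ×ˢ C) := by
      rw [closure_prod_eq]
      exact ⟨hc, hc'⟩
    obtain ⟨⟨e, e'⟩, ⟨⟨h4, h5⟩, h6, h7⟩, he, he'⟩ :=
      mem_closure_iff.1 hcc _ ho ⟨⟨h1, h2⟩, h3, hne⟩
    refine h7 ?_
    show r e.1 = r e'.1
    rw [hr1 e (hC he), hr1 e' (hC he')]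
    exact hcross e he e' he' h4 h5 h6

/-- The chords prescribed by a noncrossing pairing `σ` of disjoint intervals. -/
def pairingChords {ι : Type*} [LinearOrder ι] (a b : ℝ) (σ : ι → ι) (u v : ι → ℝ) :
    Set (ℝ × ℝ) :=
  {c | (c.1 = c.2 ∧ a ≤ c.1 ∧ c.1 ≤ b) ∨ c = (a, b) ∨
    ∃ i, i < σ i ∧ c.1 ∈ Set.Icc (u i) (v i) ∧ c.2 ∈ Set.Icc (u (σ i)) (v (σ i))}

theorem chordSystem_pairingChords {X ι : Type*} [MetricSpace X] [LinearOrder ι] {a b : ℝ}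
    (hab : a ≤ b) {q : ℝ → X} {σ : ι → ι} {u v : ι → ℝ} (hq : ContinuousOn q (Set.Icc a b))
    (hqab : q a = q b) (huv : ∀ i, a ≤ u i ∧ u i < v i ∧ v i ≤ b)
    (hlt : ∀ i j, i < j → v i ≤ u j) (hσ : ∀ i, σ (σ i) = i)
    (hnc : ∀ i j, i < j → j < σ i → ¬σ i < σ j) (y : ι → X) (hy : ∀ i, y (σ i) = y i)
    (hqy : ∀ i, ∀ t ∈ Set.Icc (u i) (v i), q t = y i) :
    ChordSystem a b q (closure (pairingChords a b σ u v)) := by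
  have hmem : ∀ c ∈ pairingChords a b σ u v, a ≤ c.1 ∧ c.1 ≤ c.2 ∧ c.2 ≤ b := by
    rintro c (⟨h1, h2, h3⟩ | rfl | ⟨i, h1, h2, h3⟩)
    · exact ⟨h2, h1.le, h1 ▸ h3⟩
    · exact ⟨le_rfl, hab, le_rfl⟩
    · exact ⟨(huv i).1.trans h2.1, (h2.2.trans (hlt i _ h1)).trans h3.1,
        h3.2.trans (huv (σ i)).2.2⟩
  refine ChordSystem.of_closure hab hq hmem (fun t ht => Or.inl ⟨rfl, ht⟩) (Or.inr (Or.inl rfl))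
    ?_ ?_
  · rintro c (⟨h1, -⟩ | rfl | ⟨i, h1, h2, h3⟩)
    · rw [h1]
    · exact hqab
    · rw [hqy i _ h2, hqy _ _ h3, hy]
  · intro c hc c' hc' h1 h2 h3
    have hm := hmem c hc
    have hm' := hmem c' hc'
    rcases hc with ⟨h4, -⟩ | rfl | ⟨i, h4, h5, h6⟩
    · exact absurd h4 (h1.trans h2).ne
    · exact absurd h3 hm'.2.2.not_gt
    rcases hc' with ⟨h7, -⟩ | rfl | ⟨j, h7, h8, h9⟩
    · exact absurd h7 (h2.trans h3).ne
    · exact absurd h1 hm.1.not_gt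
    rcases lt_trichotomy i j with hij | rfl | hij
    · exfalso
      rcases lt_trichotomy j (σ i) with hj | rfl | hj
      · rcases lt_trichotomy (σ i) (σ j) with hs | hs | hs
        · exact hnc i j hij hj hs
        · have := congrArg σ hs
          rw [hσ, hσ] at this
          exact hij.ne this
        · exact (((h9.2.trans (hlt _ _ hs)).trans h6.1).trans_lt h3).false
      · rw [hσ] at h7
        exact (hij.trans h7).false
      · exact (((h6.2.trans (hlt _ _ hj)).trans h8.1).trans_lt h2).false
    · rw [hqy i _ h5, hqy i _ h8]
    · exact absurd h1 ((h8.2.trans (hlt _ _ hij)).trans h5.1).not_gt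

theorem Realizes.exists_winding {X : Type*} [MetricSpace X] {d : ℕ+ → X} {f : ℝ → ESp X d}
    {a b : ℝ} {W : InfWord ℕ+} {u v : W.ι → ℝ} (h : Realizes d f a b W u v) (i : W.ι) :
    ∃ φ : ℝ → ℝ, ContinuousOn φ (Set.Icc (u i) (v i)) ∧ φ (u i) = 0 ∧ φ (v i) = 1 ∧
      ∀ t ∈ Set.Icc (u i) (v i), (f t).pt = (d (W.letter i).1,
        Circle.exp ((if (W.letter i).2 then 1 else -1) * (2 * Real.pi) * φ t)) := by
  have hi := h.2.2.1 i
  split_ifs at hi with hs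
  · obtain ⟨φ, h1, -, h2, h3, h4⟩ := hi
    exact ⟨φ, h1, h2, h3, fun t ht => by rw [h4 t ht, if_pos hs, one_mul]⟩
  · obtain ⟨φ, h1, -, h2, h3, h4⟩ := hi
    exact ⟨φ, h1, h2, h3, fun t ht => by rw [h4 t ht, if_neg hs, neg_one_mul]⟩

/-- The windings around one attached circle, read off from a path whose word is equivalent to the
empty word, extend over the lens so that they are trivial off the strips of the pairing. -/
theorem exists_circle_extension {X : Type*} [MetricSpace X] {d : ℕ+ → X}
    (hd : Function.Injective d) {f : ℝ → ESp X d} {a b : ℝ} {W : InfWord ℕ+} {u v : W.ι → ℝ}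
    (hreal : Realizes d f a b W u v) {σ : W.ι → W.ι}
    (hσ : ∀ i, σ (σ i) = i ∧ (W.letter (σ i)).1 = (W.letter i).1 ∧
      (W.letter (σ i)).2 = !(W.letter i).2) (n : ℕ+) :
    ∃ θ : ℝ × ℝ → Circle, Continuous θ ∧
      (∀ p ∈ lens a b, θ p ≠ 1 → ∃ i, (W.letter i).1 = n ∧ i < σ i ∧
        ∃ c : ℝ × ℝ, c.1 ∈ Set.Icc (u i) (v i) ∧ c.2 ∈ Set.Icc (u (σ i)) (v (σ i)) ∧
          chordFun c p = 0) ∧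
      (∀ t ∈ Set.Icc a b, (f t).pt.1 = d n → θ (t, t ^ 2) = (f t).pt.2) ∧
      ∀ p ∈ lens a b, chordFun (a, b) p = 0 → θ p = 1 := by
  obtain ⟨huv, hlt, -, hInX⟩ := id hreal
  choose φ φc φu φv hφ using hreal.exists_winding
  let ε : W.ι → ℝ := fun i => if (W.letter i).2 then 1 else -1
  have hε : ∀ i, ε i = 1 ∨ ε i = -1 := fun i => by
    simp only [ε]; split_ifs <;> simp
  have hεσ : ∀ i, -ε (σ i) = ε i := fun i => by
    simp only [ε]
    rw [(hσ i).2.2]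
    cases (W.letter i).2 <;> simp
  have hstrip := fun i (hi : i < σ i) => exists_strip (huv i).1 (huv i).2.1 (hlt i _ hi)
    (huv (σ i)).2.1 (huv (σ i)).2.2 (hε i) (φc i) (φu i) (φv i) (φc (σ i)) (φu (σ i)) (φv (σ i))
  choose! Θ Θc Θlens Θ₁ Θ₂ Θout Θtop using hstrip
  let P : Finset W.ι := {i ∈ (W.finOcc n).toFinset | i < σ i}
  have hP : ∀ i, i ∈ P ↔ (W.letter i).1 = n ∧ i < σ i := fun i => by simp [P]
  have huniq : ∀ t, ∀ i j, t ∈ Set.Ioo (u i) (v i) → t ∈ Set.Ioo (u j) (v j) → i = j := by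
    intro t i j hi hj
    rcases lt_trichotomy i j with h | h | h
    · exact absurd ((hi.2.trans_le (hlt i j h)).trans hj.1) (lt_irrefl t)
    · exact h
    · exact absurd ((hj.2.trans_le (hlt j i h)).trans hi.1) (lt_irrefl t)
  refine ⟨fun p => ∏ i ∈ P, Θ i p, ?_, ?_, ?_, ?_⟩
  · exact continuous_finsetProd _ fun i hi => Θc i ((hP i).1 hi).2
  · intro p hp hne
    obtain ⟨i, hi, hne⟩ := Finset.exists_ne_one_of_prod_ne_one hne
    obtain ⟨hn, hi⟩ := (hP i).1 hi
    obtain ⟨s, hs, s', hs', h⟩ := (Θlens i hi p hp).resolve_left hne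
    exact ⟨i, hn, hi, (s, s'), hs, hs', h⟩
  · intro t ht hn
    beta_reduce
    by_cases hin : InX (f t)
    · rw [show (f t).pt.2 = 1 from hin]
      have := (hInX t ht).1 hin
      exact Finset.prod_eq_one fun i hi => Θout i ((hP i).1 hi).2 t (this i) (this (σ i))
    · rw [hInX t ht] at hin
      push Not at hin
      obtain ⟨k, hk⟩ := hin
      have hk' := Set.Ioo_subset_Icc_self hk
      have hpt := hφ k t hk'
      have hkn : (W.letter k).1 = n := hd (by rw [← hn, hpt])
      have hother : ∀ i ∈ P, i ≠ k → σ i ≠ k → Θ i (t, t ^ 2) = 1 := fun i hi h1 h2 =>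
        Θout i ((hP i).1 hi).2 t (fun h => h1 (huniq t _ _ h hk)) fun h => h2 (huniq t _ _ h hk)
      rw [hpt]
      rcases lt_trichotomy k (σ k) with h | h | h
      · rw [Finset.prod_eq_single k, Θ₁ k h t hk']
        · intro i hi hik
          refine hother i hi hik ?_
          rintro rfl
          rw [(hσ i).1] at h
          exact (h.trans ((hP i).1 hi).2).false
        · exact fun hk => absurd ((hP k).2 ⟨hkn, h⟩) hk
      · have := (hσ k).2.2
        rw [← h] at this
        simp at this
      · have h' : σ k < σ (σ k) := by rwa [(hσ k).1]
        have h2 := Θ₂ (σ k) h' t (by rwa [(hσ k).1])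
        rw [hεσ, (hσ k).1] at h2
        rw [Finset.prod_eq_single (σ k), h2]
        · intro i hi hik
          refine hother i hi ?_ ?_
          · rintro rfl
            exact (h.trans ((hP i).1 hi).2).false
          · rintro rfl
            exact hik (hσ i).1.symm
        · exact fun hk => absurd ((hP (σ k)).2 ⟨(hσ k).2.1.trans hkn, h'⟩) hk
  · exact fun p hp h => Finset.prod_eq_one fun i hi => Θtop i ((hP i).1 hi).2 p hp h

theorem ESp.ext_pt {X : Type*} [MetricSpace X] {d : ℕ+ → X} {p q : ESp X d} (h : p.pt = q.pt) :
    p = q := by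
  cases p; cases q; cases h; rfl

/-- Maps into the base and into each attached circle glue to a map into the earring space. -/
theorem exists_glue {X Y : Type*} [MetricSpace X] {d : ℕ+ → X} (hd : Function.Injective d)
    (K : Y → X) (θ : ℕ+ → Y → Circle) : ∃ H : Y → ESp X d, ∀ y, (H y).pt.1 = K y ∧
      (∀ n, K y = d n → (H y).pt.2 = θ n y) ∧ ((∀ n, K y ≠ d n) → (H y).pt.2 = 1) := by
  have (y : Y) : ∃ p : ESp X d, p.pt.1 = K y ∧ (∀ n, K y = d n → p.pt.2 = θ n y) ∧
      ((∀ n, K y ≠ d n) → p.pt.2 = 1) := by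
    by_cases h : ∃ n, K y = d n
    · obtain ⟨n, hn⟩ := h
      exact ⟨⟨(K y, θ n y), Or.inr ⟨n, hn⟩⟩, rfl, fun m hm =>
        hd (hn.symm.trans hm) ▸ rfl,
        fun h => absurd hn (h n)⟩
    · exact ⟨emb d (K y), rfl, fun n hn => absurd ⟨n, hn⟩ h, fun _ => rfl⟩
  choose H hH using this
  exact ⟨H, hH⟩

/-- Let `X` be simply connected and locally simply connected, `D` countable dense.  If the
word `W^f` of a proper loop `f` in `E(X,D)` based at a point of `X` is equivalent to the
empty word, then `f` is null-homotopic. -/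
theorem proper_loop_nullhomotopic {X : Type*} [MetricSpace X]
    (d : ℕ+ → X) (hd : Function.Injective d) (hdense : DenseRange d)
    [SimplyConnectedSpace X] (hlsc : LocSimplyConnected X)
    (f : ℝ → ESp X d) (a b : ℝ) (hab : a < b) (hloop : f a = f b)
    (hf : IsProper d f a b)
    (W : InfWord ℕ+) (u v : W.ι → ℝ) (hreal : Realizes d f a b W u v)
    (hnull : W.IsNull) :
    HtpyRel d f (fun _ => f a) a b := by
  obtain ⟨hfc, hfa, hfb, -⟩ := hf
  obtain ⟨σ, hσ, hnc⟩ := hnull.exists_pairing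
  obtain ⟨huv, hlt, -, -⟩ := id hreal
  have hq : ContinuousOn (fun t => (f t).pt.1) (Set.Icc a b) :=
    continuous_pt_fst.comp_continuousOn hfc
  have hqI : ∀ i, ∀ t ∈ Set.Icc (u i) (v i), (f t).pt.1 = d (W.letter i).1 := by
    intro i t ht
    obtain ⟨φ, -, -, -, hφ⟩ := hreal.exists_winding i
    rw [hφ t ht]
  have hC := chordSystem_pairingChords hab.le hq (by simp only [hloop]) huv hlt
    (fun i => (hσ i).1) hnc (fun i => d (W.letter i).1) (fun i => by rw [(hσ i).2.1]) hqI
  obtain ⟨K, hKc, hK⟩ := hC.exists_extension hlsc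
  choose θ θc θlens θpar θtop using exists_circle_extension hd hreal hσ
  obtain ⟨G, hG⟩ := exists_glue hd K θ
  have hGc : ContinuousOn G (lens a b) := by
    refine continuousOn_of_fst_of_circle (θ := θ) hd (hKc.congr fun p _ => (hG p).1)
      (fun n => (θc n).continuousOn) (fun n p _ h => (hG p).2.1 n ((hG p).1.symm.trans h)) ?_
    intro n p hp hne
    by_contra h
    obtain ⟨i, hin, hi, c, hc1, hc2, hc⟩ := θlens n p hp h
    rw [(hG p).1, hK p hp c (subset_closure (Or.inr (Or.inr ⟨i, hi, hc1, hc2⟩))) hc,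
      hqI i _ hc1, hin] at hne
    exact hne rfl
  have hGpar : ∀ t ∈ Set.Icc a b, (t, t ^ 2) ∈ lens a b → G (t, t ^ 2) = f t := by
    intro t ht hl
    have hKt : K (t, t ^ 2) = (f t).pt.1 :=
      hK _ hl (t, t) (hC.diag t ht) (by simp only [chordFun]; ring)
    refine ESp.ext_pt (Prod.ext ((hG _).1.trans hKt) ?_)
    by_cases h : ∃ n, (f t).pt.1 = d n
    · obtain ⟨n, hn⟩ := h
      rw [(hG _).2.1 n (hKt.trans hn), θpar n t ht hn]
    · rw [(hG _).2.2 fun n hn => h ⟨n, hKt.symm.trans hn⟩, (f t).mem.resolve_right h]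
  have hGtop : ∀ p ∈ lens a b, chordFun (a, b) p = 0 → G p = f a := by
    intro p hp hc
    have hKp : K p = (f a).pt.1 := hK p hp (a, b) hC.outer hc
    refine ESp.ext_pt (Prod.ext ((hG _).1.trans hKp) ?_)
    rw [show (f a).pt.2 = 1 from hfa]
    by_cases h : ∃ n, K p = d n
    · obtain ⟨n, hn⟩ := h
      rw [(hG _).2.1 n hn, θtop n p hp hc]
    · exact (hG _).2.2 fun n hn => h ⟨n, hn⟩
  have hmaps : ∀ p ∈ Set.Icc a b ×ˢ Set.Icc (0 : ℝ) 1,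
      (p.1, (1 - p.2) * p.1 ^ 2 + p.2 * ((a + b) * p.1 - a * b)) ∈ lens a b := by
    rintro ⟨s, t⟩ ⟨hs, ht⟩
    have h1 := mul_nonneg (sub_nonneg.2 hs.1) (sub_nonneg.2 hs.2)
    refine ⟨?_, ?_⟩ <;> nlinarith [mul_nonneg ht.1 h1, mul_nonneg (sub_nonneg.2 ht.2) h1]
  have h0 : (0 : ℝ) ∈ Set.Icc (0 : ℝ) 1 := ⟨le_rfl, zero_le_one⟩
  have h1 : (1 : ℝ) ∈ Set.Icc (0 : ℝ) 1 := ⟨zero_le_one, le_rfl⟩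
  have ha : a ∈ Set.Icc a b := ⟨le_rfl, hab.le⟩
  have hb : b ∈ Set.Icc a b := ⟨hab.le, le_rfl⟩
  refine ⟨fun p => G (p.1, (1 - p.2) * p.1 ^ 2 + p.2 * ((a + b) * p.1 - a * b)),
    hGc.comp (by fun_prop) hmaps, fun s hs => ⟨?_, ?_⟩, fun t ht => ⟨?_, ?_⟩⟩
  · have h := hmaps (s, 0) ⟨hs, h0⟩
    have e : (1 - 0) * s ^ 2 + 0 * ((a + b) * s - a * b) = s ^ 2 := by ring
    simp only [e] at h ⊢
    exact hGpar s hs h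
  · exact hGtop _ (hmaps (s, 1) ⟨hs, h1⟩) (by simp only [chordFun]; ring)
  · have h := hmaps (a, t) ⟨ha, ht⟩
    have e : (1 - t) * a ^ 2 + t * ((a + b) * a - a * b) = a ^ 2 := by ring
    simp only [e] at h ⊢
    exact hGpar a ha h
  · have h := hmaps (b, t) ⟨hb, ht⟩
    have e : (1 - t) * b ^ 2 + t * ((a + b) * b - a * b) = b ^ 2 := by ring
    simp only [e] at h ⊢
    exact hGpar b hb h

end EarringPaper
end
end
end

section
/- The free σ-product ⨉^σ_{d∈D} ℤ_d (equivalently, the Hawaiian earring group π₁(H)) contains no subgroup isomorphic to the additive group of rationals ℚ, since every nonzero abelian subgroup of ⨉^σ_{d∈D} ℤ_d is isomorphic to ℤ. -/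
/-! Every nontrivial abelian subgroup of the Hawaiian earring group (equivalently, of the
free σ-product `⨉^σ_{d∈D} ℤ_d`) is infinite cyclic; in particular no subgroup of the
Hawaiian earring group is isomorphic to `ℚ`. -/

noncomputable section

namespace EarringPaper

/-- The Hawaiian earring `H = ⋃_{n ≥ 1} C_n ⊆ ℝ²`, `C_n` the circle of radius `1/n`
centered at `(-1/n, 0)`. -/
def HEset : Set (ℝ × ℝ) :=
  {p | ∃ n : ℕ+, (p.1 + 1 / (n : ℝ)) ^ 2 + p.2 ^ 2 = (1 / (n : ℝ)) ^ 2}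

/-- The wild point (origin) of the Hawaiian earring. -/
def h0 : HEset := ⟨(0, 0), 1, by norm_num⟩

section Development

open Topology Set


variable {X G Z Z' : Type*} [Group G] [TopologicalSpace Z] [TopologicalSpace Z']

/-- `δ : Z → G` is a development of `γ : Z → X` with respect to the local increments
`E : X → X → G`. -/
def IsDev (E : X → X → G) (γ : Z → X) (δ : Z → G) : Prop :=
  ∀ z₀, ∀ᶠ z in 𝓝 z₀, δ z = E (γ z₀) (γ z) * δ z₀

theorem IsDev.comp {E : X → X → G} {γ : Z → X} {δ : Z → G} (h : IsDev E γ δ)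
    {u : Z' → Z} (hu : Continuous u) : IsDev E (γ ∘ u) (δ ∘ u) :=
  fun z₀ => hu.continuousAt.eventually (h (u z₀))

theorem IsDev.mul_right {E : X → X → G} {γ : Z → X} {δ : Z → G} (h : IsDev E γ δ) (g : G) :
    IsDev E γ (fun z => δ z * g) := by
  intro z₀
  filter_upwards [h z₀] with z hz
  rw [hz, mul_assoc]

theorem IsDev.map {G' : Type*} [Group G'] {E : X → X → G} {γ : Z → X} {δ : Z → G}
    (h : IsDev E γ δ) (f : G →* G') : IsDev (fun p q => f (E p q)) γ (fun z => f (δ z)) := by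
  intro z₀
  filter_upwards [h z₀] with z hz
  rw [hz, map_mul]

theorem eq_of_eventually_eq [PreconnectedSpace Z] {Y : Type*} {f : Z → Y}
    (h : ∀ z₀, ∀ᶠ z in 𝓝 z₀, f z = f z₀) (x y : Z) : f x = f y :=
  ((IsLocallyConstant.iff_eventually_eq f).2 h).apply_eq_of_preconnectedSpace x y

theorem IsDev.unique [PreconnectedSpace Z] {E : X → X → G} {γ : Z → X} {δ δ' : Z → G}
    (h : IsDev E γ δ) (h' : IsDev E γ δ') {z₀ : Z} (h0 : δ z₀ = δ' z₀) : δ = δ' := by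
  have key : ∀ z, (δ z)⁻¹ * δ' z = (δ z₀)⁻¹ * δ' z₀ := fun z => by
    refine eq_of_eventually_eq (f := fun z => (δ z)⁻¹ * δ' z) (fun z₁ => ?_) z z₀
    filter_upwards [h z₁, h' z₁] with w hw hw'
    simp [hw, hw', mul_assoc]
  funext z
  have := key z
  rw [h0, inv_mul_cancel, inv_mul_eq_one] at this
  exact this

theorem IsDev.const [PreconnectedSpace Z] {E : X → X → G} {γ : Z → X} {δ : Z → G}
    (h : IsDev E γ δ) {x : X} (hE : E x x = 1) (hγ : ∀ z, γ z = x) (z w : Z) : δ z = δ w :=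
  eq_of_eventually_eq (fun z₀ => by
    filter_upwards [h z₀] with z hz
    rw [hz, hγ, hγ, hE, one_mul]) z w

/-- `E : X → X → G` is locally multiplicative: every point `p` has an open neighbourhood `U p`
on which `E` satisfies the local cocycle rule. -/
structure IsLocalCocycle [TopologicalSpace X] (E : X → X → G) (U : X → Set X) : Prop where
  isOpen : ∀ p, IsOpen (U p)
  mem : ∀ p, p ∈ U p
  self : ∀ p, E p p = 1
  mul : ∀ p, ∀ q₀ ∈ U p, ∀ᶠ q in 𝓝 q₀, E p q = E q₀ q * E p q₀

/-- The bundle of germs of developments. -/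
def IsLocalCocycle.bundle [TopologicalSpace X] [TopologicalSpace G] [DiscreteTopology G] {E : X → X → G}
    {U : X → Set X} (h : IsLocalCocycle E U) : FiberBundleCore X X G where
  baseSet := U
  isOpen_baseSet := h.isOpen
  indexAt := id
  mem_baseSet_at := h.mem
  coordChange p p' q v := (E p' q)⁻¹ * E p q * v
  coordChange_self p q _ v := by simp
  continuousOn_coordChange p p' := by
    rintro ⟨q₀, v₀⟩ ⟨⟨hq, hq'⟩, -⟩
    refine ContinuousAt.continuousWithinAt ?_
    have hev : ∀ᶠ y : X × G in 𝓝 (q₀, v₀),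
        (E p' y.1)⁻¹ * E p y.1 * y.2 = (E p' q₀)⁻¹ * E p q₀ * v₀ := by
      rw [nhds_prod_eq]
      have h2 : ∀ᶠ v in 𝓝 v₀, v = v₀ := by simp
      filter_upwards [((h.mul p q₀ hq).and (h.mul p' q₀ hq')).prod_mk h2] with y hy
      obtain ⟨⟨h1, h2⟩, h3⟩ := hy
      rw [h1, h2, h3]
      group
    exact (continuousAt_const (y := (E p' q₀)⁻¹ * E p q₀ * v₀)).congr
      (hev.mono fun _ h => h.symm)
  coordChange_comp i j k q _ v := by group

theorem IsLocalCocycle.exists_isDev [TopologicalSpace X] [SimplyConnectedSpace Z] [LocallyPathConnectedSpace Z]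
    {E : X → X → G} {U : X → Set X} (h : IsLocalCocycle E U) (γ : C(Z, X)) (z₀ : Z) :
    ∃ δ : Z → G, IsDev E γ δ ∧ δ z₀ = 1 := by
  let _ : TopologicalSpace G := ⊥
  have : DiscreteTopology G := ⟨rfl⟩
  let B := h.bundle
  have cov : IsCoveringMap (Bundle.TotalSpace.proj : Bundle.TotalSpace G B.Fiber → X) :=
    FiberBundle.isCoveringMap (F := G) (E := B.Fiber)
  obtain ⟨F, ⟨hF0, hF⟩, -⟩ := cov.existsUnique_continuousMap_lifts γ z₀ ⟨γ z₀, (1 : G)⟩ rfl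
  have hproj : ∀ z, (F z).1 = γ z := fun z => congrFun hF z
  let δ : Z → G := fun z => (F z).2
  have hδ0 : δ z₀ = 1 :=
    congrArg (fun e : Bundle.TotalSpace G B.Fiber => (show G from e.2)) hF0
  refine ⟨δ, fun z₁ => ?_, hδ0⟩
  have hc : ContinuousAt (fun z => (B.localTriv (γ z₁) (F z)).2) z₁ := by
    refine continuousAt_snd.comp (ContinuousAt.comp ?_ F.continuous.continuousAt)
    refine (B.localTriv (γ z₁)).continuousAt ?_
    rw [B.mem_localTriv_source, ← B.baseSet_at, hproj]
    exact h.mem _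
  have hev := hc.eventually (show ∀ᶠ v in 𝓝 (B.localTriv (γ z₁) (F z₁)).2,
    v = (B.localTriv (γ z₁) (F z₁)).2 by simp)
  filter_upwards [hev] with z hz
  have hz' : (E (γ z₁) (F z).1)⁻¹ * E (F z).1 (F z).1 * δ z =
    (E (γ z₁) (F z₁).1)⁻¹ * E (F z₁).1 (F z₁).1 * δ z₁ := hz
  rw [h.self, h.self, hproj, hproj, h.self, mul_one, mul_one, inv_one, one_mul,
    inv_mul_eq_iff_eq_mul] at hz'
  exact hz'

end Development

section DevHom

open Topology Set unitInterval


variable {X G : Type*} [TopologicalSpace X] [Group G] {E : X → X → G} {U : X → Set X}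

theorem IsLocalCocycle.exists_isDev_path (h : IsLocalCocycle E U) {x y : X} (γ : Path x y) :
    ∃ δ : I → G, IsDev E γ δ ∧ δ 0 = 1 := by
  obtain ⟨δ, hδ, h0⟩ := h.exists_isDev γ.extend 0
  refine ⟨fun t => δ t, ?_, by simpa using h0⟩
  have := hδ.comp (u := fun t : I => (t : ℝ)) continuous_subtype_val
  have e : (⇑γ.extend ∘ fun t : I => (t : ℝ)) = γ := by
    funext t; simp
  rwa [e] at this

/-- The terminal value of the development of a path, started at `1`. -/
def IsLocalCocycle.endpoint (h : IsLocalCocycle E U) {x y : X} (γ : Path x y) : G :=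
  (h.exists_isDev_path γ).choose 1

theorem IsLocalCocycle.endpoint_eq (h : IsLocalCocycle E U) {x y : X} (γ : Path x y)
    {δ : I → G} (hδ : IsDev E γ δ) (h0 : δ 0 = 1) : h.endpoint γ = δ 1 :=
  congrFun ((h.exists_isDev_path γ).choose_spec.1.unique hδ
    ((h.exists_isDev_path γ).choose_spec.2.trans h0.symm)) 1

theorem IsLocalCocycle.endpoint_homotopic (h : IsLocalCocycle E U) {x y : X} {γ γ' : Path x y}
    (hom : γ.Homotopic γ') : h.endpoint γ = h.endpoint γ' := by
  obtain ⟨F⟩ := hom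
  let F' : C(ℝ × ℝ, X) := ⟨fun p => F (projIcc 0 1 zero_le_one p.1, projIcc 0 1 zero_le_one p.2),
    F.continuous.comp ((continuous_projIcc.comp continuous_fst).prodMk
      (continuous_projIcc.comp continuous_snd))⟩
  obtain ⟨Δ, hΔ, h0⟩ := h.exists_isDev F' (0, 0)
  have hF' : ∀ s t : I, F' (s, t) = F (s, t) := fun s t => by simp [F']
  have hΔ0 := hΔ.comp (u := fun t : I => ((0 : ℝ), (t : ℝ))) (by fun_prop)
  have hΔ1 := hΔ.comp (u := fun t : I => ((1 : ℝ), (t : ℝ))) (by fun_prop)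
  have hΔs := hΔ.comp (u := fun s : I => ((s : ℝ), (0 : ℝ))) (by fun_prop)
  have hΔe := hΔ.comp (u := fun s : I => ((s : ℝ), (1 : ℝ))) (by fun_prop)
  have e0 : (F' ∘ fun t : I => ((0 : ℝ), (t : ℝ))) = γ := by
    funext t; simpa using hF' 0 t
  have e1 : (F' ∘ fun t : I => ((1 : ℝ), (t : ℝ))) = γ' := by
    funext t; simpa using hF' 1 t
  have hs := hΔs.const (h.self x) (fun s => by simpa using hF' s 0) 0 1
  have he := hΔe.const (h.self y) (fun s => by simpa using hF' s 1) 0 1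
  rw [e0] at hΔ0
  rw [e1] at hΔ1
  simp only [Function.comp_apply, Icc.coe_zero, Icc.coe_one] at hs he
  rw [h.endpoint_eq γ hΔ0 (by simpa using h0), h.endpoint_eq γ' hΔ1 (by simpa [← hs] using h0)]
  simpa using he

theorem IsLocalCocycle.endpoint_trans (h : IsLocalCocycle E U) {x y z : X} (γ : Path x y)
    (γ' : Path y z) : h.endpoint (γ.trans γ') = h.endpoint γ' * h.endpoint γ := by
  obtain ⟨δ, hδ, h0⟩ := h.exists_isDev_path (γ.trans γ')
  have h1 := hδ.comp (u := fun t : I => (⟨t / 2, by constructor <;> linarith [t.2.1, t.2.2]⟩ : I))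
    (by fun_prop)
  have h2 := hδ.comp
    (u := fun t : I => (⟨(t + 1) / 2, by constructor <;> linarith [t.2.1, t.2.2]⟩ : I))
    (by fun_prop)
  have e1 : (⇑(γ.trans γ') ∘ fun t : I =>
      (⟨t / 2, by constructor <;> linarith [t.2.1, t.2.2]⟩ : I)) = γ := by
    funext t
    simp only [Function.comp_apply, Path.trans_apply]
    rw [dif_pos (by linarith [t.2.2])]
    congr 1
    ext; simp; ring
  have e2 : (⇑(γ.trans γ') ∘ fun t : I =>
      (⟨(t + 1) / 2, by constructor <;> linarith [t.2.1, t.2.2]⟩ : I)) = γ' := by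
    funext t
    simp only [Function.comp_apply, Path.trans_apply]
    split_ifs with ht
    · have : t = 0 := Subtype.ext (le_antisymm (show (t : ℝ) ≤ 0 by linarith) t.2.1)
      subst this
      rw [γ'.source]
      convert γ.target
      simp
    · congr 1
      ext; simp; ring
  rw [e1] at h1
  rw [e2] at h2
  have h3 := h2.mul_right (δ ⟨1 / 2, by norm_num, by norm_num⟩)⁻¹
  rw [h.endpoint_eq γ h1 (by rw [← h0]; simp only [Function.comp_apply]; congr 1; ext; simp),
    h.endpoint_eq γ' h3 (by simp), h.endpoint_eq _ hδ h0]
  simp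

/-- The holonomy homomorphism of a local cocycle. -/
def IsLocalCocycle.holonomy (h : IsLocalCocycle E U) (x : X) : FundamentalGroup X x →* G :=
  MonoidHom.mk'
    (fun p => Quotient.lift (fun γ : Path x x => h.endpoint γ)
      (fun _ _ hom => h.endpoint_homotopic hom) p)
    (fun p q => by
      induction p using Quotient.inductionOn with | _ γ =>
      induction q using Quotient.inductionOn with | _ γ' =>
      exact h.endpoint_trans γ' γ)

end DevHom

section RealWords

open Topology Set


/-- The free product of countably many copies of the real line. -/
abbrev RealProd : Type := Monoid.CoprodI (fun _ : ℕ => Multiplicative ℝ)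

/-- A letter of a word with real exponents. -/
abbrev RealLetter : Type := Σ _ : ℕ, Multiplicative ℝ

/-- The total absolute exponent of the letter `j` in a list. -/
def wordLength : List RealLetter → ℕ → ℝ
  | [], _ => 0
  | ⟨k, a⟩ :: L, j => (if k = j then |a.toAdd| else 0) + wordLength L j

/-- The total exponent of the letter `j` in a list. -/
def wordSum : List RealLetter → ℕ → ℝ
  | [], _ => 0
  | ⟨k, a⟩ :: L, j => (if k = j then a.toAdd else 0) + wordSum L j

/-- The length of the common initial segment of `[0, a]` and `[0, b]`. -/
def overlap (a b : ℝ) : ℝ := (|a| + |b| - |a - b|) / 2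

open Classical in
/-- The length of the `j`-part of the common initial segment of two lists. -/
def wordCommon : List RealLetter → List RealLetter → ℕ → ℝ
  | ⟨k, a⟩ :: x, ⟨l, b⟩ :: y, j =>
    if k = l then
      if a = b then (if k = j then |a.toAdd| else 0) + wordCommon x y j
      else if k = j then overlap a.toAdd b.toAdd else 0
    else 0
  | [], _, _ => 0
  | _ :: _, [], _ => 0

/-- The length of the `j`-part of the tree geodesic between two lists. -/
def wordDist (x y : List RealLetter) (j : ℕ) : ℝ :=
  wordLength x j + wordLength y j - 2 * wordCommon x y j

theorem overlap_nonneg (a b : ℝ) : 0 ≤ overlap a b := by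
  unfold overlap; have := abs_sub a b; linarith

theorem overlap_comm (a b : ℝ) : overlap a b = overlap b a := by
  unfold overlap; rw [abs_sub_comm]; ring

theorem overlap_le_left (a b : ℝ) : overlap a b ≤ |a| := by
  unfold overlap; have := abs_sub_abs_le_abs_sub b a; rw [abs_sub_comm] at this; linarith

theorem overlap_ultra (a b c : ℝ) : overlap a b ≤ overlap a c ∨ overlap b c ≤ overlap a c := by
  unfold overlap
  rcases abs_cases a with ⟨h1, h1'⟩ | ⟨h1, h1'⟩ <;> rcases abs_cases b with ⟨h2, h2'⟩ | ⟨h2, h2'⟩ <;>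
  rcases abs_cases c with ⟨h3, h3'⟩ | ⟨h3, h3'⟩ <;>
  rcases abs_cases (a - b) with ⟨h4, h4'⟩ | ⟨h4, h4'⟩ <;>
  rcases abs_cases (b - c) with ⟨h5, h5'⟩ | ⟨h5, h5'⟩ <;>
  rcases abs_cases (a - c) with ⟨h6, h6'⟩ | ⟨h6, h6'⟩ <;>
  rw [h1, h2, h3, h4, h5, h6] <;>
  first
  | (left; linarith)
  | (right; linarith)

theorem wordLength_nonneg (x : List RealLetter) (j : ℕ) : 0 ≤ wordLength x j := by
  induction x with
  | nil => simp [wordLength]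
  | cons p x ih => obtain ⟨k, a⟩ := p; simp only [wordLength]; split_ifs <;> positivity

theorem abs_wordSum_le (x : List RealLetter) (j : ℕ) : |wordSum x j| ≤ wordLength x j := by
  induction x with
  | nil => simp [wordLength, wordSum]
  | cons p x ih =>
    obtain ⟨k, a⟩ := p
    simp only [wordLength, wordSum]
    refine (abs_add_le _ _).trans (add_le_add ?_ ih)
    split_ifs <;> simp

theorem wordLength_append (x y : List RealLetter) (j : ℕ) :
    wordLength (x ++ y) j = wordLength x j + wordLength y j := by
  induction x with
  | nil => simp [wordLength]
  | cons p x ih => obtain ⟨k, a⟩ := p; simp only [List.cons_append, wordLength, ih]; ring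

theorem wordSum_append (x y : List RealLetter) (j : ℕ) :
    wordSum (x ++ y) j = wordSum x j + wordSum y j := by
  induction x with
  | nil => simp [wordSum]
  | cons p x ih => obtain ⟨k, a⟩ := p; simp only [List.cons_append, wordSum, ih]; ring

theorem wordSum_reverse (x : List RealLetter) (j : ℕ) : wordSum x.reverse j = wordSum x j := by
  induction x with
  | nil => rfl
  | cons p x ih =>
    rw [List.reverse_cons, wordSum_append, ih]
    obtain ⟨k, a⟩ := p
    simp only [wordSum]; ring

theorem wordCommon_nil_right (x : List RealLetter) (j : ℕ) : wordCommon x [] j = 0 := by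
  cases x <;> rfl

theorem wordCommon_nonneg (x y : List RealLetter) (j : ℕ) : 0 ≤ wordCommon x y j := by
  induction x generalizing y with
  | nil => simp [wordCommon]
  | cons p x ih =>
    obtain ⟨k, a⟩ := p
    rcases y with _ | ⟨⟨l, b⟩, y⟩
    · simp [wordCommon]
    · simp only [wordCommon]
      split_ifs
      · exact add_nonneg (abs_nonneg _) (ih y)
      · exact add_nonneg le_rfl (ih y)
      · exact overlap_nonneg _ _
      · exact le_rfl
      · exact le_rfl

theorem wordCommon_comm (x y : List RealLetter) (j : ℕ) :
    wordCommon x y j = wordCommon y x j := by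
  induction x generalizing y with
  | nil => simp [wordCommon, wordCommon_nil_right]
  | cons p x ih =>
    obtain ⟨k, a⟩ := p
    rcases y with _ | ⟨⟨l, b⟩, y⟩
    · simp [wordCommon]
    · simp only [wordCommon]
      by_cases hkl : k = l
      · subst hkl
        by_cases hab : a = b
        · subst hab; simp [ih]
        · simp [hab, Ne.symm hab, overlap_comm a.toAdd]
      · simp [hkl, Ne.symm hkl]

theorem wordCommon_self (x : List RealLetter) (j : ℕ) : wordCommon x x j = wordLength x j := by
  induction x with
  | nil => rfl
  | cons p x ih => obtain ⟨k, a⟩ := p; simp [wordCommon, wordLength, ih]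

theorem wordCommon_le_left (x y : List RealLetter) (j : ℕ) :
    wordCommon x y j ≤ wordLength x j := by
  induction x generalizing y with
  | nil => simp [wordCommon, wordLength]
  | cons p x ih =>
    obtain ⟨k, a⟩ := p
    have h0 := wordLength_nonneg x j
    have h1 := abs_nonneg a.toAdd
    rcases y with _ | ⟨⟨l, b⟩, y⟩
    · rw [wordCommon_nil_right]; exact wordLength_nonneg _ _
    · have h2 := overlap_le_left a.toAdd b.toAdd
      have h3 := ih y
      simp only [wordCommon, wordLength]
      split_ifs <;> linarith

theorem wordCommon_ultra (x y z : List RealLetter) :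
    wordCommon x y ≤ wordCommon x z ∨ wordCommon y z ≤ wordCommon x z := by
  induction x generalizing y z with
  | nil => left; intro j; simp [wordCommon]
  | cons p x ih =>
    obtain ⟨k, a⟩ := p
    rcases y with _ | ⟨⟨l, b⟩, y⟩
    · left; intro j; rw [wordCommon_nil_right]; exact wordCommon_nonneg _ _ _
    rcases z with _ | ⟨⟨m, c⟩, z⟩
    · right; intro j; rw [wordCommon_nil_right]; exact wordCommon_nonneg _ _ _
    by_cases hkl : k = l
    swap
    · left; intro j
      have := wordCommon_nonneg (⟨k, a⟩ :: x) (⟨m, c⟩ :: z) j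
      simpa [wordCommon, hkl] using this
    by_cases hlm : l = m
    swap
    · right; intro j
      have := wordCommon_nonneg (⟨k, a⟩ :: x) (⟨m, c⟩ :: z) j
      simpa [wordCommon, hlm] using this
    subst hkl hlm
    by_cases hab : a = b
    · subst hab
      by_cases hac : a = c
      · subst hac
        rcases ih y z with h | h
        · left; intro j; simpa [wordCommon] using h j
        · right; intro j; simpa [wordCommon] using h j
      · right; intro j; simp [wordCommon, hac]
    · by_cases hbc : b = c
      · subst hbc
        left; intro j; simp [wordCommon, hab]
      · by_cases hac : a = c
        · subst hac
          left; intro j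
          have := overlap_le_left a.toAdd b.toAdd
          have h0 := wordCommon_nonneg x z j
          simp only [wordCommon, hab]
          simp only [↓reduceIte]
          split_ifs <;> linarith
        · rcases overlap_ultra a.toAdd b.toAdd c.toAdd with h | h
          · left; intro j; simp only [wordCommon, hab, hac]; simp only [↓reduceIte]
            split_ifs <;> linarith
          · right; intro j; simp only [wordCommon, hbc, hac]; simp only [↓reduceIte]
            split_ifs <;> linarith

theorem wordCommon_append (L x y : List RealLetter) (j : ℕ) :
    wordCommon (L ++ x) (L ++ y) j = wordLength L j + wordCommon x y j := by
  induction L with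
  | nil => simp [wordLength]
  | cons p L ih => obtain ⟨k, a⟩ := p; simp [wordCommon, wordLength, ih]; ring

theorem wordDist_append (L x y : List RealLetter) (j : ℕ) :
    wordDist (L ++ x) (L ++ y) j = wordDist x y j := by
  simp only [wordDist, wordCommon_append, wordLength_append]; ring

theorem wordDist_nonneg (x y : List RealLetter) (j : ℕ) : 0 ≤ wordDist x y j := by
  have h1 := wordCommon_le_left x y j
  have h2 := wordCommon_le_left y x j
  rw [wordCommon_comm] at h2
  unfold wordDist; linarith

theorem abs_wordSum_sub_le (x y : List RealLetter) (j : ℕ) :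
    |wordSum x j - wordSum y j| ≤ wordDist x y j := by
  have base : ∀ x y, wordCommon x y j = 0 → |wordSum x j - wordSum y j| ≤ wordDist x y j := by
    intro x y h
    have h1 := abs_wordSum_le x j
    have h2 := abs_wordSum_le y j
    have h3 := abs_sub (wordSum x j) (wordSum y j)
    unfold wordDist; linarith
  induction x generalizing y with
  | nil => exact base _ _ rfl
  | cons p x ih =>
    obtain ⟨k, a⟩ := p
    rcases y with _ | ⟨⟨l, b⟩, y⟩
    · exact base _ _ rfl
    by_cases hkl : k = l
    swap
    · exact base _ _ (by simp [wordCommon, hkl])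
    subst hkl
    by_cases hab : a = b
    · subst hab
      have e : wordSum (⟨k, a⟩ :: x) j - wordSum (⟨k, a⟩ :: y) j = wordSum x j - wordSum y j := by
        simp only [wordSum]; ring
      have := wordDist_append [⟨k, a⟩] x y j
      simp only [List.singleton_append] at this
      rw [e, this]
      exact ih y
    · by_cases hkj : k = j
      swap
      · exact base _ _ (by simp [wordCommon, hab, hkj])
      have h1 := abs_wordSum_le x j
      have h2 := abs_wordSum_le y j
      have h3 := abs_sub (wordSum x j) (wordSum y j)
      have h4 := abs_add_le (a.toAdd - b.toAdd) (wordSum x j - wordSum y j)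
      simp only [wordDist, wordCommon, wordSum, wordLength, hkj, hab, overlap]
      simp only [↓reduceIte]
      rw [show a.toAdd + wordSum x j - (b.toAdd + wordSum y j) =
        a.toAdd - b.toAdd + (wordSum x j - wordSum y j) by ring]
      linarith

theorem wordDist_le_option (k : ℕ) (a b : Multiplicative ℝ) (j : ℕ) :
    wordDist (if a = 1 then [] else [⟨k, a⟩]) (if b = 1 then [] else [⟨k, b⟩]) j
      ≤ if k = j then |a.toAdd - b.toAdd| else 0 := by
  by_cases ha : a = 1 <;> by_cases hb : b = 1 <;> by_cases hab : a = b <;>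
    by_cases hkj : k = j <;>
    simp [ha, hb, hab, hkj, wordDist, wordCommon, wordLength, overlap] <;> grind

end RealWords

section RealProdTree

open Topology Set Monoid


open Classical in
/-- The reduced word of an element of the free product, read from right to left. -/
def revWord (x : RealProd) : List RealLetter := (CoprodI.Word.equiv x).toList.reverse

/-- The `j`-part of the tree distance between two elements of the free product of lines. -/
def treeDist (x y : RealProd) (j : ℕ) : ℝ := wordDist (revWord x) (revWord y) j

theorem revWord_one : revWord 1 = [] := by
  unfold revWord CoprodI.Word.equiv
  simp [CoprodI.Word.empty]

theorem treeDist_one_left (x : RealProd) (j : ℕ) : treeDist 1 x j = wordLength (revWord x) j := by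
  simp [treeDist, revWord_one, wordDist, wordCommon, wordLength]

theorem treeDist_self (x : RealProd) (j : ℕ) : treeDist x x j = 0 := by
  simp only [treeDist, wordDist, wordCommon_self]; ring

theorem treeDist_comm (x y : RealProd) (j : ℕ) : treeDist x y j = treeDist y x j := by
  simp only [treeDist, wordDist, wordCommon_comm (revWord x)]; ring

theorem treeDist_nonneg (x y : RealProd) (j : ℕ) : 0 ≤ treeDist x y j := wordDist_nonneg _ _ _

theorem treeDist_triangle (x y z : RealProd) (j : ℕ) :
    treeDist x z j ≤ treeDist x y j + treeDist y z j := by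
  simp only [treeDist, wordDist]
  have h1 := wordCommon_le_left (revWord y) (revWord x) j
  have h2 := wordCommon_le_left (revWord y) (revWord z) j
  rw [wordCommon_comm] at h1
  rcases wordCommon_ultra (revWord x) (revWord y) (revWord z) with h | h <;>
  · have := h j
    linarith

theorem treeDist_ultra (x y z : RealProd) (s : Finset ℕ) (w : ℕ → ℝ) (hw : ∀ k, 0 ≤ w k) :
    min (∑ k ∈ s, w k * (treeDist 1 x k + treeDist 1 y k - treeDist x y k))
      (∑ k ∈ s, w k * (treeDist 1 y k + treeDist 1 z k - treeDist y z k)) ≤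
      ∑ k ∈ s, w k * (treeDist 1 x k + treeDist 1 z k - treeDist x z k) := by
  have e : ∀ x y k, treeDist 1 x k + treeDist 1 y k - treeDist x y k
      = 2 * wordCommon (revWord x) (revWord y) k := fun x y k => by
    rw [treeDist_one_left, treeDist_one_left, treeDist, wordDist]; ring
  simp only [e]
  rcases wordCommon_ultra (revWord x) (revWord y) (revWord z) with h | h
  · refine (min_le_left _ _).trans (Finset.sum_le_sum fun k _ => ?_)
    have := h k; have := hw k; gcongr
  · refine (min_le_right _ _).trans (Finset.sum_le_sum fun k _ => ?_)
    have := h k; have := hw k; gcongr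

theorem treeDist_of_mul_le (k : ℕ) (a b : Multiplicative ℝ) (x : RealProd) (j : ℕ) :
    treeDist (CoprodI.of (i := k) a * x) (CoprodI.of (i := k) b * x) j
      ≤ if k = j then |a.toAdd - b.toAdd| else 0 := by
  classical
  set p := CoprodI.Word.equivPair k (CoprodI.Word.equiv x) with hp
  have key : ∀ a : Multiplicative ℝ, revWord (CoprodI.of (i := k) a * x) =
      p.tail.toList.reverse ++ (if a * p.head = 1 then [] else [⟨k, a * p.head⟩]) := by
    intro a
    have : CoprodI.Word.equiv (CoprodI.of (i := k) a * x)
          = CoprodI.of (M := fun _ : ℕ => Multiplicative ℝ) (i := k) a • (CoprodI.Word.equiv x) :=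
      mul_smul (CoprodI.of (M := fun _ : ℕ => Multiplicative ℝ) (i := k) a) x
        (CoprodI.Word.empty (M := fun _ : ℕ => Multiplicative ℝ))
    have e : revWord (CoprodI.of (i := k) a * x)
      = (CoprodI.Word.equiv (CoprodI.of (i := k) a * x)).toList.reverse := by
      unfold revWord; congr!
    rw [e, this, CoprodI.Word.of_smul_def, ← hp]
    unfold CoprodI.Word.rcons
    by_cases h : a * p.head = 1
    · simp [h]
    · simp [h, CoprodI.Word.cons]
  rw [treeDist, key, key, wordDist_append]
  refine (wordDist_le_option _ _ _ _).trans (le_of_eq ?_)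
  simp

/-- The total exponent of the letter `j`. -/
def exponentSum (j : ℕ) : RealProd →* Multiplicative ℝ :=
  CoprodI.lift fun k => if k = j then MonoidHom.id _ else 1

theorem exponentSum_of (j k : ℕ) (a : Multiplicative ℝ) :
    (exponentSum j (CoprodI.of (i := k) a)).toAdd = if k = j then a.toAdd else 0 := by
  rw [exponentSum, CoprodI.lift_of]
  split_ifs <;> simp

theorem exponentSum_eq (j : ℕ) (x : RealProd) :
    (exponentSum j x).toAdd = wordSum (revWord x) j := by
  classical
  have hx : x = ((CoprodI.Word.equiv x).toList.map fun l =>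
      CoprodI.of (M := fun _ : ℕ => Multiplicative ℝ) (i := l.fst) l.snd).prod :=
    (CoprodI.Word.equiv.symm_apply_apply x).symm
  have e : revWord x = (CoprodI.Word.equiv x).toList.reverse := by unfold revWord; congr!
  rw [e, wordSum_reverse]
  conv_lhs => rw [hx]
  generalize (CoprodI.Word.equiv x).toList = L
  induction L with
  | nil => simp [wordSum]
  | cons p L ih =>
    obtain ⟨k, a⟩ := p
    simp only [List.map_cons, List.prod_cons, map_mul, toAdd_mul, ih, wordSum,
      exponentSum_of]

theorem abs_exponentSum_sub_le (x y : RealProd) (j : ℕ) :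
    |(exponentSum j x).toAdd - (exponentSum j y).toAdd| ≤ treeDist x y j := by
  rw [exponentSum_eq, exponentSum_eq]
  exact abs_wordSum_sub_le _ _ _

end RealProdTree

section Bouquet

open Topology Set Monoid


theorem eventually_arg_eq_add {w₀ : ℂ} (h : w₀ ∈ Complex.slitPlane) :
    ∀ᶠ w in 𝓝 w₀, w.arg = w₀.arg + (w / w₀).arg := by
  have h0 : w₀ ≠ 0 := Complex.slitPlane_ne_zero h
  have hc : ContinuousAt (fun w : ℂ => w₀.arg + (w / w₀).arg) w₀ := by
    refine continuousAt_const.add (ContinuousAt.comp (g := Complex.arg) ?_ (by fun_prop))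
    rw [div_self h0]
    exact Complex.continuousAt_arg Complex.one_mem_slitPlane
  have hmem : w₀.arg + (w₀ / w₀).arg ∈ Ioo (-Real.pi) Real.pi := by
    rw [div_self h0, Complex.arg_one, add_zero]
    exact ⟨Complex.neg_pi_lt_arg _,
      lt_of_le_of_ne (Complex.arg_le_pi _) (Complex.mem_slitPlane_iff_arg.1 h).1⟩
  filter_upwards [hc.eventually (Ioo_mem_nhds hmem.1 hmem.2),
    eventually_ne_nhds h0] with w hw hw0
  rw [← Complex.arg_mul h0 (div_ne_zero hw0 h0) ⟨hw.1, hw.2.le⟩, mul_div_cancel₀ _ h0]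

/-- Coordinates on a space which looks like a bouquet of circles with base point `x₀`. -/
structure BouquetCoord {X : Type*} [TopologicalSpace X] (x₀ : X) (z : ℕ → X → ℂ) : Prop where
  continuous : ∀ k, Continuous (z k)
  norm : ∀ k p, ‖z k p‖ = 1
  base : ∀ k, z k x₀ = 1
  wedge : ∀ k l p, z k p ≠ 1 → z l p ≠ 1 → k = l
  sep : ∀ p q, (∀ k, z k p = z k q) → p = q

variable {X : Type*} {x₀ : X} {z : ℕ → X → ℂ}

/-- The angle from `p` to `q` in the `l`-th coordinate. -/
def angle (z : ℕ → X → ℂ) (l : ℕ) (p q : X) : Multiplicative ℝ :=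
  Multiplicative.ofAdd (z l q / z l p).arg

/-- The local cocycle recording the angles of the first `n` coordinates. -/
def angleCocycle (z : ℕ → X → ℂ) (n : ℕ) (p q : X) : RealProd :=
  ((List.range n).map fun l => (CoprodI.of (i := l) (angle z l p q) : RealProd)).prod

/-- The domain on which `angleCocycle z n p` is multiplicative. -/
def angleDomain (z : ℕ → X → ℂ) (n : ℕ) (p : X) : Set X :=
  {q | (∀ l < n, z l q / z l p ∈ Complex.slitPlane) ∧ ∀ l, z l p ≠ 1 → z l q ≠ 1}

theorem prod_map_range_eq {M : Type*} [Monoid M] (f : ℕ → M) (j : ℕ) (h : ∀ l, l ≠ j → f l = 1)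
    (n : ℕ) : ((List.range n).map f).prod = if j < n then f j else 1 := by
  induction n with
  | zero => simp
  | succ n ih =>
    rw [List.range_succ, List.map_append, List.prod_append, ih]
    by_cases hn : n = j
    · subst hn; simp
    · have : f n = 1 := h n hn
      simp only [List.map_cons, List.map_nil, List.prod_cons, this, List.prod_nil, mul_one]
      congr 1
      simp only [eq_iff_iff]
      omega

theorem angle_eq_one {l : ℕ} {p q : X} (hp : z l p = 1) (hq : z l q = 1) : angle z l p q = 1 := by
  simp [angle, hp, hq]

theorem angleCocycle_eq {p q : X} (j : ℕ) (h : ∀ l, l ≠ j → z l p = 1 ∧ z l q = 1) (n : ℕ) :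
    angleCocycle z n p q = if j < n then CoprodI.of (i := j) (angle z j p q) else 1 :=
  prod_map_range_eq _ j (fun l hl => by
    simp only [angle_eq_one (h l hl).1 (h l hl).2, map_one]) n

/-- Killing the letters `≥ n`. -/
def truncation (n : ℕ) : RealProd →* RealProd :=
  CoprodI.lift fun k => if k < n then (CoprodI.of (M := fun _ : ℕ => Multiplicative ℝ) (i := k)) else 1

theorem truncation_angleCocycle {n m : ℕ} (hnm : n ≤ m) (p q : X) :
    truncation n (angleCocycle z m p q) = angleCocycle z n p q := by
  induction m, hnm using Nat.le_induction with
  | base =>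
    simp only [angleCocycle, map_list_prod, List.map_map]
    congr 1
    refine List.map_congr_left fun l hl => ?_
    rw [List.mem_range] at hl
    simp only [Function.comp, truncation, CoprodI.lift_of, if_pos hl]
  | succ m hm ih =>
    rw [← ih]
    simp only [angleCocycle, List.range_succ, List.map_append, List.prod_append, map_mul]
    simp [truncation, not_lt.2 hm]

theorem exponentSum_angleCocycle {k n : ℕ} (hk : k < n) (p q : X) :
    exponentSum k (angleCocycle z n p q) = angle z k p q := by
  rw [angleCocycle, map_list_prod, List.map_map, prod_map_range_eq _ k, if_pos hk]
  · simp [exponentSum]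
  · intro l hl
    simp [exponentSum, hl]

variable [TopologicalSpace X]

theorem BouquetCoord.ne_zero (h : BouquetCoord x₀ z) (k : ℕ) (p : X) : z k p ≠ 0 := by
  rw [← norm_ne_zero_iff, h.norm]; exact one_ne_zero

theorem BouquetCoord.exists_index (h : BouquetCoord x₀ z) (p : X) :
    ∃ j, ∀ l, l ≠ j → z l p = 1 := by
  by_cases hp : ∃ j, z j p ≠ 1
  · obtain ⟨j, hj⟩ := hp
    exact ⟨j, fun l hl => by_contra fun hl' => hl (h.wedge _ _ _ hl' hj)⟩
  · push Not at hp
    exact ⟨0, fun l _ => hp l⟩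

theorem BouquetCoord.eventually_index (h : BouquetCoord x₀ z) (q₀ : X) :
    ∀ᶠ q in 𝓝 q₀, ∃ j, ∀ l, l ≠ j → z l q₀ = 1 ∧ z l q = 1 := by
  by_cases hq : ∃ j, z j q₀ ≠ 1
  · obtain ⟨j, hj⟩ := hq
    filter_upwards [(h.continuous j).continuousAt.eventually_ne hj] with q hq'
    exact ⟨j, fun l hl => ⟨by_contra fun hl' => hl (h.wedge _ _ _ hl' hj),
      by_contra fun hl' => hl (h.wedge _ _ _ hl' hq')⟩⟩
  · push Not at hq
    filter_upwards with q
    obtain ⟨j, hj⟩ := h.exists_index q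
    exact ⟨j, fun l hl => ⟨hq l, hj l hl⟩⟩

theorem BouquetCoord.eventually_angle_mul (h : BouquetCoord x₀ z) {p q₀ : X} (l : ℕ)
    (hs : z l q₀ / z l p ∈ Complex.slitPlane) :
    ∀ᶠ q in 𝓝 q₀, angle z l p q = angle z l q₀ q * angle z l p q₀ := by
  have hc : ContinuousAt (fun q => z l q / z l p) q₀ :=
    (h.continuous l).continuousAt.div_const _
  filter_upwards [hc.eventually (eventually_arg_eq_add hs)] with q hq
  unfold angle
  rw [hq, ← ofAdd_add, add_comm, div_div_div_cancel_right₀ (h.ne_zero l p)]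

theorem BouquetCoord.isLocalCocycle (h : BouquetCoord x₀ z) (n : ℕ) :
    IsLocalCocycle (angleCocycle z n) (angleDomain z n) where
  isOpen p := by
    have e : angleDomain z n p = (⋂ l ∈ Finset.range n, {q | z l q / z l p ∈ Complex.slitPlane}) ∩
        {q | ∀ l, z l p ≠ 1 → z l q ≠ 1} := by
      ext q; simp [angleDomain]
    rw [e]
    refine IsOpen.inter (isOpen_biInter_finset fun l _ => ?_) ?_
    · exact Complex.isOpen_slitPlane.preimage ((h.continuous l).div_const _)
    · obtain ⟨j, hj⟩ := h.exists_index p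
      have : {q | ∀ l, z l p ≠ 1 → z l q ≠ 1} = {q | z j p ≠ 1 → z j q ≠ 1} := by
        ext q
        refine ⟨fun H => H j, fun H l hl => ?_⟩
        have : l = j := by_contra fun hlj => hl (hj l hlj)
        subst this
        exact H hl
      rw [this]
      by_cases hp : z j p = 1
      · simp [hp]
      · simpa [hp] using isOpen_ne_fun (h.continuous j) continuous_const
  mem p := ⟨fun l _ => by rw [div_self (h.ne_zero l p)]; exact Complex.one_mem_slitPlane,
    fun l => id⟩
  self p := by
    obtain ⟨j, hj⟩ := h.exists_index p
    rw [angleCocycle_eq j (fun l hl => ⟨hj l hl, hj l hl⟩)]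
    simp [angle, div_self (h.ne_zero j p)]
  mul p q₀ hq₀ := by
    have hall : ∀ᶠ q in 𝓝 q₀, ∀ l < n, angle z l p q = angle z l q₀ q * angle z l p q₀ := by
      have := (Finset.range n).eventually_all (l := 𝓝 q₀)
        (p := fun l q => angle z l p q = angle z l q₀ q * angle z l p q₀)
      simp only [Finset.mem_range] at this
      exact this.2 fun l hl => h.eventually_angle_mul l (hq₀.1 l hl)
    have hidx : ∀ᶠ q in 𝓝 q₀, ∃ j, ∀ l, l ≠ j → z l p = 1 ∧ z l q₀ = 1 ∧ z l q = 1 := by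
      by_cases hp : ∃ j, z j p ≠ 1
      · obtain ⟨j, hj⟩ := hp
        have hj' := hq₀.2 j hj
        filter_upwards [(h.continuous j).continuousAt.eventually_ne hj'] with q hq'
        exact ⟨j, fun l hl => ⟨by_contra fun hl' => hl (h.wedge _ _ _ hl' hj),
          by_contra fun hl' => hl (h.wedge _ _ _ hl' hj'),
          by_contra fun hl' => hl (h.wedge _ _ _ hl' hq')⟩⟩
      · push Not at hp
        filter_upwards [h.eventually_index q₀] with q hq
        obtain ⟨j, hj⟩ := hq
        exact ⟨j, fun l hl => ⟨hp l, hj l hl⟩⟩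
    filter_upwards [hall, hidx] with q hq ⟨j, hj⟩
    rw [angleCocycle_eq j (fun l hl => ⟨(hj l hl).1, (hj l hl).2.2⟩),
      angleCocycle_eq j (fun l hl => ⟨(hj l hl).2.1, (hj l hl).2.2⟩),
      angleCocycle_eq j (fun l hl => ⟨(hj l hl).1, (hj l hl).2.1⟩)]
    split_ifs with hjn
    · rw [← map_mul, hq j hjn]
    · simp

/-- The exponents that are integer multiples of `2π`. -/
def turns : Multiplicative ℤ →* Multiplicative ℝ :=
  AddMonoidHom.toMultiplicative (zmultiplesHom ℝ (2 * Real.pi))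

/-- The words all of whose exponents are integer multiples of `2π`. -/
def turnWords : CoprodI (fun _ : ℕ => Multiplicative ℤ) →* RealProd :=
  CoprodI.lift fun k => (CoprodI.of (M := fun _ : ℕ => Multiplicative ℝ) (i := k)).comp turns

theorem BouquetCoord.angle_mul_mem (h : BouquetCoord x₀ z) (l : ℕ) (q₀ q : X) :
    (angle z l x₀ q)⁻¹ * angle z l q₀ q * angle z l x₀ q₀ ∈ turns.range := by
  have h0 := h.ne_zero l q₀
  have h1 := h.ne_zero l q
  have : (z l q).arg - ((z l q / z l q₀).arg + (z l q₀).arg) ∈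
      range fun m : ℤ => (m : ℝ) * (2 * Real.pi) := by
    have e : ((z l q).arg : Real.Angle) = (((z l q / z l q₀).arg + (z l q₀).arg : ℝ) : Real.Angle) := by
      rw [Real.Angle.coe_add, ← Complex.arg_mul_coe_angle (div_ne_zero h1 h0) h0,
        div_mul_cancel₀ _ h0]
    obtain ⟨m, hm⟩ := Real.Angle.angle_eq_iff_two_pi_dvd_sub.1 e
    exact ⟨m, by simp only [hm]; ring⟩
  obtain ⟨m, hm⟩ := this
  refine ⟨Multiplicative.ofAdd (-m), ?_⟩
  apply Multiplicative.toAdd.injective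
  simp only [turns, angle, h.base, div_one, toAdd_mul, toAdd_inv, toAdd_ofAdd,
    AddMonoidHom.toMultiplicative_apply_apply, zmultiplesHom_apply, neg_smul, zsmul_eq_mul]
  simp only at hm
  rw [hm]
  ring

theorem BouquetCoord.mem_range_turnWords (h : BouquetCoord x₀ z) {Z : Type*} [TopologicalSpace Z]
    [PreconnectedSpace Z] {n : ℕ} {γ : Z → X} (hγ : Continuous γ) {δ : Z → RealProd}
    (hδ : IsDev (angleCocycle z n) γ δ) {s t : Z} (hs : γ s = x₀) (ht : γ t = x₀) (h1 : δ s = 1) :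
    δ t ∈ turnWords.range := by
  have self : angleCocycle z n x₀ x₀ = 1 := (h.isLocalCocycle n).self x₀
  have key : ((angleCocycle z n x₀ (γ t))⁻¹ * δ t ∈ turnWords.range) =
      ((angleCocycle z n x₀ (γ s))⁻¹ * δ s ∈ turnWords.range) := by
    refine eq_of_eventually_eq (f := fun s => (angleCocycle z n x₀ (γ s))⁻¹ * δ s ∈ turnWords.range)
      (fun s₀ => ?_) t s
    filter_upwards [hδ s₀, hγ.continuousAt.eventually (h.eventually_index (γ s₀))] with u hu ⟨j, hj⟩
    have e : (angleCocycle z n x₀ (γ u))⁻¹ * δ u =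
        ((angleCocycle z n x₀ (γ u))⁻¹ * angleCocycle z n (γ s₀) (γ u) *
          angleCocycle z n x₀ (γ s₀)) * ((angleCocycle z n x₀ (γ s₀))⁻¹ * δ s₀) := by
      rw [hu]; group
    rw [e, Subgroup.mul_mem_cancel_left, eq_iff_iff]
    rw [angleCocycle_eq j (fun l hl => ⟨h.base l, (hj l hl).2⟩), angleCocycle_eq j hj,
      angleCocycle_eq j (fun l hl => ⟨h.base l, (hj l hl).1⟩)]
    split_ifs
    · obtain ⟨m, hm⟩ := h.angle_mul_mem j (γ s₀) (γ u)
      refine ⟨CoprodI.of (i := j) m, ?_⟩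
      rw [← map_inv, ← map_mul, ← map_mul, ← hm]
      simp [turnWords]
    · simp
  rw [hs, ht, self, h1] at key
  simpa using key

end Bouquet

section Estimates

open Topology Set Monoid


variable {X : Type*} [TopologicalSpace X] {x₀ : X} {z : ℕ → X → ℂ}
variable {Z : Type*} [TopologicalSpace Z]

theorem BouquetCoord.exp_exponentSum (h : BouquetCoord x₀ z) [PreconnectedSpace Z] {n k : ℕ}
    (hk : k < n) {γ : Z → X} {δ : Z → RealProd} (hδ : IsDev (angleCocycle z n) γ δ) (s t : Z) :
    Complex.exp ((exponentSum k (δ t)).toAdd * Complex.I) / z k (γ t) =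
      Complex.exp ((exponentSum k (δ s)).toAdd * Complex.I) / z k (γ s) := by
  refine eq_of_eventually_eq (f := fun t => Complex.exp ((exponentSum k (δ t)).toAdd * Complex.I) /
    z k (γ t)) (fun s₀ => ?_) t s
  filter_upwards [hδ s₀] with u hu
  rw [hu, map_mul, exponentSum_angleCocycle hk, toAdd_mul, angle, toAdd_ofAdd]
  push_cast
  have e := Complex.norm_mul_exp_arg_mul_I (z k (γ u) / z k (γ s₀))
  rw [norm_div, h.norm, h.norm, div_one, Complex.ofReal_one, one_mul] at e
  rw [add_mul, Complex.exp_add, e]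
  have := h.ne_zero k (γ u)
  have := h.ne_zero k (γ s₀)
  field_simp

theorem BouquetCoord.norm_sub_le (h : BouquetCoord x₀ z) [PreconnectedSpace Z] {n k : ℕ}
    (hk : k < n) {γ : Z → X} {δ : Z → RealProd} (hδ : IsDev (angleCocycle z n) γ δ) (s t : Z) :
    ‖z k (γ s) - z k (γ t)‖ ≤ treeDist (δ s) (δ t) k := by
  refine le_trans ?_ (abs_exponentSum_sub_le (δ s) (δ t) k)
  set a := (exponentSum k (δ s)).toAdd
  set b := (exponentSum k (δ t)).toAdd
  have e := h.exp_exponentSum hk hδ s t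
  have hs := h.ne_zero k (γ s)
  have ht := h.ne_zero k (γ t)
  have key : z k (γ s) - z k (γ t) =
      z k (γ t) * (Complex.exp (Complex.I * ((a - b : ℝ) : ℂ)) - 1) := by
    have : Complex.exp (Complex.I * ((a - b : ℝ) : ℂ)) =
        Complex.exp (a * Complex.I) / Complex.exp (b * Complex.I) := by
      rw [← Complex.exp_sub]; push_cast; ring_nf
    rw [this]
    have hb := Complex.exp_ne_zero (b * Complex.I)
    rw [div_eq_div_iff ht hs] at e
    change Complex.exp (b * Complex.I) * z k (γ s) = Complex.exp (a * Complex.I) * z k (γ t) at e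
    field_simp
    rw [mul_sub, mul_comm (z k (γ t)) (Complex.exp (a * _)), ← e]
    ring_nf
  rw [key, norm_mul, h.norm, one_mul]
  exact Real.norm_exp_I_mul_ofReal_sub_one_le

/-- Distances of developments change little, uniformly in the number of coordinates used. -/
theorem BouquetCoord.exists_nhds_treeDist_le (h : BouquetCoord x₀ z) [LocallyConnectedSpace Z]
    {γ : Z → X} (hγ : Continuous γ) (k : ℕ) (s₀ : Z) {ε : ℝ} (hε : 0 < ε) :
    ∀ᶠ s in 𝓝 s₀, ∀ n > k, ∀ δ : Z → RealProd, IsDev (angleCocycle z n) γ δ →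
      treeDist (δ s₀) (δ s) k ≤ ε := by
  set p := γ s₀ with hp
  have hpp : z k p / z k p = 1 := div_self (h.ne_zero k p)
  have hc : Continuous fun s => z k (γ s) / z k p := ((h.continuous k).comp hγ).div_const _
  have h1 : ∀ᶠ s in 𝓝 s₀, z k (γ s) / z k p ∈ Complex.slitPlane :=
    hc.continuousAt.eventually_mem (Complex.isOpen_slitPlane.mem_nhds
      (by rw [← hp, hpp]; exact Complex.one_mem_slitPlane))
  have h2 : ∀ᶠ s in 𝓝 s₀, |(z k (γ s) / z k p).arg| ≤ ε := by
    have : ContinuousAt (fun s => |(z k (γ s) / z k p).arg|) s₀ := by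
      refine (ContinuousAt.comp (g := Complex.arg) ?_ hc.continuousAt).abs
      rw [← hp, hpp]
      exact Complex.continuousAt_arg Complex.one_mem_slitPlane
    refine this.eventually (Iic_mem_nhds ?_)
    simpa only [← hp, hpp, Complex.arg_one, abs_zero] using hε
  have h3 : ∀ᶠ s in 𝓝 s₀, z k p ≠ 1 → z k (γ s) ≠ 1 := by
    by_cases hp1 : z k p = 1
    · simp [hp1]
    · filter_upwards [((h.continuous k).comp hγ).continuousAt.eventually_ne hp1] with s hs _
      exact hs
  obtain ⟨V, hV, hVo, hs₀, hVc⟩ :=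
    locallyConnectedSpace_iff_subsets_isOpen_isConnected.1 ‹_› s₀ _ (h1.and (h2.and h3))
  filter_upwards [hVo.mem_nhds hs₀] with s hs n hn δ hδ
  let g : Z → RealProd := fun s => CoprodI.of (i := k) (angle z k p (γ s))⁻¹ * δ s
  have hloc : ∀ s₁ ∈ V, ∀ᶠ s in 𝓝 s₁, treeDist (g s₁) (g s) k = 0 := by
    intro s₁ hs₁
    filter_upwards [hδ s₁, hγ.continuousAt.eventually (h.eventually_index (γ s₁)),
      hγ.continuousAt.eventually (h.eventually_angle_mul k (hV hs₁).1)] with u hu ⟨j, hj⟩ ha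
    rw [angleCocycle_eq j hj] at hu
    by_cases hjk : k = j
    · subst hjk
      have : g u = g s₁ := by
        simp only [g, hu, if_pos hn, ha]
        rw [← mul_assoc, ← map_mul]
        congr 2
        rw [mul_inv]
        exact inv_mul_cancel_comm _ _
      rw [this, treeDist_self]
    · obtain ⟨e1, e2⟩ := hj k hjk
      have e0 : z k p = 1 := by_contra fun hne => (hV hs₁).2.2 hne e1
      have g1 : g s₁ = δ s₁ := by simp [g, angle_eq_one e0 e1]
      have g2 : g u = δ u := by simp [g, angle_eq_one e0 e2]
      rw [g1, g2, hu]
      refine le_antisymm ?_ (treeDist_nonneg _ _ _)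
      split_ifs
      · have := treeDist_of_mul_le j 1 (angle z j (γ s₁) (γ u)) (δ s₁) k
        rw [if_neg (Ne.symm hjk), map_one, one_mul] at this
        exact this
      · rw [one_mul, treeDist_self]
  have : PreconnectedSpace V := Subtype.preconnectedSpace hVc.isPreconnected
  have hconst : treeDist (g s₀) (g s) k = treeDist (g s₀) (g s₀) k := by
    refine eq_of_eventually_eq (f := fun s : V => treeDist (g s₀) (g s) k) (fun s₁ => ?_)
      ⟨s, hs⟩ ⟨s₀, hs₀⟩
    filter_upwards [continuous_subtype_val.continuousAt.eventually (hloc s₁ s₁.2)] with u hu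
    have t1 := treeDist_triangle (g s₀) (g s₁) (g u) k
    have t2 := treeDist_triangle (g s₀) (g u) (g s₁) k
    rw [treeDist_comm (g u), hu] at t2
    rw [hu] at t1
    exact le_antisymm (by linarith) (by linarith)
  rw [treeDist_self] at hconst
  have g0 : g s₀ = δ s₀ := by
    have : angle z k p p = 1 := by simp [angle, hpp]
    simp only [g, ← hp, this, inv_one, map_one, one_mul]
  have t := treeDist_triangle (δ s₀) (g s) (δ s) k
  rw [← g0, hconst, g0] at t
  have := treeDist_of_mul_le k (angle z k p (γ s))⁻¹ 1 (δ s) k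
  rw [if_pos rfl, map_one, one_mul] at this
  have b := (hV hs).2.1
  simp only [toAdd_inv, angle, toAdd_ofAdd, toAdd_one, sub_zero, abs_neg] at this
  exact t.trans (by simpa [g, angle] using this.trans b)

theorem BouquetCoord.exists_treeDist_bound (h : BouquetCoord x₀ z) [LocallyConnectedSpace Z]
    [PreconnectedSpace Z] {γ : Z → X} (hγ : Continuous γ) (k : ℕ) {K : Set Z} (hK : IsCompact K) :
    ∃ B, ∀ n > k, ∀ δ : Z → RealProd, IsDev (angleCocycle z n) γ δ →
      ∀ s ∈ K, ∀ t ∈ K, treeDist (δ s) (δ t) k ≤ B := by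
  rcases isEmpty_or_nonempty Z with hZ | ⟨⟨o⟩⟩
  · exact ⟨0, fun _ _ _ _ s => hZ.elim s⟩
  let P : Z → Prop := fun s => ∃ B, ∀ n > k, ∀ δ : Z → RealProd, IsDev (angleCocycle z n) γ δ →
    treeDist (δ o) (δ s) k ≤ B
  have hP : ∀ s, P s := by
    intro s
    have : P s = P o := eq_of_eventually_eq (fun s₀ => by
      filter_upwards [h.exists_nhds_treeDist_le hγ k s₀ one_pos] with s hs
      rw [eq_iff_iff]
      constructor
      · rintro ⟨B, hB⟩
        refine ⟨B + 1, fun n hn δ hδ => ?_⟩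
        have := treeDist_triangle (δ o) (δ s) (δ s₀) k
        rw [treeDist_comm (δ s)] at this
        linarith [hB n hn δ hδ, hs n hn δ hδ]
      · rintro ⟨B, hB⟩
        refine ⟨B + 1, fun n hn δ hδ => ?_⟩
        have := treeDist_triangle (δ o) (δ s₀) (δ s) k
        linarith [hB n hn δ hδ, hs n hn δ hδ]) s o
    rw [this]
    exact ⟨0, fun n _ δ _ => (treeDist_self _ _).le⟩
  have hb : ∃ B, ∀ s ∈ K, ∀ n > k, ∀ δ : Z → RealProd, IsDev (angleCocycle z n) γ δ →
      treeDist (δ o) (δ s) k ≤ B := by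
    refine hK.induction_on (p := fun K => ∃ B, ∀ s ∈ K, ∀ n > k, ∀ δ : Z → RealProd,
      IsDev (angleCocycle z n) γ δ → treeDist (δ o) (δ s) k ≤ B) ⟨0, fun _ hs => hs.elim⟩ ?_ ?_ ?_
    · rintro s t hst ⟨B, hB⟩
      exact ⟨B, fun u hu => hB u (hst hu)⟩
    · rintro s t ⟨B, hB⟩ ⟨B', hB'⟩
      refine ⟨max B B', fun u hu n hn δ hδ => ?_⟩
      rcases hu with hu | hu
      · exact (hB u hu n hn δ hδ).trans (le_max_left _ _)
      · exact (hB' u hu n hn δ hδ).trans (le_max_right _ _)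
    · intro s _
      obtain ⟨B, hB⟩ := hP s
      refine ⟨_, mem_nhdsWithin_of_mem_nhds (h.exists_nhds_treeDist_le hγ k s one_pos),
        B + 1, fun u hu n hn δ hδ => ?_⟩
      have := treeDist_triangle (δ o) (δ s) (δ u) k
      linarith [hB n hn δ hδ, hu n hn δ hδ]
  obtain ⟨B, hB⟩ := hb
  refine ⟨B + B, fun n hn δ hδ s hs t ht => ?_⟩
  have := treeDist_triangle (δ s) (δ o) (δ t) k
  rw [treeDist_comm (δ s) (δ o)] at this
  linarith [hB s hs n hn δ hδ, hB t ht n hn δ hδ]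

end Estimates

section LimitMetric

open Topology Set Monoid Filter
open scoped unitInterval


/-- A continuous pseudometric on the interval which is a subspace metric of a tree, where the
Gromov products are taken at `0`. -/
structure IsTreePseudometric (d : I → I → ℝ) : Prop where
  self : ∀ s, d s s = 0
  comm : ∀ s t, d s t = d t s
  nonneg : ∀ s t, 0 ≤ d s t
  triangle : ∀ s t u, d s u ≤ d s t + d t u
  ultra : ∀ s t u, min (d 0 s + d 0 t - d s t) (d 0 t + d 0 u - d t u) ≤ d 0 s + d 0 u - d s u
  eventually_le : ∀ s, ∀ ε > 0, ∀ᶠ t in 𝓝 s, d s t ≤ ε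

variable {X : Type*} [TopologicalSpace X] {x₀ : X} {z : ℕ → X → ℂ}

theorem sum_half_pow_le (K m : ℕ) : ∑ k ∈ Finset.Ico K m, (1 / 2 : ℝ) ^ k ≤ 2 * (1 / 2) ^ K := by
  rcases le_or_gt K m with h | h
  · rw [geom_sum_Ico (by norm_num) h]
    have : (0 : ℝ) ≤ (1 / 2) ^ m := by positivity
    rw [div_le_iff_of_neg (by norm_num)]
    linarith
  · rw [Finset.Ico_eq_empty (by omega)]
    simp

theorem BouquetCoord.exists_treePseudometric (h : BouquetCoord x₀ z) {γ : ℝ → X}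
    (hγ : Continuous γ) {δ : ℕ → ℝ → RealProd} (hδ : ∀ n, IsDev (angleCocycle z n) γ (δ n))
    (h0 : ∀ n, δ n 0 = 1) (h1 : ∀ n, δ n 1 = 1) :
    ∃ d : I → I → ℝ, IsTreePseudometric d ∧ d 0 1 = 0 ∧ ∀ s t : I, d s t = 0 → γ s = γ t := by
  have hB : ∀ k, ∃ B : ℝ, 0 ≤ B ∧ ∀ n > k, ∀ s t : I, treeDist (δ n s) (δ n t) k ≤ B := by
    intro k
    obtain ⟨B, hB⟩ := h.exists_treeDist_bound hγ k (isCompact_Icc (a := (0 : ℝ)) (b := 1))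
    exact ⟨max B 0, le_max_right _ _, fun n hn s t =>
      (hB n hn _ (hδ n) s s.2 t t.2).trans (le_max_left _ _)⟩
  choose B hB0 hB using hB
  let w : ℕ → ℝ := fun k => (1 / 2) ^ k / (B k + 1)
  have hw : ∀ k, 0 < w k := fun k => by have := hB0 k; positivity
  have hwB : ∀ k, ∀ n > k, ∀ s t : I, w k * treeDist (δ n s) (δ n t) k ≤ (1 / 2) ^ k := by
    intro k n hn s t
    have h1 := hB k n hn s t
    have h2 := hB0 k
    simp only [w]
    rw [div_mul_eq_mul_div, div_le_iff₀ (by linarith)]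
    have : (0 : ℝ) < (1 / 2) ^ k := by positivity
    gcongr
    linarith
  let D : ℕ → I → I → ℝ := fun n s t =>
    ∑ k ∈ Finset.range n, w k * treeDist (δ n s) (δ n t) k
  have hD0 : ∀ n s t, 0 ≤ D n s t := fun n s t =>
    Finset.sum_nonneg fun k _ => mul_nonneg (hw k).le (treeDist_nonneg _ _ _)
  have hD2 : ∀ n s t, D n s t ≤ 2 := fun n s t => by
    have : D n s t ≤ ∑ k ∈ Finset.range n, (1 / 2 : ℝ) ^ k :=
      Finset.sum_le_sum fun k hk => hwB k n (Finset.mem_range.1 hk) s t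
    rw [Finset.range_eq_Ico] at this
    have := this.trans (sum_half_pow_le 0 n)
    simpa using this
  have hlim : ∀ s t, ∃ r, Tendsto (fun n => D n s t) (hyperfilter ℕ) (𝓝 r) := by
    intro s t
    obtain ⟨r, -, hr⟩ := (isCompact_Icc (a := (0 : ℝ)) (b := 2)).ultrafilter_le_nhds
      ((hyperfilter ℕ).map fun n => D n s t)
      (by
        rw [le_principal_iff]
        exact Filter.mem_map.2 (Filter.univ_mem' fun n : ℕ =>
          (⟨hD0 n s t, hD2 n s t⟩ : D n s t ∈ Icc (0 : ℝ) 2)))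
    exact ⟨r, hr⟩
  choose d hd using hlim
  have htop : ∀ {p : ℕ → Prop}, (∀ᶠ n in atTop, p n) → ∀ᶠ n in (hyperfilter ℕ : Filter ℕ), p n :=
    fun hp => Nat.hyperfilter_le_atTop hp
  refine ⟨d, ⟨?_, ?_, ?_, ?_, ?_, ?_⟩, ?_, ?_⟩
  · intro s
    refine tendsto_nhds_unique (hd s s) ?_
    simp [D, treeDist_self]
  · intro s t
    refine tendsto_nhds_unique (hd s t) ?_
    simp only [D, treeDist_comm (δ _ s)]
    exact hd t s
  · exact fun s t => ge_of_tendsto' (hd s t) fun n => hD0 n s t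
  · intro s t u
    refine le_of_tendsto_of_tendsto' (hd s u) ((hd s t).add (hd t u)) fun n => ?_
    simp only [D, ← Finset.sum_add_distrib, ← mul_add]
    exact Finset.sum_le_sum fun k _ =>
      mul_le_mul_of_nonneg_left (treeDist_triangle _ _ _ _) (hw k).le
  · intro s t u
    refine le_of_tendsto_of_tendsto' ((((hd 0 s).add (hd 0 t)).sub (hd s t)).min
      (((hd 0 t).add (hd 0 u)).sub (hd t u))) (((hd 0 s).add (hd 0 u)).sub (hd s u)) fun n => ?_
    simp only [D, ← Finset.sum_add_distrib, ← Finset.sum_sub_distrib, ← mul_add, ← mul_sub,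
      Set.Icc.coe_zero, h0]
    exact treeDist_ultra _ _ _ _ _ fun k => (hw k).le
  · intro s ε hε
    obtain ⟨K, hK⟩ : ∃ K : ℕ, 2 * (1 / 2 : ℝ) ^ K < ε / 2 := by
      obtain ⟨K, hK⟩ := exists_pow_lt_of_lt_one (show 0 < ε / 4 by linarith)
        (show (1 / 2 : ℝ) < 1 by norm_num)
      exact ⟨K, by linarith⟩
    have hall : ∀ᶠ t : I in 𝓝 s, ∀ k < K, ∀ n > k,
        treeDist (δ n s) (δ n t) k ≤ ε / (2 * (K + 1) * w k) := by
      have := (Finset.range K).eventually_all (l := 𝓝 s)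
        (p := fun k t => ∀ n > k, treeDist (δ n s) (δ n t) k ≤ ε / (2 * (K + 1) * w k))
      simp only [Finset.mem_range] at this
      refine this.2 fun k _ => ?_
      have hpos : 0 < ε / (2 * (K + 1) * w k) := by have := hw k; positivity
      filter_upwards [continuous_subtype_val.continuousAt.eventually
        (h.exists_nhds_treeDist_le hγ k (s : ℝ) hpos)] with t ht n hn
      exact ht n hn _ (hδ n)
    filter_upwards [hall] with t ht
    refine le_of_tendsto (hd s t) (htop ?_)
    filter_upwards [eventually_ge_atTop K] with n hn
    have e : D n s t = ∑ k ∈ Finset.range K, w k * treeDist (δ n s) (δ n t) k +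
        ∑ k ∈ Finset.Ico K n, w k * treeDist (δ n s) (δ n t) k :=
      (Finset.sum_range_add_sum_Ico _ hn).symm
    have b1 : ∑ k ∈ Finset.range K, w k * treeDist (δ n s) (δ n t) k ≤
        ∑ k ∈ Finset.range K, ε / (2 * (K + 1)) := by
      refine Finset.sum_le_sum fun k hk => ?_
      rw [Finset.mem_range] at hk
      refine (mul_le_mul_of_nonneg_left (ht k hk n (hk.trans_le hn)) (hw k).le).trans (le_of_eq ?_)
      have := hw k
      field_simp
    have b2 : ∑ k ∈ Finset.Ico K n, w k * treeDist (δ n s) (δ n t) k ≤ 2 * (1 / 2) ^ K :=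
      (Finset.sum_le_sum fun k hk => hwB k n (Finset.mem_Ico.1 hk).2 s t).trans
        (sum_half_pow_le K n)
    have b3 : ∑ k ∈ Finset.range K, ε / (2 * ((K : ℝ) + 1)) ≤ ε / 2 := by
      rw [Finset.sum_const, Finset.card_range, nsmul_eq_mul, mul_div_assoc',
        div_le_div_iff₀ (by positivity) (by norm_num)]
      nlinarith
    linarith
  · refine tendsto_nhds_unique (hd 0 1) ?_
    simp [D, h0, h1, treeDist_self]
  · intro s t hst
    refine h.sep _ _ fun k => ?_
    have : w k * ‖z k (γ s) - z k (γ t)‖ ≤ d s t := by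
      refine ge_of_tendsto (hd s t) (htop ?_)
      filter_upwards [eventually_gt_atTop k] with n hn
      refine le_trans (mul_le_mul_of_nonneg_left (h.norm_sub_le hn (hδ n) s t) (hw k).le) ?_
      exact Finset.single_le_sum (f := fun k => w k * treeDist (δ n s) (δ n t) k)
        (fun k _ => mul_nonneg (hw k).le (treeDist_nonneg _ _ _)) (Finset.mem_range.2 hn)
    rw [hst] at this
    have h2 := nonpos_of_mul_nonpos_right this (hw k)
    exact sub_eq_zero.1 (norm_le_zero_iff.1 h2)

end LimitMetric

section Contraction

open Topology Set Filter
open scoped unitInterval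


variable {d : I → I → ℝ}

theorem IsTreePseudometric.abs_sub_le (hd : IsTreePseudometric d) (s t u : I) :
    |d u s - d u t| ≤ d s t := by
  have h1 := hd.triangle u s t
  have h2 := hd.triangle u t s
  rw [hd.comm t s] at h2
  rw [abs_sub_le_iff]
  constructor <;> linarith

theorem IsTreePseudometric.continuous (hd : IsTreePseudometric d) (u : I) : Continuous (d u) := by
  rw [continuous_iff_continuousAt]
  intro s
  rw [ContinuousAt, Metric.tendsto_nhds]
  intro ε hε
  filter_upwards [hd.eventually_le s (ε / 2) (half_pos hε)] with t ht
  rw [Real.dist_eq, abs_sub_comm]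
  linarith [hd.abs_sub_le s t u]

/-- The point at height `ρ` on the geodesic from the root to `s`. -/
theorem IsTreePseudometric.exists_point (hd : IsTreePseudometric d) {s : I} {ρ : ℝ} (h0 : 0 ≤ ρ)
    (hρ : ρ ≤ d 0 s) : ∃ y, d 0 y = ρ ∧ d y s = d 0 s - ρ := by
  by_contra! hne
  have hgt : ∀ y, 2 * ρ ≤ d 0 y + d 0 s - d y s → ρ < d 0 y := by
    intro y hy
    by_contra! hle
    have := hd.triangle 0 y s
    exact hne y (by linarith) (by linarith)
  have hcl : IsClopen {y | 2 * ρ ≤ d 0 y + d 0 s - d y s} := by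
    constructor
    · have := hd.continuous 0
      have := hd.continuous s
      simp only [hd.comm _ s]
      exact isClosed_le (by fun_prop) (by fun_prop)
    · rw [isOpen_iff_mem_nhds]
      intro y hy
      have hlt := hgt y hy
      filter_upwards [hd.eventually_le y (d 0 y - ρ) (by linarith)] with y' hy'
      have h1 := hd.ultra y' y s
      have h2 := (abs_sub_le_iff.1 (hd.abs_sub_le y y' 0)).1
      refine le_trans (le_min ?_ hy) h1
      rw [hd.comm y' y]
      linarith
  have huniv := hcl.eq_univ ⟨s, by simp only [mem_ofPred_eq, hd.self]; linarith⟩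
  have h0 : (0 : I) ∈ {y | 2 * ρ ≤ d 0 y + d 0 s - d y s} := huniv ▸ mem_univ _
  have := hgt 0 h0
  rw [hd.self] at this
  linarith

theorem IsTreePseudometric.dist_point_le (hd : IsTreePseudometric d) {s s' y y' : I} {ρ ρ' : ℝ}
    (hρ : ρ ≤ d 0 s) (hρ' : ρ' ≤ d 0 s') (hy : d 0 y = ρ) (hy' : d 0 y' = ρ')
    (hys : d y s = d 0 s - ρ) (hys' : d y' s' = d 0 s' - ρ') :
    d y y' ≤ |ρ - ρ'| + d s s' := by
  have h1 := hd.ultra y s s'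
  have h2 := hd.ultra y s' y'
  rw [hd.comm s' y'] at h2
  have h3 := abs_sub_le_iff.1 (hd.abs_sub_le s s' 0)
  have h4 := neg_abs_le (ρ - ρ')
  have h5 := le_abs_self (ρ - ρ')
  rcases min_le_iff.1 h1 with h1 | h1 <;> rcases min_le_iff.1 h2 with h2 | h2 <;>
    linarith [hd.nonneg s s']

theorem IsTreePseudometric.homotopic_refl {X : Type*} [TopologicalSpace X] {x₀ : X}
    (hd : IsTreePseudometric d) (γ : Path x₀ x₀) (h1 : d 0 1 = 0)
    (hsep : ∀ s t, d s t = 0 → γ s = γ t) : γ.Homotopic (Path.refl x₀) := by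
  obtain ⟨m, -, hm⟩ := isCompact_univ.exists_isMaxOn univ_nonempty (hd.continuous 0).continuousOn
  set M := d 0 m
  have hM : ∀ s, d 0 s ≤ M := fun s => hm (mem_univ s)
  have hM0 : 0 ≤ M := hd.nonneg _ _
  let ρ : I × I → ℝ := fun p => min ((1 - p.1) * M) (d 0 p.2)
  have hρ0 : ∀ p, 0 ≤ ρ p := fun p =>
    le_min (mul_nonneg (by linarith [p.1.2.2]) hM0) (hd.nonneg _ _)
  have hρ : ∀ p, ρ p ≤ d 0 p.2 := fun p => min_le_right _ _
  have hρc : Continuous ρ := by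
    have := hd.continuous 0
    fun_prop
  choose y hy hys using fun p : I × I => hd.exists_point (hρ0 p) (hρ p)
  have hroot : ∀ s, d 0 s = 0 → γ s = x₀ := fun s hs => by rw [← hsep 0 s hs, γ.source]
  have hcont : Continuous fun p => γ (y p) := by
    rw [continuous_iff_continuousAt]
    intro p
    rw [ContinuousAt, tendsto_nhds]
    intro O hO hpO
    obtain ⟨ε, hε, hεO⟩ : ∃ ε > 0, ∀ t, d (y p) t < ε → γ t ∈ O := by
      have hcomp : IsCompact (γ ⁻¹' Oᶜ) := (hO.isClosed_compl.preimage γ.continuous).isCompact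
      rcases (γ ⁻¹' Oᶜ).eq_empty_or_nonempty with hem | hne
      · refine ⟨1, one_pos, fun t _ => ?_⟩
        by_contra ht
        have : t ∈ γ ⁻¹' Oᶜ := ht
        rw [hem] at this
        exact this
      · obtain ⟨t₀, ht₀, hmin⟩ := hcomp.exists_isMinOn hne (hd.continuous (y p)).continuousOn
        refine ⟨d (y p) t₀, lt_of_le_of_ne (hd.nonneg _ _) fun h => ?_, fun t ht => ?_⟩
        · apply ht₀
          rw [← hsep _ _ h.symm]
          exact hpO
        · by_contra hc
          exact absurd (hmin hc) (not_le.2 ht)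
    have h2 : ∀ᶠ q in 𝓝 p, |ρ p - ρ q| < ε / 2 := by
      have : ContinuousAt (fun q => |ρ p - ρ q|) p := by fun_prop
      exact this.eventually_lt_const (by simpa using half_pos hε)
    have h3 : ∀ᶠ q : I × I in 𝓝 p, d p.2 q.2 ≤ ε / 2 :=
      continuous_snd.continuousAt.eventually (hd.eventually_le p.2 (ε / 2) (half_pos hε))
    filter_upwards [h2, h3] with q hq2 hq3
    refine hεO _ ?_
    have := hd.dist_point_le (hρ p) (hρ q) (hy p) (hy q) (hys p) (hys q)
    linarith
  have hend : ∀ τ s : I, d 0 s = 0 → γ (y (τ, s)) = x₀ := by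
    intro τ s hs
    refine hroot _ (le_antisymm ?_ (hd.nonneg _ _))
    rw [hy, ← hs]
    exact hρ _
  refine ⟨⟨⟨⟨fun p => γ (y p), hcont⟩, fun s => ?_, fun s => ?_⟩, fun τ s hs => ?_⟩⟩
  · refine hsep _ _ ?_
    rw [hys]
    have : ρ (0, s) = d 0 s := min_eq_right (by simpa using hM s)
    rw [this, sub_self]
  · refine hroot _ ?_
    rw [hy]
    exact le_antisymm ((min_le_left _ _).trans (by simp)) (hρ0 _)
  · rcases hs with rfl | rfl
    · simpa using hend τ 0 (hd.self 0)
    · simpa using hend τ 1 h1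

end Contraction

section Holonomy

open Topology Set Filter Monoid
open scoped unitInterval


variable {X : Type*} [TopologicalSpace X] {x₀ : X} {z : ℕ → X → ℂ}

/-- The word in the first `n` coordinates described by a loop. -/
def BouquetCoord.word (h : BouquetCoord x₀ z) (n : ℕ) : FundamentalGroup X x₀ →* RealProd :=
  (h.isLocalCocycle n).holonomy x₀

theorem BouquetCoord.word_mem_range (h : BouquetCoord x₀ z) (n : ℕ) (g : FundamentalGroup X x₀) :
    h.word n g ∈ turnWords.range := by
  induction g using Quotient.inductionOn with | _ γ =>
  obtain ⟨δ, hδ, h0⟩ := (h.isLocalCocycle n).exists_isDev_path γ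
  have e : h.word n (FundamentalGroup.fromPath (Path.Homotopic.Quotient.mk γ)) = δ 1 :=
    (h.isLocalCocycle n).endpoint_eq γ hδ h0
  exact e ▸ h.mem_range_turnWords γ.continuous hδ γ.source γ.target h0

theorem BouquetCoord.truncation_word (h : BouquetCoord x₀ z) {n m : ℕ} (hnm : n ≤ m)
    (g : FundamentalGroup X x₀) : truncation n (h.word m g) = h.word n g := by
  induction g using Quotient.inductionOn with | _ γ =>
  obtain ⟨δ, hδ, h0⟩ := (h.isLocalCocycle m).exists_isDev_path γ
  have e : h.word m (FundamentalGroup.fromPath (Path.Homotopic.Quotient.mk γ)) = δ 1 :=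
    (h.isLocalCocycle m).endpoint_eq γ hδ h0
  have hδ' := hδ.map (truncation n)
  simp only [truncation_angleCocycle hnm] at hδ'
  have e' : h.word n (FundamentalGroup.fromPath (Path.Homotopic.Quotient.mk γ)) =
      truncation n (δ 1) := (h.isLocalCocycle n).endpoint_eq γ hδ' (by simp [h0])
  exact (congrArg (truncation n) e).trans e'.symm

theorem BouquetCoord.eq_one_of_word_eq_one (h : BouquetCoord x₀ z) {g : FundamentalGroup X x₀}
    (hg : ∀ n, h.word n g = 1) : g = 1 := by
  induction g using Quotient.inductionOn with | _ γ =>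
  choose δ hδ h0 using fun n => (h.isLocalCocycle n).exists_isDev γ.extend 0
  have h1 : ∀ n, δ n 1 = 1 := by
    intro n
    have hr := (hδ n).comp (u := fun t : I => (t : ℝ)) continuous_subtype_val
    have e : (⇑γ.extend ∘ fun t : I => (t : ℝ)) = γ := by funext t; simp
    rw [e] at hr
    have := (h.isLocalCocycle n).endpoint_eq γ hr (by simpa using h0 n)
    have e2 : δ n 1 = (h.isLocalCocycle n).endpoint γ := by rw [this]; simp
    rw [e2]
    exact hg n
  obtain ⟨d, hd, hd1, hsep⟩ := h.exists_treePseudometric γ.extend.continuous hδ h0 h1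
  have hom := hd.homotopic_refl γ hd1 fun s t hst => by simpa using hsep s t hst
  exact Quotient.sound hom

end Holonomy

section FreeAbelian

open Set Monoid


theorem turns_injective : Function.Injective turns := by
  intro m m' h
  have h' := congrArg Multiplicative.toAdd h
  simpa [turns, Real.pi_ne_zero] using h'

theorem turnWords_injective : Function.Injective turnWords := by
  classical
  rw [injective_iff_map_eq_one]
  intro x hx
  set w := CoprodI.Word.equiv x with hw
  have hxw : w.prod = x := CoprodI.Word.equiv.symm_apply_apply x
  let f : (Σ _ : ℕ, Multiplicative ℤ) → RealLetter := fun l => ⟨l.1, turns l.2⟩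
  let w' : CoprodI.Word fun _ : ℕ => Multiplicative ℝ :=
    { toList := w.toList.map f
      ne_one := by
        intro l hl
        obtain ⟨l', hl', rfl⟩ := List.mem_map.1 hl
        exact (map_ne_one_iff turns turns_injective).2 (w.ne_one l' hl')
      chain_ne := by
        rw [List.isChain_map]
        exact w.chain_ne }
  have hw' : w'.prod = turnWords w.prod := by
    simp only [CoprodI.Word.prod, w', map_list_prod, List.map_map]
    congr 1
  rw [hxw, hx, ← CoprodI.Word.prod_empty] at hw'
  have hemp : w' = CoprodI.Word.empty := CoprodI.Word.equiv.symm.injective hw'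
  have hl : w.toList.map f = [] := congrArg CoprodI.Word.toList hemp
  rw [List.map_eq_nil_iff] at hl
  rw [← hxw]
  simp [CoprodI.Word.prod, hl]

theorem nonempty_mulEquiv_int_of_isFreeGroup {A : Type*} [Group A] [IsFreeGroup A] [Nontrivial A]
    (comm : ∀ a b : A, a * b = b * a) : Nonempty (A ≃* Multiplicative ℤ) := by
  let e := IsFreeGroup.toFreeGroup A
  have comm' : ∀ a b : FreeGroup (IsFreeGroup.Generators A), a * b = b * a := fun a b => by
    apply e.symm.injective
    simp [comm]
  have : Subsingleton (IsFreeGroup.Generators A) := by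
    classical
    refine ⟨fun a b => by_contra fun hab => ?_⟩
    have := congrArg FreeGroup.toWord (comm' (FreeGroup.of a) (FreeGroup.of b))
    simp [FreeGroup.toWord_mul, FreeGroup.reduce, hab] at this
  have : Nonempty (IsFreeGroup.Generators A) := by
    by_contra hem
    rw [not_nonempty_iff] at hem
    exact not_subsingleton A (e.toEquiv.subsingleton)
  have : Unique (IsFreeGroup.Generators A) := Classical.choice (nonempty_unique _)
  exact ⟨e.trans FreeGroup.mulEquivIntOfUnique⟩

instance : IsFreeGroup (Multiplicative ℤ) :=
  .ofMulEquiv (FreeGroup.mulEquivIntOfUnique (α := Unit))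

/-- Nontrivial abelian subgroups of a group with enough maps to a free group are infinite cyclic. -/
theorem nonempty_mulEquiv_int {G F : Type*} [Group G] [Group F] [IsFreeGroup F] (φ : ℕ → G →* F)
    (hφ : ∀ n m, n ≤ m → ∀ g, φ m g = 1 → φ n g = 1) (hsep : ∀ g, (∀ n, φ n g = 1) → g = 1)
    {A : Subgroup G} (hA : A ≠ ⊥) (comm : ∀ a b : A, a * b = b * a) :
    Nonempty (A ≃* Multiplicative ℤ) := by
  have hcyc : ∀ n, ∀ g : A, φ n g ≠ 1 →
      Nonempty (((φ n).comp A.subtype).range ≃* Multiplicative ℤ) := by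
    intro n g hg
    have : Nontrivial ((φ n).comp A.subtype).range :=
      ⟨⟨_, g, rfl⟩, 1, fun h => hg (congrArg Subtype.val h)⟩
    refine nonempty_mulEquiv_int_of_isFreeGroup ?_
    rintro ⟨_, a, rfl⟩ ⟨_, b, rfl⟩
    ext
    simp only [Subgroup.coe_mul, ← map_mul, comm]
  obtain ⟨g, hg1⟩ := A.ne_bot_iff_exists_ne_one.1 hA
  obtain ⟨n, hn⟩ : ∃ n, φ n g ≠ 1 := by
    by_contra! h
    exact hg1 (Subtype.ext (hsep _ h))
  have hinj : Function.Injective ((φ n).comp A.subtype) := by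
    rw [injective_iff_map_eq_one]
    intro a ha
    by_contra hne
    obtain ⟨m', hm'⟩ : ∃ m, φ m a ≠ 1 := by
      by_contra! h'
      exact hne (Subtype.ext (hsep _ h'))
    set m := max n m'
    have ha' : φ m a ≠ 1 := fun h => hm' (hφ _ _ (le_max_right _ _) _ h)
    have hg' : φ m g ≠ 1 := fun h => hn (hφ _ _ (le_max_left _ _) _ h)
    obtain ⟨e⟩ := hcyc m g hg'
    obtain ⟨e'⟩ := hcyc n g hn
    have hne1 : ∀ {k} (e : ((φ k).comp A.subtype).range ≃* Multiplicative ℤ) (b : A), φ k b ≠ 1 →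
        (e ⟨_, b, rfl⟩).toAdd ≠ 0 := by
      intro k e b hb h0
      have : e ⟨_, b, rfl⟩ = 1 := h0
      rw [map_eq_one_iff e e.injective] at this
      exact hb (congrArg Subtype.val this)
    set p := (e ⟨_, g, rfl⟩).toAdd with hp
    set q := (e ⟨_, a, rfl⟩).toAdd with hq
    have hpow : φ m (g ^ q * (a : G) ^ (-p)) = 1 := by
      have : (⟨_, g, rfl⟩ : ((φ m).comp A.subtype).range) ^ q * ⟨_, a, rfl⟩ ^ (-p) = 1 := by
        apply e.injective
        apply Multiplicative.toAdd.injective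
        simp only [map_mul, map_zpow, toAdd_mul, toAdd_zpow, ← hp, ← hq, map_one, toAdd_one]
        simp [mul_comm]
      simpa using congrArg Subtype.val this
    have h1 := hφ n m (le_max_left _ _) _ hpow
    have ha1 : φ n a = 1 := ha
    rw [map_mul, map_zpow, map_zpow, ha1, one_zpow, mul_one] at h1
    have h2 : (⟨_, g, rfl⟩ : ((φ n).comp A.subtype).range) ^ q = 1 := Subtype.ext (by simpa using h1)
    have h3 := congrArg (fun x => (e' x).toAdd) h2
    simp only [map_zpow, toAdd_zpow, map_one, toAdd_one, smul_eq_mul, mul_eq_zero] at h3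
    exact h3.elim (hne1 e a ha') (hne1 e' g hn)
  obtain ⟨e⟩ := hcyc n g hn
  exact ⟨(MonoidHom.ofInjective hinj).trans e⟩

theorem BouquetCoord.nonempty_mulEquiv_int {X : Type*} [TopologicalSpace X] {x₀ : X}
    {z : ℕ → X → ℂ} (h : BouquetCoord x₀ z) {A : Subgroup (FundamentalGroup X x₀)} (hA : A ≠ ⊥)
    (comm : ∀ a b : A, a * b = b * a) : Nonempty (A ≃* Multiplicative ℤ) := by
  let e := MonoidHom.ofInjective turnWords_injective
  let φ : ℕ → FundamentalGroup X x₀ →* CoprodI fun _ : ℕ => Multiplicative ℤ := fun n =>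
    e.symm.toMonoidHom.comp ((h.word n).codRestrict _ (h.word_mem_range n))
  have hφ : ∀ n g, φ n g = 1 ↔ h.word n g = 1 := by
    intro n g
    refine (map_eq_one_iff e.symm e.symm.injective).trans ?_
    exact Subtype.ext_iff
  refine EarringPaper.nonempty_mulEquiv_int φ ?_ ?_ hA comm
  · intro n m hnm g hg
    rw [hφ] at hg ⊢
    rw [← h.truncation_word hnm, hg, map_one]
  · intro g hg
    exact h.eq_one_of_word_eq_one fun n => (hφ n g).1 (hg n)

theorem not_nonempty_rat_mulEquiv_int : ¬Nonempty (Multiplicative ℚ ≃* Multiplicative ℤ) := by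
  rintro ⟨e⟩
  have hsq : e (e.symm (Multiplicative.ofAdd 1)) = Multiplicative.ofAdd 1 := e.apply_symm_apply _
  set x := e.symm (Multiplicative.ofAdd 1)
  have hx : x = Multiplicative.ofAdd (x.toAdd / 2) * Multiplicative.ofAdd (x.toAdd / 2) := by
    rw [← ofAdd_add, add_halves, ofAdd_toAdd]
  rw [hx, map_mul] at hsq
  have := congrArg Multiplicative.toAdd hsq
  simp only [toAdd_mul, toAdd_ofAdd] at this
  omega

end FreeAbelian

section Earring

open Topology Set Filter


/-- The `k`-th circle of the earring. -/
def OnCircle (k : ℕ) (p : HEset) : Prop :=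
  ((k : ℝ) + 1) * ((p : ℝ × ℝ).1 ^ 2 + (p : ℝ × ℝ).2 ^ 2) + 2 * (p : ℝ × ℝ).1 = 0

open Classical in
/-- The projection of the earring onto its `k`-th circle, normalized to be the unit circle. -/
def earringCoord (k : ℕ) (p : HEset) : ℂ :=
  if OnCircle k p then
    ⟨1 + ((k : ℝ) + 1) * (p : ℝ × ℝ).1, ((k : ℝ) + 1) * (p : ℝ × ℝ).2⟩ else 1

theorem exists_onCircle (p : HEset) : ∃ k, OnCircle k p := by
  obtain ⟨⟨x, y⟩, n, hn⟩ := p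
  refine ⟨n.natPred, ?_⟩
  have e : ((n.natPred : ℝ) + 1) = n := by
    have := n.natPred_add_one
    exact_mod_cast this
  have hpos : (0 : ℝ) < n := by exact_mod_cast n.pos
  simp only [OnCircle, e]
  simp only at hn
  field_simp at hn
  have : (n : ℝ) * ((n : ℝ) * (x ^ 2 + y ^ 2) + 2 * x) = 0 := by linear_combination hn
  exact (mul_eq_zero.1 this).resolve_left hpos.ne'

theorem earringCoord_eq_one_iff {k : ℕ} {p : HEset} (h : OnCircle k p) :
    earringCoord k p = 1 ↔ (p : ℝ × ℝ) = 0 := by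
  have hk : (k : ℝ) + 1 ≠ 0 := by positivity
  simp [earringCoord, if_pos h, Complex.ext_iff, Prod.ext_iff, hk]

theorem sq_add_sq_pos_of_ne_zero {p : ℝ × ℝ} (h : p ≠ 0) : 0 < p.1 ^ 2 + p.2 ^ 2 := by
  by_contra! hle
  apply h
  ext <;> simp <;> nlinarith [sq_nonneg p.1, sq_nonneg p.2]

theorem continuous_earringCoord (k : ℕ) : Continuous (earringCoord k) := by
  classical
  have hf : Continuous fun p : HEset =>
      (⟨1 + ((k : ℝ) + 1) * (p : ℝ × ℝ).1, ((k : ℝ) + 1) * (p : ℝ × ℝ).2⟩ : ℂ) :=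
    Complex.equivRealProdCLM.symm.continuous.comp
      (f := fun p : HEset => (1 + ((k : ℝ) + 1) * (p : ℝ × ℝ).1, ((k : ℝ) + 1) * (p : ℝ × ℝ).2))
      (by fun_prop)
  rw [continuous_iff_continuousAt]
  intro p
  by_cases hp : OnCircle k p
  · by_cases hp0 : (p : ℝ × ℝ) = 0
    · have e : earringCoord k p = 1 := (earringCoord_eq_one_iff hp).2 hp0
      rw [ContinuousAt, e]
      refine Tendsto.if' ?_ tendsto_const_nhds
      have := hf.tendsto p
      simp only [hp0, Prod.fst_zero, Prod.snd_zero, mul_zero, add_zero] at this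
      exact this
    · have hev : ∀ᶠ q : HEset in 𝓝 p,
          |((k : ℝ) + 1) * ((q : ℝ × ℝ).1 ^ 2 + (q : ℝ × ℝ).2 ^ 2) + 2 * (q : ℝ × ℝ).1| <
            (q : ℝ × ℝ).1 ^ 2 + (q : ℝ × ℝ).2 ^ 2 := by
        refine (ContinuousAt.eventually_lt (f := fun q : HEset =>
          |((k : ℝ) + 1) * ((q : ℝ × ℝ).1 ^ 2 + (q : ℝ × ℝ).2 ^ 2) + 2 * (q : ℝ × ℝ).1|)
          (by fun_prop) (by fun_prop) ?_)
        have hp' := hp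
        unfold OnCircle at hp'
        simp only [hp', abs_zero]
        exact sq_add_sq_pos_of_ne_zero hp0
      refine hf.continuousAt.congr ?_
      filter_upwards [hev] with q hq
      have hqk : OnCircle k q := by
        obtain ⟨m, hm⟩ := exists_onCircle q
        have hm' := hm
        unfold OnCircle at hm'
        have e : ((k : ℝ) + 1) * ((q : ℝ × ℝ).1 ^ 2 + (q : ℝ × ℝ).2 ^ 2) + 2 * (q : ℝ × ℝ).1 =
            ((k : ℝ) - m) * ((q : ℝ × ℝ).1 ^ 2 + (q : ℝ × ℝ).2 ^ 2) := by
          linear_combination hm'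
        have hpos := (abs_nonneg _).trans_lt hq
        rw [e, abs_mul, abs_of_pos hpos] at hq
        have h1 : |((k : ℤ) - (m : ℤ) : ℝ)| < 1 := by
          by_contra! hle
          push_cast at hle
          nlinarith
        have h2 : |(k : ℤ) - m| < 1 := by exact_mod_cast h1
        have h3 := Int.abs_lt_one_iff.1 h2
        have : k = m := by omega
        exact this ▸ hm
      exact (if_pos hqk).symm
  · have hcl : IsClosed {q | OnCircle k q} :=
      isClosed_eq (by fun_prop) continuous_const
    refine (continuousAt_const (y := (1 : ℂ))).congr ?_
    filter_upwards [hcl.isOpen_compl.mem_nhds hp] with q hq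
    exact (if_neg hq).symm

theorem onCircle_of_ne_one {k : ℕ} {p : HEset} (h : earringCoord k p ≠ 1) : OnCircle k p :=
  by_contra fun hn => h (if_neg hn)

theorem bouquetCoord_earringCoord : BouquetCoord h0 earringCoord where
  continuous := continuous_earringCoord
  norm k p := by
    unfold earringCoord
    split_ifs with h
    · rw [Complex.norm_def, Real.sqrt_eq_one, Complex.normSq_mk]
      unfold OnCircle at h
      linear_combination ((k : ℝ) + 1) * h
    · exact norm_one
  base k := (earringCoord_eq_one_iff (by simp [OnCircle, h0])).2 rfl
  wedge k l p hk hl := by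
    have ck := onCircle_of_ne_one hk
    have cl := onCircle_of_ne_one hl
    have hpos := sq_add_sq_pos_of_ne_zero fun h => hk ((earringCoord_eq_one_iff ck).2 h)
    unfold OnCircle at ck cl
    have : ((k : ℝ) - l) * ((p : ℝ × ℝ).1 ^ 2 + (p : ℝ × ℝ).2 ^ 2) = 0 := by
      linear_combination ck - cl
    exact_mod_cast sub_eq_zero.1 ((mul_eq_zero.1 this).resolve_right hpos.ne')
  sep p q h := by
    have key : ∀ k, OnCircle k p → OnCircle k q → p = q := by
      intro k hp hq
      have hk : (k : ℝ) + 1 ≠ 0 := by positivity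
      have := h k
      rw [earringCoord, earringCoord, if_pos hp, if_pos hq] at this
      simp only [Complex.mk.injEq, add_right_inj, mul_eq_mul_left_iff, hk, or_false] at this
      exact Subtype.ext (Prod.ext this.1 this.2)
    obtain ⟨k, hk⟩ := exists_onCircle p
    obtain ⟨l, hl⟩ := exists_onCircle q
    by_cases hq : OnCircle k q
    · exact key k hk hq
    · have e : earringCoord k p = 1 := (h k).trans (if_neg hq)
      have hp0 := (earringCoord_eq_one_iff hk).1 e
      exact key l (by simp [OnCircle, hp0]) hl

end Earring

/-- Every nonzero abelian subgroup of the Hawaiian earring group `π₁(H)` is isomorphic to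
`ℤ`; consequently `π₁(H)` has no subgroup isomorphic to the additive group `ℚ`. -/
theorem hawaiian_group_abelian_subgroups :
    (∀ G : Subgroup (FundamentalGroup HEset h0), G ≠ ⊥ →
      (∀ a b : G, a * b = b * a) → Nonempty (G ≃* Multiplicative ℤ)) ∧
    (∀ G : Subgroup (FundamentalGroup HEset h0),
      ¬Nonempty (G ≃* Multiplicative ℚ)) := by
  have h := bouquetCoord_earringCoord
  refine ⟨fun G hG comm => h.nonempty_mulEquiv_int hG comm, ?_⟩
  rintro G ⟨e⟩
  have hG : G ≠ ⊥ := by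
    rintro rfl
    exact not_subsingleton (Multiplicative ℚ) e.symm.toEquiv.subsingleton
  obtain ⟨e'⟩ := h.nonempty_mulEquiv_int hG fun a b => by
    apply e.injective
    rw [map_mul, map_mul, mul_comm]
  exact not_nonempty_rat_mulEquiv_int ⟨e.symm.trans e'⟩

end EarringPaper
end
end
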